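/- arXiv:2605.25444 — 5 statements merged into one kernel-verified Lean document; each statement's English description precedes it below -/
import Mathlib

section
/- For every real ε with 0 < ε ≤ 1 there exist a real constant c with c ≥ ε⁴/640000 and a natural number n₀ such that for all n ≥ n₀ the following holds for every signing M of K_{n,n}: either (i) there exists a 1-factorization (π_t)_{t : Fin n} of K_{n,n} such that for every t, |∑ i, M i (π_t i)| ≥ c·n, or (ii) M is ε-close to a balanced one-sided signing. -/
open Finset

/-- `M` is a signing of `K_{n,n}`: every entry is `+1` or `-1`. -/
def IsSigning (n : ℕ) (M : Fin n → Fin n → ℤ) : Prop :=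
  ∀ i j, M i j = 1 ∨ M i j = -1

/-- A `±1`-vector `z` is balanced if its numbers of `+1` and `-1` entries
differ by at most `1`. -/
def IsBalanced (n : ℕ) (z : Fin n → ℤ) : Prop :=
  (∀ i, z i = 1 ∨ z i = -1) ∧
  |((univ.filter fun i => z i = 1).card : ℤ) -
    ((univ.filter fun i => z i = -1).card : ℤ)| ≤ 1

/-- A family `π_t` of permutations is a 1-factorization of `K_{n,n}`:
for every edge `(i,j)` there is exactly one `t` with `π_t i = j`. -/
def IsOneFactorization (n : ℕ) (π : Fin n → Equiv.Perm (Fin n)) : Prop :=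
  ∀ i j, ∃! t, π t i = j

/-!
If the entries of `M` have a large sum, then a random relabelling of the columns of the cyclic
Latin square gives, with positive probability, perfect matchings all of whose sums are large.

Otherwise call a four-cycle twisted if the alternating sum of `M` around it is nonzero. If few
four-cycles are twisted, some row and column meet few twisted four-cycles; comparing every entry
with that row and column shows that `M` is close to a signing with constant rows or constant
columns, which can be balanced because the entries of `M` have a small sum.

If many four-cycles are twisted, suppose first that `n` is even. Pair up the rows and the columns
so that many of the resulting `2 × 2` blocks are twisted, along every cyclic diagonal of blocks.
The two perfect matchings of a twisted block have different sums, so on every diagonal the blocks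
can be oriented such that the resulting perfect matching and the one with all blocks reversed both
have a large sum in absolute value. For odd `n`, one row and one column are left over. They are
inserted along a transversal, which becomes one of the perfect matchings; it consists of one cell
from each of the others, so it costs these only bounded amounts, and it too is arranged to have a
large sum.
-/

namespace BipartiteDiscrepancy

open Equiv (Perm)
open Filter (Tendsto atTop)

section RandomPermutations

variable {K : Type*} [Fintype K] [DecidableEq K]

/-- The rows in which the perfect matching `ρ` meets the set `B` of cells. -/
def hits (B : Finset (K × K)) (ρ : Perm K) : Finset K :=
  univ.filter fun a => (a, ρ a) ∈ B

lemma card_perm_eqOn (S : Finset K) (ρ₀ : Perm K) :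
    #{ρ : Perm K | ∀ a ∈ S, ρ a = ρ₀ a} = (Fintype.card K - #S).factorial := by
  have hcompl : Fintype.card {a // a ∉ S} = Fintype.card K - #S := by
    rw [Fintype.card_subtype_compl, Fintype.card_coe]
  rw [← hcompl, ← Fintype.card_perm,
    Fintype.card_congr (Equiv.Perm.subtypeEquivSubtypePerm fun a => a ∉ S), Fintype.card_subtype]
  refine card_equiv (Equiv.mulLeft ρ₀⁻¹) fun ρ => ?_
  simp [Equiv.symm_apply_eq]

lemma descFactorial_card_hits_le (B : Finset (K × K)) (ρ : Perm K) (k : ℕ) :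
    (#(hits B ρ)).descFactorial k ≤ #{f ∈ Fintype.piFinset fun _ : Fin k => B |
      (fun i => (f i).1).Injective ∧ ∀ i, ρ (f i).1 = (f i).2} := by
  rw [← Fintype.card_coe (hits B ρ), ← Fintype.card_fin k, ← Fintype.card_embedding_eq,
    Fintype.card_fin k, ← card_univ]
  refine card_le_card_of_injOn (fun e i => ((e i : K), ρ (e i))) (fun e _ => ?_) ?_
  · have hB : ∀ i, ((e i : K), ρ (e i)) ∈ B := fun i => (mem_filter.1 (e i).2).2
    exact mem_filter.2 ⟨Fintype.mem_piFinset.2 hB,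
      Subtype.val_injective.comp e.injective, fun _ => rfl⟩
  · intro e _ e' _ h
    ext i
    exact congrArg Prod.fst (congrFun h i)

lemma card_perm_matching_le {k : ℕ} (f : Fin k → K × K) :
    #{ρ : Perm K | (fun i => (f i).1).Injective ∧ ∀ i, ρ (f i).1 = (f i).2} ≤
      (Fintype.card K - k).factorial := by
  obtain hempty | ⟨ρ₀, hρ₀⟩ := eq_empty_or_nonempty
    {ρ : Perm K | (fun i => (f i).1).Injective ∧ ∀ i, ρ (f i).1 = (f i).2}
  · simp [hempty]
  obtain ⟨hinj, hρ₀⟩ := (mem_filter.1 hρ₀).2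
  have hcard : #(univ.image fun i => (f i).1) = k := by
    rw [card_image_of_injective _ hinj, card_univ, Fintype.card_fin]
  calc #{ρ : Perm K | (fun i => (f i).1).Injective ∧ ∀ i, ρ (f i).1 = (f i).2}
      ≤ #{ρ : Perm K | ∀ a ∈ univ.image fun i => (f i).1, ρ a = ρ₀ a} :=
        card_le_card fun ρ hρ => by simpa [hρ₀] using ((mem_filter.1 hρ).2).2
    _ = (Fintype.card K - k).factorial := by rw [card_perm_eqOn, hcard]

lemma sum_descFactorial_card_hits_le (B : Finset (K × K)) (k : ℕ) :
    ∑ ρ : Perm K, (#(hits B ρ)).descFactorial k ≤ (Fintype.card K - k).factorial * #B ^ k := by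
  calc ∑ ρ : Perm K, (#(hits B ρ)).descFactorial k
      ≤ ∑ ρ : Perm K, #{f ∈ Fintype.piFinset fun _ : Fin k => B |
          (fun i => (f i).1).Injective ∧ ∀ i, ρ (f i).1 = (f i).2} :=
        sum_le_sum fun ρ _ => descFactorial_card_hits_le B ρ k
    _ = ∑ f ∈ Fintype.piFinset fun _ : Fin k => B,
          #{ρ : Perm K | (fun i => (f i).1).Injective ∧ ∀ i, ρ (f i).1 = (f i).2} := by
        simp only [card_filter]
        exact sum_comm
    _ ≤ #(Fintype.piFinset fun _ : Fin k => B) • (Fintype.card K - k).factorial :=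
        sum_le_card_nsmul _ _ _ fun f _ => card_perm_matching_le f
    _ = (Fintype.card K - k).factorial * #B ^ k := by
        rw [Fintype.card_piFinset_const, smul_eq_mul, mul_comm]

lemma pow_le_descFactorial {x : ℝ} {k Y : ℕ} (hx : 0 ≤ x) (h : x + k ≤ Y + 1) :
    x ^ k ≤ Y.descFactorial k := by
  have hkY : k ≤ Y + 1 := by exact_mod_cast (le_add_of_nonneg_left hx).trans h
  calc x ^ k ≤ ((Y + 1 - k : ℕ) : ℝ) ^ k := by
        gcongr
        rw [Nat.cast_sub hkY]
        push_cast
        linarith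
    _ ≤ Y.descFactorial k := by exact_mod_cast Nat.pow_sub_le_descFactorial Y k

lemma card_perm_le_hits_mul_pow_le (B : Finset (K × K)) {u v : ℝ} {k : ℕ} (hu : 0 ≤ u)
    (hv : 0 ≤ v) (hvk : v + k ≤ Fintype.card K) :
    #{ρ : Perm K | u + k ≤ #(hits B ρ)} * (u * v) ^ k ≤
      (Fintype.card K).factorial * (#B : ℝ) ^ k := by
  have hk : k ≤ Fintype.card K := by exact_mod_cast (le_add_of_nonneg_left hv).trans hvk
  have hmoment : #{ρ : Perm K | u + k ≤ #(hits B ρ)} * u ^ k ≤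
      (Fintype.card K - k).factorial * (#B : ℝ) ^ k := by
    calc (#{ρ : Perm K | u + k ≤ #(hits B ρ)} : ℝ) * u ^ k
        = ∑ ρ : Perm K with u + k ≤ #(hits B ρ), u ^ k := by rw [sum_const, nsmul_eq_mul]
      _ ≤ ∑ ρ : Perm K with u + k ≤ #(hits B ρ), ((#(hits B ρ)).descFactorial k : ℝ) :=
          sum_le_sum fun ρ hρ =>
            pow_le_descFactorial hu ((mem_filter.1 hρ).2.trans (le_add_of_nonneg_right zero_le_one))
      _ ≤ ∑ ρ : Perm K, ((#(hits B ρ)).descFactorial k : ℝ) :=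
          sum_le_univ_sum_of_nonneg fun ρ => Nat.cast_nonneg _
      _ ≤ (Fintype.card K - k).factorial * (#B : ℝ) ^ k := by
          exact_mod_cast sum_descFactorial_card_hits_le B k
  have hfactorial : (Fintype.card K - k).factorial * v ^ k ≤ (Fintype.card K).factorial := by
    rw [← Nat.factorial_mul_descFactorial hk, Nat.cast_mul]
    gcongr
    exact pow_le_descFactorial hv (hvk.trans (le_add_of_nonneg_right zero_le_one))
  calc #{ρ : Perm K | u + k ≤ #(hits B ρ)} * (u * v) ^ k
      = #{ρ : Perm K | u + k ≤ #(hits B ρ)} * u ^ k * v ^ k := by rw [mul_pow, mul_assoc]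
    _ ≤ (Fintype.card K - k).factorial * (#B : ℝ) ^ k * v ^ k := by gcongr
    _ = (Fintype.card K - k).factorial * v ^ k * (#B : ℝ) ^ k := by ring
    _ ≤ (Fintype.card K).factorial * (#B : ℝ) ^ k := by gcongr

lemma card_perm_hits_gt_mul_pow_le (B : Finset (K × K)) {q η : ℝ} {k : ℕ} (hη : 0 < η)
    (hk : k ≤ η / 4 * Fintype.card K) (hB : #B ≤ q * Fintype.card K ^ 2) :
    #{ρ : Perm K | (q + η) * Fintype.card K < #(hits B ρ)} * (1 + η / 2) ^ k ≤
      (Fintype.card K).factorial := by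
  obtain hempty | ⟨ρ₀, hρ₀⟩ := eq_empty_or_nonempty
    {ρ : Perm K | (q + η) * Fintype.card K < #(hits B ρ)}
  · simp [hempty]
  set m : ℝ := (Fintype.card K : ℝ)
  have hlt : (q + η) * m < m := (mem_filter.1 hρ₀).2.trans_le (Nat.cast_le.2 (card_le_univ _))
  have hm : 0 < m := by
    refine (Nat.cast_nonneg _).lt_of_ne fun h : 0 = m => ?_
    simp [← h] at hlt
  have hq : 0 ≤ q := nonneg_of_mul_nonneg_left ((Nat.cast_nonneg _).trans hB) (pow_pos hm 2)
  have hqη : q + η < 1 := by nlinarith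
  set u := (q + 3 * η / 4) * m
  set v := (1 - η / 4) * m
  have hu : 0 < u := by positivity
  have hv : 0 < v := mul_pos (by linarith) hm
  have hvk : v + k ≤ m := by
    simp only [v]
    linarith
  have hBuv : #B * (1 + η / 2) ≤ u * v := by
    have hqη' : q * (1 + η / 2) ≤ (q + 3 * η / 4) * (1 - η / 4) := by nlinarith
    calc (#B : ℝ) * (1 + η / 2) ≤ q * m ^ 2 * (1 + η / 2) := by gcongr
      _ = q * (1 + η / 2) * m ^ 2 := by ring
      _ ≤ (q + 3 * η / 4) * (1 - η / 4) * m ^ 2 := by gcongr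
      _ = u * v := by ring
  have hmarkov := card_perm_le_hits_mul_pow_le B hu.le hv.le hvk
  have hsub : #{ρ : Perm K | (q + η) * m < #(hits B ρ)} ≤ #{ρ : Perm K | u + k ≤ #(hits B ρ)} :=
    card_le_card <| monotone_filter_right _ fun ρ _ hρ => by
      linarith [show u = (q + η) * m - η / 4 * m by ring]
  refine le_of_mul_le_mul_right ?_ (pow_pos (mul_pos hu hv) k)
  calc #{ρ : Perm K | (q + η) * m < #(hits B ρ)} * (1 + η / 2) ^ k * (u * v) ^ k
      ≤ #{ρ : Perm K | u + k ≤ #(hits B ρ)} * (1 + η / 2) ^ k * (u * v) ^ k := by gcongr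
    _ = #{ρ : Perm K | u + k ≤ #(hits B ρ)} * (u * v) ^ k * (1 + η / 2) ^ k := by ring
    _ ≤ (Fintype.card K).factorial * (#B : ℝ) ^ k * (1 + η / 2) ^ k := by gcongr
    _ = (Fintype.card K).factorial * (#B * (1 + η / 2)) ^ k := by rw [mul_pow, mul_assoc]
    _ ≤ (Fintype.card K).factorial * (u * v) ^ k := by gcongr

lemma exists_perm_forall_card_hits_le {ι : Type*} [Fintype ι] {q η : ℝ} (hη : 0 < η)
    (hι : Fintype.card ι < (1 + η / 2) ^ ⌊η / 4 * Fintype.card K⌋₊) (B : ι → Finset (K × K))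
    (hB : ∀ t, #(B t) ≤ q * Fintype.card K ^ 2) :
    ∃ ρ : Perm K, ∀ t, #(hits (B t) ρ) ≤ (q + η) * Fintype.card K := by
  by_contra! hbad
  set k := ⌊η / 4 * Fintype.card K⌋₊
  have hcover : (Fintype.card K).factorial ≤
      ∑ t, #{ρ : Perm K | (q + η) * Fintype.card K < #(hits (B t) ρ)} := by
    rw [← Fintype.card_perm, ← card_univ]
    refine (card_le_card fun ρ _ => ?_).trans card_biUnion_le
    simpa using hbad ρ
  have hunion : (Fintype.card K).factorial * (1 + η / 2) ^ k ≤
      Fintype.card ι * (Fintype.card K).factorial := by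
    calc (Fintype.card K).factorial * (1 + η / 2) ^ k
        ≤ (∑ t, #{ρ : Perm K | (q + η) * Fintype.card K < #(hits (B t) ρ)} : ℕ) *
            (1 + η / 2) ^ k := by gcongr
      _ = ∑ t, #{ρ : Perm K | (q + η) * Fintype.card K < #(hits (B t) ρ)} * (1 + η / 2) ^ k := by
          rw [Nat.cast_sum, sum_mul]
      _ ≤ ∑ _t : ι, ((Fintype.card K).factorial : ℝ) :=
          sum_le_sum fun t _ => card_perm_hits_gt_mul_pow_le (B t) hη
            (Nat.floor_le (by positivity)) (hB t)
      _ = Fintype.card ι * (Fintype.card K).factorial := by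
          rw [sum_const, nsmul_eq_mul, card_univ]
  rw [mul_comm] at hunion
  have hpos : (0 : ℝ) < (Fintype.card K).factorial := by positivity
  exact hι.not_ge (le_of_mul_le_mul_right hunion hpos)

lemma card_hits_compl (B : Finset (K × K)) (ρ : Perm K) :
    #(hits Bᶜ ρ) + #(hits B ρ) = Fintype.card K := by
  have h : hits Bᶜ ρ = (hits B ρ)ᶜ := by
    ext a
    simp [hits]
  rw [h, card_compl_add_card]

lemma exists_perm_forall_le_card_hits {ι : Type*} [Fintype ι] {p η : ℝ} (hη : 0 < η)
    (hι : Fintype.card ι < (1 + η / 2) ^ ⌊η / 4 * Fintype.card K⌋₊) (B : ι → Finset (K × K))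
    (hB : ∀ t, p * Fintype.card K ^ 2 ≤ #(B t)) :
    ∃ ρ : Perm K, ∀ t, (p - η) * Fintype.card K ≤ #(hits (B t) ρ) := by
  have hcompl (t : ι) : #(B t)ᶜ ≤ (1 - p) * (Fintype.card K : ℝ) ^ 2 := by
    have h : (#(B t)ᶜ + #(B t) : ℝ) = Fintype.card K ^ 2 := by
      rw [sq]
      exact_mod_cast (card_compl_add_card (B t)).trans (Fintype.card_prod K K)
    linarith [hB t]
  obtain ⟨ρ, hρ⟩ := exists_perm_forall_card_hits_le hη hι (fun t => (B t)ᶜ) hcompl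
  refine ⟨ρ, fun t => ?_⟩
  have h : (#(hits (B t)ᶜ ρ) + #(hits (B t) ρ) : ℝ) = Fintype.card K := by
    exact_mod_cast card_hits_compl (B t) ρ
  linarith [hρ t]

lemma eventually_succ_lt_pow_floor {η : ℝ} (hη : 0 < η) :
    ∀ᶠ m : ℕ in atTop, (m + 1 : ℝ) < (1 + η / 2) ^ ⌊η / 4 * m⌋₊ := by
  set C : ℝ := 4 / η + 1 with hC
  have hfloor : Tendsto (fun m : ℕ => ⌊η / 4 * (m : ℝ)⌋₊) atTop atTop :=
    tendsto_nat_floor_atTop.comp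
      (tendsto_natCast_atTop_atTop.const_mul_atTop (by positivity : 0 < η / 4))
  have hgrowth : ∀ᶠ k : ℕ in atTop, C * (k + 1) < (1 + η / 2) ^ k := by
    have hlim := tendsto_pow_const_div_const_pow_of_one_lt 1 (r := 1 + η / 2) (by linarith)
    filter_upwards [hlim.eventually (gt_mem_nhds (by positivity : 0 < 1 / (2 * C))),
      Filter.eventually_ge_atTop 1] with k hk hk1
    rw [div_lt_div_iff₀ (by positivity) (by positivity), pow_one, one_mul] at hk
    have hk1' : (1 : ℝ) ≤ k := by exact_mod_cast hk1
    calc C * (k + 1) ≤ C * (k + k) := by gcongr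
      _ = k * (2 * C) := by ring
      _ < (1 + η / 2) ^ k := hk
  filter_upwards [hfloor.eventually hgrowth] with m hm
  refine lt_of_le_of_lt ?_ hm
  calc (m + 1 : ℝ) = 4 / η * (η / 4 * m) + 1 := by field_simp
    _ ≤ 4 / η * (⌊η / 4 * (m : ℝ)⌋₊ + 1) + (⌊η / 4 * (m : ℝ)⌋₊ + 1) := by
        gcongr
        · exact (Nat.lt_floor_add_one _).le
        · exact le_add_of_nonneg_left (Nat.cast_nonneg _)
    _ = C * (⌊η / 4 * (m : ℝ)⌋₊ + 1) := by rw [hC]; ring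

end RandomPermutations

section Factorizations

variable {X Y : Type*}

/-- A signing with rows and columns indexed by arbitrary types. For `Fin n` this is `IsSigning`. -/
def IsSignMatrix (A : X → Y → ℤ) : Prop :=
  ∀ i j, A i j = 1 ∨ A i j = -1

/-- `M` has a 1-factorization, indexed by the rows, in which every perfect matching has sum at
least `h` in absolute value. By finiteness it suffices that distinct matchings are disjoint. -/
def HasFactorization [Fintype X] (M : X → X → ℤ) (h : ℝ) : Prop :=
  ∃ π : X → Perm X, (∀ i, (fun t => π t i).Injective) ∧
    ∀ t, h ≤ |((∑ i, M i (π t i) : ℤ) : ℝ)|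

namespace HasFactorization

variable [Fintype X] {M : X → X → ℤ} {h h' : ℝ}

lemma mono (hh : h' ≤ h) : HasFactorization M h → HasFactorization M h' :=
  fun ⟨π, hinj, hsum⟩ => ⟨π, hinj, fun t => hh.trans (hsum t)⟩

lemma of_neg : HasFactorization (fun i j => -M i j) h → HasFactorization M h :=
  fun ⟨π, hinj, hsum⟩ => ⟨π, hinj, fun t => by simpa using hsum t⟩

lemma of_relabel [Fintype Y] (e f : Y ≃ X) :
    HasFactorization (fun i j => M (e i) (f j)) h → HasFactorization M h := by
  rintro ⟨π, hinj, hsum⟩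
  refine ⟨fun t => e.symm.trans ((π (e.symm t)).trans f), fun i t t' htt => ?_, fun t => ?_⟩
  · exact e.symm.injective (hinj (e.symm i) (f.injective htt))
  · rw [← e.sum_comp]
    simpa using hsum (e.symm t)

lemma exists_isOneFactorization {n : ℕ} {M : Fin n → Fin n → ℤ} :
    HasFactorization M h → ∃ π : Fin n → Perm (Fin n), IsOneFactorization n π ∧
      ∀ t, |∑ i, (M i (π t i) : ℝ)| ≥ h := by
  rintro ⟨π, hinj, hsum⟩
  exact ⟨π, fun i => (Finite.injective_iff_bijective.1 (hinj i)).existsUnique,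
    fun t => by simpa using hsum t⟩

end HasFactorization

lemma sum_eq_two_mul_card_sub_card [Fintype X] {f : X → ℤ} (hf : ∀ x, f x = 1 ∨ f x = -1) :
    ∑ x, f x = 2 * #{x | f x = 1} - Fintype.card X := by
  have hind (x : X) : f x = 2 * (if f x = 1 then 1 else 0) - 1 := by
    obtain h | h := hf x <;> simp [h]
  rw [sum_congr rfl fun x _ => hind x, sum_sub_distrib, ← mul_sum, sum_boole, sum_const,
    card_univ, nsmul_one]

variable {K : Type*} [Fintype K] [AddGroup K] {M : K → K → ℤ}

lemma hasFactorization_of_le_sum (hM : IsSignMatrix M) {δ : ℝ} (hδ : 0 < δ)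
    (hK : Fintype.card K < (1 + δ / 4 / 2) ^ ⌊δ / 4 / 4 * Fintype.card K⌋₊)
    (hsum : δ * Fintype.card K ^ 2 ≤ ((∑ i, ∑ j, M i j : ℤ) : ℝ)) :
    HasFactorization M (δ / 2 * Fintype.card K) := by
  classical
  set B : K → Finset (K × K) := fun t => {p | M p.1 (p.2 + t) = 1} with hB
  have hdensity (t : K) : (1 + δ) / 2 * (Fintype.card K : ℝ) ^ 2 ≤ #(B t) := by
    have hshift : ∑ i, ∑ j, M i j = 2 * #(B t) - Fintype.card K * Fintype.card K := by
      calc ∑ i, ∑ j, M i j = ∑ i, ∑ j, M i (j + t) :=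
            sum_congr rfl fun i _ => (Equiv.sum_comp (Equiv.addRight t) (M i)).symm
        _ = ∑ p : K × K, M p.1 (p.2 + t) := by rw [Fintype.sum_prod_type]
        _ = 2 * #(B t) - Fintype.card K * Fintype.card K := by
            rw [sum_eq_two_mul_card_sub_card fun p => hM _ _, Fintype.card_prod, Nat.cast_mul]
    rw [hshift] at hsum
    push_cast at hsum
    linarith
  obtain ⟨ρ, hρ⟩ := exists_perm_forall_le_card_hits (by positivity) hK B hdensity
  refine ⟨fun t => ρ.trans (Equiv.addRight t), fun i => add_right_injective (ρ i), fun t => ?_⟩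
  have hmatching : ∑ i, M i (ρ i + t) = 2 * #(hits (B t) ρ) - Fintype.card K := by
    rw [sum_eq_two_mul_card_sub_card fun i => hM _ _]
    simp [hits, hB]
  refine le_trans ?_ (le_abs_self _)
  simp only [Equiv.trans_apply, Equiv.coe_addRight, hmatching]
  push_cast
  linarith [hρ t]

lemma hasFactorization_of_le_abs_sum (hM : IsSignMatrix M) {δ : ℝ} (hδ : 0 < δ)
    (hK : Fintype.card K < (1 + δ / 4 / 2) ^ ⌊δ / 4 / 4 * Fintype.card K⌋₊)
    (hsum : δ * Fintype.card K ^ 2 ≤ |((∑ i, ∑ j, M i j : ℤ) : ℝ)|) :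
    HasFactorization M (δ / 2 * Fintype.card K) := by
  obtain hpos | hneg := le_abs.1 hsum
  · exact hasFactorization_of_le_sum hM hδ hK hpos
  · refine .of_neg (hasFactorization_of_le_sum (fun i j => ?_) hδ hK ?_)
    · simpa [neg_eq_iff_eq_neg] using (hM i j).symm
    · simpa using hneg

end Factorizations

section Selections

variable {K : Type*}

lemma sum_sub_sum_eq_sub {G : Type*} [AddCommGroup G] [Fintype K] {f g : K → G} {a₀ : K}
    (h : ∀ a, a ≠ a₀ → f a = g a) : ∑ a, f a - ∑ a, g a = f a₀ - g a₀ := by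
  rw [← sum_sub_distrib]
  exact Fintype.sum_eq_single a₀ fun a ha => sub_eq_zero.2 (h a ha)

lemma exists_selection_abs_sum_sub_le (f : K → Bool → ℤ) {C : ℤ} (hC : 0 ≤ C)
    (hf : ∀ a, |f a false - f a true| ≤ C) (S : Finset K) :
    ∃ o : K → Bool, |∑ a ∈ S, (f a (o a) - f a (!o a))| ≤ C := by
  classical
  induction S using Finset.induction_on with
  | empty => exact ⟨fun _ => true, by simpa⟩
  | insert a S ha ih =>
    obtain ⟨o, ho⟩ := ih
    set X := ∑ a ∈ S, (f a (o a) - f a (!o a))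
    have hupdate (b : Bool) : ∑ x ∈ insert a S, (f x (Function.update o a b x) -
        f x (!Function.update o a b x)) = f a b - f a (!b) + X := by
      rw [sum_insert ha, Function.update_self]
      congr 1
      refine sum_congr rfl fun x hx => ?_
      rw [Function.update_of_ne (ne_of_mem_of_not_mem hx ha)]
    have hchoice : |f a false - f a true + X| ≤ C ∨ |f a true - f a false + X| ≤ C := by
      grind [hf a]
    obtain h | h := hchoice
    · exact ⟨Function.update o a false, by rwa [hupdate]⟩
    · exact ⟨Function.update o a true, by rwa [hupdate]⟩

variable [Fintype K]

lemma exists_selection_card_le_sum_sub (f : K → Bool → ℤ)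
    (hgap : ∀ a, f a false ≠ f a true → 2 ≤ |f a false - f a true|) :
    ∃ o : K → Bool, (2 * #{a | f a false ≠ f a true} : ℤ) ≤ ∑ a, (f a (o a) - f a (!o a)) := by
  refine ⟨fun a => decide (f a false ≤ f a true), ?_⟩
  calc (2 * #{a | f a false ≠ f a true} : ℤ) = ∑ a, if f a false ≠ f a true then 2 else 0 := by
        rw [← sum_filter, sum_const, nsmul_eq_mul, mul_comm]
    _ ≤ ∑ a, |f a false - f a true| := sum_le_sum fun a _ => by
        split_ifs with h
        · exact hgap a h
        · exact abs_nonneg _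
    _ = _ := sum_congr rfl fun a _ => by
        by_cases h : f a false ≤ f a true
        · simp [h, abs_of_nonpos (sub_nonpos.2 h)]
        · simp [h, abs_of_pos (sub_pos.2 (not_le.1 h))]

/- The sums of a selection and of its complement have a fixed total. If that total is large, a
selection splitting it evenly makes both sums large; if it is small, so does one splitting it as
unevenly as possible. -/
lemma exists_selection (f : K → Bool → ℤ) (hf : ∀ a b, |f a b| ≤ 2)
    (hgap : ∀ a, f a false ≠ f a true → 2 ≤ |f a false - f a true|) :
    ∃ o : K → Bool, ∀ x, #{a | f a false ≠ f a true} - 2 ≤ 2 * |∑ a, f a (xor x (o a))| := by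
  set w : ℤ := (#{a | f a false ≠ f a true} : ℤ)
  set T := ∑ a, (f a false + f a true) with hT
  have htotal (o : K → Bool) : ∑ a, f a (o a) + ∑ a, f a (!o a) = T := by
    rw [hT, ← sum_add_distrib]
    refine sum_congr rfl fun a _ => ?_
    cases o a
    · rfl
    · exact add_comm _ _
  suffices h : ∃ o : K → Bool, w - 2 ≤ 2 * |∑ a, f a (o a)| ∧ w - 2 ≤ 2 * |∑ a, f a (!o a)| by
    obtain ⟨o, h, hnot⟩ := h
    exact ⟨o, Bool.forall_bool.2 ⟨by simpa using h, by simpa using hnot⟩⟩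
  obtain hlarge | hsmall := le_or_gt (w + 2) |T|
  · obtain ⟨o, ho⟩ := exists_selection_abs_sum_sub_le f (C := 4) (by norm_num)
      (fun a => (abs_sub _ _).trans (by linarith [hf a false, hf a true])) univ
    rw [sum_sub_distrib] at ho
    exact ⟨o, by grind [htotal o]⟩
  · obtain ⟨o, ho : 2 * w ≤ _⟩ := exists_selection_card_le_sum_sub f hgap
    rw [sum_sub_distrib] at ho
    exact ⟨o, by grind [htotal o]⟩

lemma exists_stable_selection (f : K → Bool → ℤ) (hf : ∀ a b, |f a b| ≤ 2)
    (hgap : ∀ a, f a false ≠ f a true → 2 ≤ |f a false - f a true|) (a₀ : K) :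
    ∃ o : K → Bool, ∀ o' : K → Bool, (∀ a, a ≠ a₀ → o' a = o a) →
      ∀ x, #{a | f a false ≠ f a true} - 10 ≤ 2 * |∑ a, f a (xor x (o' a))| := by
  obtain ⟨o, ho⟩ := exists_selection f hf hgap
  refine ⟨o, fun o' ho' x => ?_⟩
  have hdiff : |∑ a, f a (xor x (o a)) - ∑ a, f a (xor x (o' a))| ≤ 4 := by
    rw [sum_sub_sum_eq_sub fun a ha => by rw [ho' a ha]]
    exact (abs_sub _ _).trans (by linarith [hf a₀ (xor x (o a₀)), hf a₀ (xor x (o' a₀))])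
  linarith [ho x, abs_sub_abs_le_abs_sub (∑ a, f a (xor x (o a))) (∑ a, f a (xor x (o' a)))]

end Selections

section Blocks

variable {K : Type*}

/-- The perfect matching of `K × Bool` which matches the two rows `(a, _)` with the two columns
`(ρ a, _)` for every `a`, crosswise if `o a = true`. -/
def blockPerm (ρ : Perm K) (o : K → Bool) : Perm (K × Bool) where
  toFun r := (ρ r.1, xor r.2 (o r.1))
  invFun c := (ρ.symm c.1, xor c.2 (o (ρ.symm c.1)))
  left_inv r := by simp
  right_inv c := by simp

@[simp]
lemma blockPerm_apply (ρ : Perm K) (o : K → Bool) (r : K × Bool) :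
    blockPerm ρ o r = (ρ r.1, xor r.2 (o r.1)) :=
  rfl

/-- The sum of `A` over one of the two perfect matchings of the `2 × 2` block at `(a, b)`. -/
def blockSum (A : K × Bool → K × Bool → ℤ) (a b : K) (β : Bool) : ℤ :=
  A (a, false) (b, β) + A (a, true) (b, !β)

/-- The alternating sum of `A` around the four-cycle with rows `i, i'` and columns `j, j'`. -/
def altSum {X Y : Type*} (A : X → Y → ℤ) (i i' : X) (j j' : Y) : ℤ :=
  A i j + A i' j' - A i j' - A i' j

lemma altSum_block (A : K × Bool → K × Bool → ℤ) (a b : K) :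
    altSum A (a, false) (a, true) (b, false) (b, true) =
      blockSum A a b false - blockSum A a b true := by
  simp only [altSum, blockSum, Bool.not_false, Bool.not_true]
  ring

variable [Fintype K]

lemma sum_blockPerm (A : K × Bool → K × Bool → ℤ) (ρ : Perm K) (o : K → Bool) :
    ∑ i, A i (blockPerm ρ o i) = ∑ a, blockSum A a (ρ a) (o a) := by
  simp [Fintype.sum_prod_type, blockSum, add_comm]

/-- The blocks on which `A` distinguishes between the two perfect matchings. -/
def activeBlocks (A : K × Bool → K × Bool → ℤ) : Finset (K × K) :=
  {p | altSum A (p.1, false) (p.1, true) (p.2, false) (p.2, true) ≠ 0}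

lemma mem_activeBlocks {A : K × Bool → K × Bool → ℤ} {p : K × K} :
    p ∈ activeBlocks A ↔ blockSum A p.1 p.2 false ≠ blockSum A p.1 p.2 true := by
  simp [activeBlocks, altSum_block, sub_eq_zero]

lemma mem_activeBlocks_blockPerm_left {A : K × Bool → K × Bool → ℤ} {ρ : Perm K} {o : K → Bool}
    {a b : K} : (a, b) ∈ activeBlocks (fun i j => A (blockPerm ρ o i) j) ↔
      (ρ a, b) ∈ activeBlocks A := by
  simp only [mem_activeBlocks, blockSum, blockPerm_apply]
  cases o a <;> simp [eq_comm, add_comm]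

lemma mem_activeBlocks_blockPerm_right {A : K × Bool → K × Bool → ℤ} {ρ : Perm K} {o : K → Bool}
    {a b : K} : (a, b) ∈ activeBlocks (fun i j => A i (blockPerm ρ o j)) ↔
      (a, ρ b) ∈ activeBlocks A := by
  simp only [mem_activeBlocks, blockSum, blockPerm_apply]
  cases o b <;> simp [eq_comm]

variable [DecidableEq K]

lemma exists_blockPerm_discrepancy {A : K × Bool → K × Bool → ℤ} (hA : IsSignMatrix A)
    (ρ : Perm K) (a₀ : K) : ∃ o : K → Bool, ∀ o' : K → Bool, (∀ a, a ≠ a₀ → o' a = o a) →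
      ∀ x, (#(hits (activeBlocks A) ρ) - 10 : ℝ) / 2 ≤
        |((∑ i, A i (blockPerm ρ (fun a => xor x (o' a)) i) : ℤ) : ℝ)| := by
  have hbound (a : K) (β : Bool) : |blockSum A a (ρ a) β| ≤ 2 := by
    rw [blockSum]
    grind [hA (a, false) (ρ a, β), hA (a, true) (ρ a, !β)]
  have hgap (a : K) (hne : blockSum A a (ρ a) false ≠ blockSum A a (ρ a) true) :
      2 ≤ |blockSum A a (ρ a) false - blockSum A a (ρ a) true| := by
    simp only [blockSum, Bool.not_false, Bool.not_true] at hne ⊢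
    grind [hA (a, false) (ρ a, false), hA (a, false) (ρ a, true), hA (a, true) (ρ a, false),
      hA (a, true) (ρ a, true)]
  obtain ⟨o, ho⟩ := exists_stable_selection (fun a β => blockSum A a (ρ a) β) hbound hgap a₀
  refine ⟨o, fun o' ho' x => ?_⟩
  rw [div_le_iff₀' two_pos, sum_blockPerm]
  simpa only [hits, mem_activeBlocks] using mod_cast ho o' ho' x

end Blocks

section CyclicFactorizations

variable {K : Type*} [AddGroup K]

/-- The perfect matchings of a 1-factorization of `K × Bool`: the cyclic shift by `t.1` of the
blocks, in the orientation `o t.1` or its complement. -/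
def cyclicPerm (o : K → K → Bool) (t : K × Bool) : Perm (K × Bool) :=
  blockPerm (Equiv.addRight t.1) fun a => xor t.2 (o t.1 a)

lemma cyclicPerm_injective (o : K → K → Bool) (i : K × Bool) :
    (fun t => cyclicPerm o t i).Injective := by
  rintro ⟨s, x⟩ ⟨s', x'⟩ h
  simp only [cyclicPerm, blockPerm_apply, Equiv.coe_addRight, Prod.mk.injEq,
    add_right_inj] at h
  obtain ⟨rfl, h⟩ := h
  simpa using h

variable [Fintype K] [DecidableEq K] {A : K × Bool → K × Bool → ℤ} {w : ℝ}

lemma exists_cyclicPerm_discrepancy (hA : IsSignMatrix A)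
    (hw : ∀ s : K, w ≤ #(hits (activeBlocks A) (Equiv.addRight s))) :
    ∃ o : K → K → Bool, ∀ o' : K → K → Bool, (∀ s a, a ≠ s → o' s a = o s a) →
      ∀ t, (w - 10) / 2 ≤ |((∑ i, A i (cyclicPerm o' t i) : ℤ) : ℝ)| := by
  choose o ho using fun s : K => exists_blockPerm_discrepancy hA (Equiv.addRight s) s
  refine ⟨o, fun o' ho' t => le_trans ?_ (ho t.1 (o' t.1) (ho' t.1) t.2)⟩
  linarith [hw t.1]

lemma hasFactorization_prod_bool (hA : IsSignMatrix A)
    (hw : ∀ s : K, w ≤ #(hits (activeBlocks A) (Equiv.addRight s))) :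
    HasFactorization A ((w - 10) / 2) := by
  obtain ⟨o, ho⟩ := exists_cyclicPerm_discrepancy hA hw
  exact ⟨cyclicPerm o, cyclicPerm_injective o, ho o fun _ _ _ => rfl⟩

end CyclicFactorizations

section Prolongation

variable {X : Type*} [DecidableEq X]

/-- The prolongation of a 1-factorization `π` of `X` by a point `none` along a transversal: the
cell of `π t` in row `g t` is replaced by two cells in the new row and the new column, and the
transversal `τ` together with the new diagonal cell becomes a further perfect matching. -/
def prolongation (π : X → Perm X) (τ : Perm X) (g : X → X) : Option X → Perm (Option X)
  | none => Equiv.optionCongr τ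
  | some t => (Equiv.swap none (some (g t))).trans (Equiv.optionCongr (π t))

variable {π : X → Perm X} {τ : Perm X} {g : X → X}

@[simp]
lemma prolongation_some_none (t : X) :
    prolongation π τ g (some t) none = some (π t (g t)) := by
  simp [prolongation]

@[simp]
lemma prolongation_some_self (t : X) : prolongation π τ g (some t) (some (g t)) = none := by
  simp [prolongation]

lemma prolongation_some_of_ne {t i : X} (h : i ≠ g t) :
    prolongation π τ g (some t) (some i) = some (π t i) := by
  simp [prolongation, Equiv.swap_apply_of_ne_of_ne, h]

lemma prolongation_injective [Finite X] (hπ : ∀ i, (fun t => π t i).Injective)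
    (hg : ∀ t, π t (g t) = τ (g t)) (i : Option X) :
    (fun t => prolongation π τ g t i).Injective := by
  have hginj : g.Injective := fun t t' h => hπ (g t) <| by
    simp only
    rw [hg, h, hg]
  have hsome_ne_none (t : X) : prolongation π τ g (some t) i ≠ prolongation π τ g none i := by
    cases i with
    | none => simp [prolongation]
    | some i =>
      obtain ⟨t', rfl⟩ := Finite.surjective_of_injective hginj i
      obtain rfl | h := eq_or_ne t t'
      · simp [prolongation]
      · rw [prolongation_some_of_ne (hginj.ne h.symm)]
        simpa [prolongation, ← hg] using (hπ (g t')).ne h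
  rintro (_ | t) (_ | t') h
  · rfl
  · exact absurd h.symm (hsome_ne_none t')
  · exact absurd h (hsome_ne_none t)
  · congr 1
    cases i with
    | none => exact hginj (τ.injective (by simpa [hg] using h))
    | some i =>
      simp only at h
      by_cases hi : i = g t <;> by_cases hi' : i = g t'
      · exact hginj (hi.symm.trans hi')
      · subst hi
        simp [prolongation_some_of_ne hi'] at h
      · subst hi'
        simp [prolongation_some_of_ne hi] at h
      · rw [prolongation_some_of_ne hi, prolongation_some_of_ne hi'] at h
        exact hπ i (Option.some_injective _ h)

variable [Fintype X] {M : Option X → Option X → ℤ}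

lemma abs_sum_prolongation_none_sub_le (hM : IsSignMatrix M) :
    |∑ i, M (some i) (some (τ i)) - ∑ i, M i (prolongation π τ g none i)| ≤ 1 := by
  rw [Fintype.sum_option, abs_sub_comm]
  simp only [prolongation, Equiv.optionCongr_apply, Option.map_some, add_sub_cancel_right,
    Option.map_none]
  obtain h | h := hM none none <;> simp [h]

lemma abs_sum_prolongation_some_sub_le (hM : IsSignMatrix M) (t : X) :
    |∑ i, M (some i) (some (π t i)) - ∑ i, M i (prolongation π τ g (some t) i)| ≤ 3 := by
  have hdiff := sum_sub_sum_eq_sub (a₀ := g t) (f := fun i => M (some i) (some (π t i)))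
    (g := fun i => M (some i) (prolongation π τ g (some t) (some i)))
    fun i hi => by rw [prolongation_some_of_ne hi]
  rw [prolongation_some_self] at hdiff
  rw [Fintype.sum_option, prolongation_some_none, sub_add_eq_sub_sub_swap, hdiff]
  grind [hM none (some (π t (g t))), hM (some (g t)) (some (π t (g t))), hM (some (g t)) none]

end Prolongation

lemma hasFactorization_option {X : Type*} [Fintype X] {M : Option X → Option X → ℤ}
    (hM : IsSignMatrix M) {π : X → Perm X} {τ : Perm X} (hπ : ∀ i, (fun t => π t i).Injective)
    (hmeet : ∀ t, ∃ r, π t r = τ r) {h : ℝ}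
    (hsum : ∀ t, h ≤ |((∑ i, M (some i) (some (π t i)) : ℤ) : ℝ)|)
    (hτ : h ≤ |((∑ i, M (some i) (some (τ i)) : ℤ) : ℝ)|) : HasFactorization M (h - 3) := by
  classical
  choose g hg using hmeet
  refine ⟨prolongation π τ g, prolongation_injective hπ hg, ?_⟩
  have hclose {s s' : ℤ} (hs : h ≤ |(s : ℝ)|) (hss : |s - s'| ≤ 3) : h - 3 ≤ |(s' : ℝ)| := by
    have : |(s - s' : ℝ)| ≤ 3 := mod_cast hss
    linarith [abs_sub_abs_le_abs_sub (s : ℝ) s']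
  rintro (_ | t)
  · exact hclose hτ ((abs_sum_prolongation_none_sub_le hM).trans (by norm_num))
  · exact hclose (hsum t) (abs_sum_prolongation_some_sub_le hM t)

section Doubling

variable {K : Type*}

/-- A permutation of `K × Bool` whose first component is `(a, x) ↦ 2a + x`. It meets every
`cyclicPerm o (s, _)` in the block column of just two rows, `(s, false)` and `(s - 1, true)`. -/
def IsDoubling [AddMonoidWithOne K] (τ : Perm (K × Bool)) : Prop :=
  ∀ a x, (τ (a, x)).1 = a + a + if x then 1 else 0

lemma IsDoubling.fst_ne [AddMonoidWithOne K] [IsLeftCancelAdd K] [NeZero (1 : K)]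
    {τ : Perm (K × Bool)} (hτ : IsDoubling τ) (b : K) :
    (τ (b, false)).1 ≠ (τ (b, true)).1 := by
  simp [hτ b]

lemma exists_isDoubling (m : ℕ) [NeZero m] : ∃ τ : Perm (ZMod m × Bool), IsDoubling τ := by
  let v : ZMod m × Bool → ℕ := fun r => 2 * r.1.val + r.2.toNat
  have hlt (r : ZMod m × Bool) : v r < 2 * m := by
    have := r.1.val_lt
    have := r.2.toNat_le
    simp only [v]
    omega
  have hinj : (fun r => ((v r : ZMod m), decide (m ≤ v r))).Injective := fun r r' h => by
    obtain ⟨hmod, hcarry⟩ := Prod.mk.inj h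
    rw [decide_eq_decide] at hcarry
    have hval : v r = v r' :=
      ((ZMod.natCast_eq_natCast_iff _ _ _).1 hmod).eq_of_abs_lt <| by
        rw [abs_lt]
        have := hlt r
        have := hlt r'
        omega
    have := r.2.toNat_le
    have := r'.2.toNat_le
    simp only [v] at hval
    refine Prod.ext (ZMod.val_injective m (by omega)) (Bool.eq_iff_iff.2 ?_)
    rw [← Bool.toNat_eq_one, ← Bool.toNat_eq_one]
    omega
  refine ⟨.ofBijective _ (Finite.injective_iff_bijective.1 hinj), fun a x => ?_⟩
  cases x <;> simp [v, two_mul]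

variable [AddGroupWithOne K] [NeZero (1 : K)] {τ : Perm (K × Bool)}

/- Reorienting block `s` of the matchings with shift `s` makes one of them meet `τ` in row
`(s, false)` and the other one in row `(s - 1, true)`. -/
lemma exists_reorientation (hτ : IsDoubling τ) (o : K → K → Bool) :
    ∃ o' : K → K → Bool, (∀ s a, a ≠ s → o' s a = o s a) ∧
      ∀ t, ∃ r, cyclicPerm o' t r = τ r := by
  classical
  set y₀ : K → Bool := fun s => xor (τ (s - 1, true)).2 (o s (s - 1)) with hy₀
  refine ⟨fun s => Function.update (o s) s (xor (τ (s, false)).2 (y₀ s)),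
    fun s a ha => Function.update_of_ne ha _ _, fun ⟨s, y⟩ => ?_⟩
  have hs : s - 1 ≠ s := by simp
  by_cases hy : y = y₀ s
  · refine ⟨(s, false), Prod.ext ?_ ?_⟩
    · simp [cyclicPerm, hτ s false]
    · simp [cyclicPerm, hy, Bool.xor_left_comm]
  · refine ⟨(s - 1, true), Prod.ext ?_ ?_⟩
    · simp [cyclicPerm, hτ (s - 1) true, add_assoc]
    · have hy' : y = !y₀ s := Bool.eq_not.2 hy
      simp [cyclicPerm, hs, hy', hy₀]

variable [Fintype K] [DecidableEq K] {M : Option (K × Bool) → Option (K × Bool) → ℤ} {w : ℝ}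

lemma hasFactorization_option_prod_bool (hM : IsSignMatrix M) (hτ : IsDoubling τ)
    (hw : ∀ s : K, w ≤
      #(hits (activeBlocks fun i j => M (some i) (some j)) (Equiv.addRight s)))
    (hsum : (w - 10) / 2 ≤ |((∑ i, M (some i) (some (τ i)) : ℤ) : ℝ)|) :
    HasFactorization M ((w - 10) / 2 - 3) := by
  obtain ⟨o, ho⟩ := exists_cyclicPerm_discrepancy (A := fun i j => M (some i) (some j))
    (fun i j => hM _ _) hw
  obtain ⟨o', ho', hmeet⟩ := exists_reorientation hτ o
  exact hasFactorization_option hM (cyclicPerm_injective o') hmeet (ho o' ho') hsum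

end Doubling

section Twist

variable {X Y : Type*}

/-- The indicator of the four-cycles around which `A` has a nonzero alternating sum. -/
def twist (A : X → Y → ℤ) (i i' : X) (j j' : Y) : ℕ :=
  if altSum A i i' j j' = 0 then 0 else 1

variable {A : X → Y → ℤ}

lemma twist_self_left (i : X) (j j' : Y) : twist A i i j j' = 0 := by
  simp [twist, altSum]

lemma twist_self_right (i i' : X) (j : Y) : twist A i i' j j = 0 := by
  simp [twist, altSum]

lemma twist_swap_right (i i' : X) (j j' : Y) : twist A i i' j j' = twist A i i' j' j := by
  grind [twist, altSum]

lemma twist_transpose (i i' : X) (j j' : Y) :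
    twist (fun j i => A i j) j j' i i' = twist A i i' j j' := by
  grind [twist, altSum]

lemma twist_le_add (i i' : X) (j j' k : Y) :
    twist A i i' j j' ≤ twist A i i' j k + twist A i i' j' k := by
  grind [twist, altSum]

/-- The number of four-cycles around which `A` has a nonzero alternating sum, each counted once for
every labelling of its vertices. -/
def twistCount [Fintype X] [Fintype Y] (A : X → Y → ℤ) : ℕ :=
  ∑ i, ∑ i', ∑ j, ∑ j', twist A i i' j j'

lemma card_activeBlocks {K : Type*} [Fintype K] (A : K × Bool → K × Bool → ℤ) :
    #(activeBlocks A) = ∑ a, ∑ b, twist A (a, false) (a, true) (b, false) (b, true) := by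
  rw [← Fintype.sum_prod_type', activeBlocks, card_filter]
  simp only [twist, ne_eq, ite_not]

end Twist

section Averaging

variable {X : Type*} [Fintype X]

lemma sum_perm_apply_pair_eq [DecidableEq X] {R : Type*} [AddCommMonoid R] (F : X → X → R)
    {x y x' y' : X} (h : x ≠ y) (h' : x' ≠ y') :
    ∑ σ : Perm X, F (σ x) (σ y) = ∑ σ : Perm X, F (σ x') (σ y') := by
  have := Equiv.Perm.isMultiplyPretransitive X 2
  obtain ⟨g, hx, hy⟩ := MulAction.is_two_pretransitive_iff.1 this h h'
  rw [← Equiv.sum_comp (Equiv.mulRight g)]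
  simp only [Equiv.Perm.smul_def] at hx hy
  simp [hx, hy]

lemma card_perm_mul_sum_le [DecidableEq X] {F : X → X → ℕ} (hF : ∀ x, F x x = 0) {x y : X}
    (h : x ≠ y) : Fintype.card (Perm X) * ∑ a, ∑ b, F a b ≤
      Fintype.card X ^ 2 * ∑ σ : Perm X, F (σ x) (σ y) := by
  calc Fintype.card (Perm X) * ∑ a, ∑ b, F a b = ∑ σ : Perm X, ∑ a, ∑ b, F (σ a) (σ b) := by
        rw [← smul_eq_mul, ← card_univ, ← sum_const]
        refine sum_congr rfl fun σ _ => ?_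
        rw [← Equiv.sum_comp σ]
        exact sum_congr rfl fun a _ => (Equiv.sum_comp σ _).symm
    _ = ∑ a, ∑ b, ∑ σ : Perm X, F (σ a) (σ b) := by
        rw [sum_comm]
        exact sum_congr rfl fun a _ => sum_comm
    _ ≤ ∑ _a : X, ∑ _b : X, ∑ σ : Perm X, F (σ x) (σ y) := by
        refine sum_le_sum fun a _ => sum_le_sum fun b _ => ?_
        obtain rfl | hab := eq_or_ne a b
        · simp [hF]
        · exact (sum_perm_apply_pair_eq F hab h).le
    _ = _ := by simp [sq, mul_assoc]

variable {K : Type*} [Fintype K]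

lemma exists_perm_card_mul_sum_le {F : X → X → ℕ} (hF : ∀ x, F x x = 0)
    {p q : K → X} (hpq : ∀ a, p a ≠ q a) :
    ∃ σ : Perm X, Fintype.card K * ∑ x, ∑ y, F x y ≤
      Fintype.card X ^ 2 * ∑ a, F (σ (p a)) (σ (q a)) := by
  classical
  suffices h : ∑ _σ : Perm X, Fintype.card K * ∑ x, ∑ y, F x y ≤
      ∑ σ : Perm X, Fintype.card X ^ 2 * ∑ a, F (σ (p a)) (σ (q a)) by
    obtain ⟨σ, -, hσ⟩ := exists_le_of_sum_le univ_nonempty h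
    exact ⟨σ, hσ⟩
  calc ∑ _σ : Perm X, Fintype.card K * ∑ x, ∑ y, F x y =
        ∑ _a : K, Fintype.card (Perm X) * ∑ x, ∑ y, F x y := by
        simp only [sum_const, card_univ, smul_eq_mul]
        ring
    _ ≤ ∑ a, Fintype.card X ^ 2 * ∑ σ : Perm X, F (σ (p a)) (σ (q a)) :=
        sum_le_sum fun a _ => card_perm_mul_sum_le hF (hpq a)
    _ = _ := by rw [← mul_sum, ← mul_sum, sum_comm]

lemma exists_perm_card_sq_mul_twistCount_le (A : K × Bool → K × Bool → ℤ) :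
    ∃ σ κ : Perm (K × Bool), Fintype.card K ^ 2 * twistCount A ≤
      Fintype.card (K × Bool) ^ 4 * #(activeBlocks fun i j => A (σ i) (κ j)) := by
  classical
  obtain ⟨σ, hσ⟩ := exists_perm_card_mul_sum_le (F := fun i i' => ∑ j, ∑ j', twist A i i' j j')
    (p := fun a : K => (a, false)) (q := fun a => (a, true)) (by simp [twist_self_left]) (by simp)
  obtain ⟨κ, hκ⟩ := exists_perm_card_mul_sum_le
    (F := fun j j' => ∑ a, twist A (σ (a, false)) (σ (a, true)) j j')
    (p := fun b : K => (b, false)) (q := fun b => (b, true)) (by simp [twist_self_right]) (by simp)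
  have hcomm : ∑ a, ∑ j, ∑ j', twist A (σ (a, false)) (σ (a, true)) j j' =
      ∑ j, ∑ j', ∑ a, twist A (σ (a, false)) (σ (a, true)) j j' := by
    rw [sum_comm]
    exact sum_congr rfl fun j _ => sum_comm
  refine ⟨σ, κ, ?_⟩
  calc Fintype.card K ^ 2 * twistCount A =
        Fintype.card K * (Fintype.card K * twistCount A) := by ring
    _ ≤ Fintype.card K * (Fintype.card (K × Bool) ^ 2 *
          ∑ a, ∑ j, ∑ j', twist A (σ (a, false)) (σ (a, true)) j j') :=
        Nat.mul_le_mul_left _ hσ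
    _ = Fintype.card (K × Bool) ^ 2 * (Fintype.card K *
          ∑ j, ∑ j', ∑ a, twist A (σ (a, false)) (σ (a, true)) j j') := by rw [hcomm]; ring
    _ ≤ Fintype.card (K × Bool) ^ 2 * (Fintype.card (K × Bool) ^ 2 *
          ∑ b, ∑ a, twist A (σ (a, false)) (σ (a, true)) (κ (b, false)) (κ (b, true))) :=
        Nat.mul_le_mul_left _ hκ
    _ = _ := by
        rw [sum_comm, card_activeBlocks, ← mul_assoc, ← pow_add]
        rfl

end Averaging

section Flips

variable {X K : Type*} [Fintype K] [DecidableEq K]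

/- Flipping the column pair of `u` moves `u` but not `v`, and the four-cycles before and after the
flip add up to the one on that pair. -/
lemma card_mul_twist_le_sum_blockPerm (A : X → K × Bool → ℤ) (i i' : X) {u v : K × Bool}
    (huv : u.1 ≠ v.1) : Fintype.card (K → Bool) * twist A i i' (u.1, false) (u.1, true) ≤
      2 * ∑ β, twist A i i' (blockPerm 1 β u) (blockPerm 1 β v) := by
  set f : (K → Bool) → ℕ := fun β => twist A i i' (blockPerm 1 β u) (blockPerm 1 β v)
  have hinv : Function.Involutive fun (β : K → Bool) a => xor (decide (a = u.1)) (β a) :=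
    fun β => by simp
  have hpair (β : K → Bool) :
      twist A i i' (u.1, false) (u.1, true) ≤ f β + f (hinv.toPerm _ β) := by
    refine (twist_le_add i i' _ _ (blockPerm 1 β v)).trans (le_of_eq ?_)
    have hv : blockPerm 1 (hinv.toPerm _ β) v = blockPerm 1 β v := by simp [huv.symm]
    simp only [f, hv]
    cases h : xor u.2 (β u.1)
    · simp [h]
    · simp [h, add_comm]
  calc Fintype.card (K → Bool) * twist A i i' (u.1, false) (u.1, true) =
        ∑ _β : K → Bool, twist A i i' (u.1, false) (u.1, true) := by simp
    _ ≤ ∑ β, (f β + f (hinv.toPerm _ β)) := sum_le_sum fun β _ => hpair β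
    _ = 2 * ∑ β, f β := by rw [sum_add_distrib, Equiv.sum_comp, two_mul]

lemma card_mul_sum_twist_le_sum_blockPerm (A : X → K × Bool → ℤ) (i i' : X)
    {τ : Perm (K × Bool)} (hτ : ∀ b, (τ (b, false)).1 ≠ (τ (b, true)).1) :
    Fintype.card (K → Bool) * ∑ c, twist A i i' (c, false) (c, true) ≤
      2 * ∑ β, ∑ b, twist A i i' (blockPerm 1 β (τ (b, false))) (blockPerm 1 β (τ (b, true))) := by
  set T : K → ℕ := fun c => twist A i i' (c, false) (c, true)
  set P : (K → Bool) → K → ℕ := fun β b =>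
    twist A i i' (blockPerm 1 β (τ (b, false))) (blockPerm 1 β (τ (b, true)))
  have hpair (b : K) :
      Fintype.card (K → Bool) * (T (τ (b, false)).1 + T (τ (b, true)).1) ≤ 4 * ∑ β, P β b := by
    have hfalse := card_mul_twist_le_sum_blockPerm A i i' (hτ b)
    have htrue := card_mul_twist_le_sum_blockPerm A i i' (hτ b).symm
    simp only [twist_swap_right _ _ (blockPerm 1 _ (τ (b, true)))] at htrue
    linarith
  have hsplit : ∑ b, (T (τ (b, false)).1 + T (τ (b, true)).1) = 2 * ∑ c, T c := by
    calc ∑ b, (T (τ (b, false)).1 + T (τ (b, true)).1) = ∑ r, T (τ r).1 := by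
          simp [Fintype.sum_prod_type, add_comm]
      _ = ∑ r : K × Bool, T r.1 := Equiv.sum_comp τ fun r => T r.1
      _ = 2 * ∑ c, T c := by simp [Fintype.sum_prod_type, mul_sum]
  have hsum := sum_le_sum fun b (_ : b ∈ univ) => hpair b
  rw [← mul_sum, ← mul_sum, hsplit, sum_comm] at hsum
  linarith

end Flips

section Relabelings

variable {K : Type*} [Fintype K] {A : K × Bool → K × Bool → ℤ}

lemma card_activeBlocks_blockPerm_right (β : K → Bool) :
    #(activeBlocks fun i j => A i (blockPerm 1 β j)) = #(activeBlocks A) := by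
  congr 1
  ext ⟨a, b⟩
  exact mem_activeBlocks_blockPerm_right

lemma card_activeBlocks_transpose :
    #(activeBlocks fun j i => A i j) = #(activeBlocks A) := by
  simp only [card_activeBlocks]
  rw [sum_comm]
  exact sum_congr rfl fun a _ => sum_congr rfl fun b _ => twist_transpose ..

lemma exists_card_activeBlocks_le_two_mul (A : K × Bool → K × Bool → ℤ)
    {τ : Perm (K × Bool)}
    (hτ : ∀ b, (τ (b, false)).1 ≠ (τ (b, true)).1) :
    ∃ β : K → Bool, #(activeBlocks A) ≤
      2 * #(activeBlocks fun i j => A i (blockPerm 1 β (τ j))) := by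
  classical
  suffices h : ∑ _β : K → Bool, #(activeBlocks A) ≤
      ∑ β : K → Bool, 2 * #(activeBlocks fun i j => A i (blockPerm 1 β (τ j))) by
    obtain ⟨β, -, hβ⟩ := exists_le_of_sum_le univ_nonempty h
    exact ⟨β, hβ⟩
  have hsum := sum_le_sum fun a (_ : a ∈ (univ : Finset K)) =>
    card_mul_sum_twist_le_sum_blockPerm A (a, false) (a, true) hτ
  rw [← mul_sum, ← mul_sum, sum_comm (s := univ (α := K)) (t := univ (α := K → Bool))] at hsum
  rw [sum_const, card_univ, smul_eq_mul, ← mul_sum]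
  simp only [card_activeBlocks]
  exact hsum

variable [DecidableEq K] [AddGroup K]

lemma exists_perm_rows_hits (hA : IsSignMatrix A) {p η : ℝ} (hη : 0 < η)
    (hK : Fintype.card K + 1 < (1 + η / 2) ^ ⌊η / 4 * Fintype.card K⌋₊) (τ : Perm (K × Bool))
    (hactive : p * Fintype.card K ^ 2 ≤ #(activeBlocks A))
    (hactive_τ : p * Fintype.card K ^ 2 ≤ #(activeBlocks fun i j => A i (τ j))) :
    ∃ R : Perm (K × Bool),
      (∀ s, (p - η) * Fintype.card K ≤
        #(hits (activeBlocks fun i j => A (R i) j) (Equiv.addRight s))) ∧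
      ((p - η) * Fintype.card K - 10) / 2 ≤ |((∑ i, A (R i) (τ i) : ℤ) : ℝ)| := by
  set D : K × Bool → K × Bool → ℤ := fun j i => A i (τ j)
  set B : Option K → Finset (K × K) := fun t => t.elim (activeBlocks D) fun s =>
    univ.filter fun c => (c.2, c.1 + s) ∈ activeBlocks A with hB
  have hdensity (t : Option K) : p * (Fintype.card K : ℝ) ^ 2 ≤ #(B t) := by
    cases t with
    | none => rwa [← card_activeBlocks_transpose] at hactive_τ
    | some s =>
      refine hactive.trans_eq ?_
      rw [Nat.cast_inj]
      exact card_equiv ((Equiv.prodComm K K).trans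
        ((Equiv.subRight s).prodCongr (Equiv.refl K))) (by simp [hB])
  obtain ⟨ρ, hρ⟩ := exists_perm_forall_le_card_hits hη (by simpa using hK) B hdensity
  obtain ⟨o, ho⟩ := exists_blockPerm_discrepancy (fun j i => hA i (τ j) : IsSignMatrix D) ρ 0
  have hD := ho o (fun _ _ => rfl) false
  simp only [Bool.false_xor] at hD
  refine ⟨blockPerm ρ o, fun s => (hρ (some s)).trans_eq ?_, le_trans ?_ hD⟩
  · rw [Nat.cast_inj]
    congr 1
    ext a
    simp [hits, hB, mem_activeBlocks_blockPerm_left, -blockPerm_apply]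
  · exact div_le_div_of_nonneg_right (sub_le_sub_right (hρ none) 10) two_pos.le

lemma exists_relabeling (hA : IsSignMatrix A) {γ : ℝ} (hγ : 0 < γ)
    (hK : Fintype.card K + 1 < (1 + γ / 4 / 2) ^ ⌊γ / 4 / 4 * Fintype.card K⌋₊)
    (htwist : γ * Fintype.card (K × Bool) ^ 4 ≤ twistCount A) {τ : Perm (K × Bool)}
    (hτ : ∀ b, (τ (b, false)).1 ≠ (τ (b, true)).1) :
    ∃ σ κ : Perm (K × Bool),
      (∀ s, γ / 4 * Fintype.card K ≤
        #(hits (activeBlocks fun i j => A (σ i) (κ j)) (Equiv.addRight s))) ∧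
      (γ / 4 * Fintype.card K - 10) / 2 ≤ |((∑ i, A (σ i) (κ (τ i)) : ℤ) : ℝ)| := by
  obtain ⟨σ, κ, hσκ⟩ := exists_perm_card_sq_mul_twistCount_le A
  set A₁ : K × Bool → K × Bool → ℤ := fun i j => A (σ i) (κ j)
  have hactive : γ * (Fintype.card K : ℝ) ^ 2 ≤ #(activeBlocks A₁) := by
    have hcard : (0 : ℝ) < Fintype.card (K × Bool) ^ 4 := by positivity
    refine le_of_mul_le_mul_left ?_ hcard
    calc (Fintype.card (K × Bool) : ℝ) ^ 4 * (γ * Fintype.card K ^ 2) =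
          (Fintype.card K : ℝ) ^ 2 * (γ * Fintype.card (K × Bool) ^ 4) := by ring
      _ ≤ (Fintype.card K : ℝ) ^ 2 * twistCount A := by gcongr
      _ ≤ _ := mod_cast hσκ
  obtain ⟨β, hβ⟩ := exists_card_activeBlocks_le_two_mul A₁ hτ
  have hactive_τ : γ / 2 * (Fintype.card K : ℝ) ^ 2 ≤
      #(activeBlocks fun i j => A₁ i (blockPerm 1 β (τ j))) := by
    have : (#(activeBlocks A₁) : ℝ) ≤ 2 * #(activeBlocks fun i j => A₁ i (blockPerm 1 β (τ j))) :=
      mod_cast hβ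
    linarith
  obtain ⟨R, hR⟩ := exists_perm_rows_hits (A := fun i j => A₁ i (blockPerm 1 β j))
    (p := γ / 2) (fun i j => hA _ _) (by positivity) hK τ (by
      rw [card_activeBlocks_blockPerm_right]
      nlinarith [sq_nonneg (Fintype.card K : ℝ)]) hactive_τ
  rw [show γ / 2 - γ / 4 = γ / 4 by ring] at hR
  exact ⟨R.trans σ, (blockPerm 1 β).trans κ, hR⟩

end Relabelings

section ManyTwists

variable {K : Type*} [Fintype K] [AddGroupWithOne K] [NeZero (1 : K)]
  {τ : Perm (K × Bool)} {γ : ℝ}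

lemma hasFactorization_of_le_twistCount {A : K × Bool → K × Bool → ℤ} (hA : IsSignMatrix A)
    (hτ : IsDoubling τ) (hγ : 0 < γ)
    (hK : Fintype.card K + 1 < (1 + γ / 4 / 2) ^ ⌊γ / 4 / 4 * Fintype.card K⌋₊)
    (htwist : γ * Fintype.card (K × Bool) ^ 4 ≤ twistCount A) :
    HasFactorization A ((γ / 4 * Fintype.card K - 10) / 2) := by
  classical
  obtain ⟨σ, κ, hhits, -⟩ := exists_relabeling hA hγ hK htwist hτ.fst_ne
  exact .of_relabel σ κ (hasFactorization_prod_bool (fun i j => hA _ _) hhits)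

lemma hasFactorization_option_of_le_twistCount {M : Option (K × Bool) → Option (K × Bool) → ℤ}
    (hM : IsSignMatrix M) (hτ : IsDoubling τ) (hγ : 0 < γ)
    (hK : Fintype.card K + 1 < (1 + γ / 4 / 2) ^ ⌊γ / 4 / 4 * Fintype.card K⌋₊)
    (htwist : γ * Fintype.card (K × Bool) ^ 4 ≤ twistCount fun i j => M (some i) (some j)) :
    HasFactorization M ((γ / 4 * Fintype.card K - 10) / 2 - 3) := by
  classical
  obtain ⟨σ, κ, hhits, hsum⟩ :=
    exists_relabeling (A := fun i j => M (some i) (some j)) (fun i j => hM _ _) hγ hK htwist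
      hτ.fst_ne
  exact .of_relabel (Equiv.optionCongr σ) (Equiv.optionCongr κ)
    (hasFactorization_option_prod_bool (fun i j => hM _ _) hτ hhits hsum)

end ManyTwists

section FewTwists

variable {X : Type*} [Fintype X]

/-- `M` differs in at most `E` entries from a signing with constant rows. -/
def IsNearRowConstant (M : X → X → ℤ) (E : ℝ) : Prop :=
  ∃ z : X → ℤ, (∀ i, z i = 1 ∨ z i = -1) ∧
    hammingDist (fun p : X × X => M p.1 p.2) (fun p => z p.1) ≤ E

/-- `M` differs in at most `E` entries from a signing with constant rows or constant columns. -/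
def IsNearOneSided (M : X → X → ℤ) (E : ℝ) : Prop :=
  IsNearRowConstant M E ∨ IsNearRowConstant (fun j i => M i j) E

variable {M : X → X → ℤ} {E E' : ℝ}

lemma hammingDist_rows (M : X → X → ℤ) (z : X → ℤ) :
    hammingDist (fun p : X × X => M p.1 p.2) (fun p => z p.1) =
      ∑ i, hammingDist (M i) (fun _ => z i) := by
  simp only [hammingDist, card_filter, Fintype.sum_prod_type]

lemma hammingDist_option_le {R : Type*} [DecidableEq R] (f g : Option X → R) :
    hammingDist f g ≤ hammingDist (fun x => f (some x)) (fun x => g (some x)) + 1 := by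
  simp only [hammingDist, card_filter, Fintype.sum_option]
  split_ifs <;> omega

lemma IsNearRowConstant.mono (h : E ≤ E') : IsNearRowConstant M E → IsNearRowConstant M E' :=
  fun ⟨z, hz, hd⟩ => ⟨z, hz, hd.trans h⟩

lemma IsNearOneSided.mono (h : E ≤ E') : IsNearOneSided M E → IsNearOneSided M E' :=
  Or.imp (.mono h) (.mono h)

lemma IsNearRowConstant.of_relabel {Y : Type*} [Fintype Y] (e : Y ≃ X) :
    IsNearRowConstant (fun i j => M (e i) (e j)) E → IsNearRowConstant M E := by
  rintro ⟨z, hz, hd⟩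
  refine ⟨fun i => z (e.symm i), fun i => hz _, le_of_eq_of_le ?_ hd⟩
  rw [Nat.cast_inj]
  refine (card_equiv (e.prodCongr e) ?_).symm
  simp

lemma IsNearOneSided.of_relabel {Y : Type*} [Fintype Y] (e : Y ≃ X) :
    IsNearOneSided (fun i j => M (e i) (e j)) E → IsNearOneSided M E :=
  Or.imp (.of_relabel e) (.of_relabel (M := fun j i => M i j) e)

lemma IsNearRowConstant.option {M : Option X → Option X → ℤ} :
    IsNearRowConstant (fun i j => M (some i) (some j)) E →
      IsNearRowConstant M (E + (2 * Fintype.card X + 1)) := by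
  rintro ⟨z, hz, hd⟩
  refine ⟨fun i => i.elim 1 z, ?_, ?_⟩
  · rintro (_ | i)
    · exact .inl rfl
    · exact hz i
  · have hnat : hammingDist (fun p : Option X × Option X => M p.1 p.2) (fun p => p.1.elim 1 z) ≤
        hammingDist (fun p : X × X => M (some p.1) (some p.2)) (fun p => z p.1) +
          (2 * Fintype.card X + 1) := by
      rw [hammingDist_rows M fun i => i.elim 1 z, Fintype.sum_option,
        hammingDist_rows (fun i j => M (some i) (some j)) z]
      have hnone := hammingDist_le_card_fintype (x := M none) (y := fun _ => 1)
      have hsome := sum_le_sum fun i (_ : i ∈ univ) =>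
        hammingDist_option_le (M (some i)) (fun _ => z i)
      simp only [sum_add_distrib, sum_const, card_univ, smul_eq_mul, mul_one,
        Fintype.card_option, Option.elim_none, Option.elim_some] at hnone hsome ⊢
      omega
    calc (_ : ℝ) ≤ _ := Nat.cast_le.2 hnat
      _ ≤ _ := by push_cast; linarith

lemma IsNearOneSided.option {M : Option X → Option X → ℤ} :
    IsNearOneSided (fun i j => M (some i) (some j)) E →
      IsNearOneSided M (E + (2 * Fintype.card X + 1)) :=
  Or.imp .option (.option (M := fun j i => M i j))

lemma hammingDist_column_le (M : X → X → ℤ) (i₀ j₀ : X) :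
    hammingDist (fun p : X × X => M p.1 p.2) (fun p => M p.1 j₀) ≤
      ∑ i, ∑ j, twist M i₀ i j₀ j + Fintype.card X * #{j | M i₀ j ≠ M i₀ j₀} := by
  calc hammingDist (fun p : X × X => M p.1 p.2) (fun p => M p.1 j₀) =
        ∑ i, ∑ j, if M i j ≠ M i j₀ then 1 else 0 := by
          rw [hammingDist_rows M fun i => M i j₀]
          simp only [hammingDist, card_filter]
    _ ≤ ∑ i, ∑ j, (twist M i₀ i j₀ j + if M i₀ j ≠ M i₀ j₀ then 1 else 0) :=
        sum_le_sum fun i _ => sum_le_sum fun j _ => by grind [twist, altSum]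
    _ = _ := by simp [sum_add_distrib, card_filter]

lemma card_mul_card_le_sum_twist (hM : IsSignMatrix M) (i₀ j₀ : X) :
    #{i | M i j₀ ≠ M i₀ j₀} * #{j | M i₀ j ≠ M i₀ j₀} ≤ ∑ i, ∑ j, twist M i₀ i j₀ j := by
  rw [card_filter, card_filter, sum_mul_sum]
  refine sum_le_sum fun i _ => sum_le_sum fun j _ => ?_
  grind [twist, altSum, hM i₀ j₀, hM i j₀, hM i₀ j, hM i j]

lemma exists_card_sq_mul_sum_twist_le [Nonempty X] (M : X → X → ℤ) :
    ∃ i₀ j₀, Fintype.card X ^ 2 * ∑ i, ∑ j, twist M i₀ i j₀ j ≤ twistCount M := by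
  have hsum : ∑ p : X × X, Fintype.card X ^ 2 * ∑ i, ∑ j, twist M p.1 i p.2 j ≤
      ∑ _p : X × X, twistCount M := by
    simp only [← mul_sum, Fintype.sum_prod_type, sum_const, card_univ, Fintype.card_prod,
      smul_eq_mul, twistCount, sq]
    exact le_of_eq (congrArg _ (sum_congr rfl fun i _ => sum_comm))
  obtain ⟨p, -, hp⟩ := exists_le_of_sum_le univ_nonempty hsum
  exact ⟨p.1, p.2, hp⟩

lemma isNearRowConstant_of_card_le (hM : IsSignMatrix M) {θ : ℝ} (hθ : 0 ≤ θ) (hθ' : θ ≤ 1)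
    {i₀ j₀ : X} (htwist : (∑ i, ∑ j, twist M i₀ i j₀ j : ℕ) ≤ (θ * Fintype.card X) ^ 2)
    (hcard : #{j | M i₀ j ≠ M i₀ j₀} ≤ θ * Fintype.card X) :
    IsNearRowConstant M (2 * θ * Fintype.card X ^ 2) := by
  refine ⟨fun i => M i j₀, fun i => hM i j₀, ?_⟩
  calc (hammingDist (fun p : X × X => M p.1 p.2) (fun p => M p.1 j₀) : ℝ) ≤
        ((∑ i, ∑ j, twist M i₀ i j₀ j : ℕ) : ℝ) +
          Fintype.card X * #{j | M i₀ j ≠ M i₀ j₀} := by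
        exact_mod_cast hammingDist_column_le M i₀ j₀
    _ ≤ (θ * Fintype.card X) ^ 2 + Fintype.card X * (θ * Fintype.card X) := by
        gcongr
    _ = (θ ^ 2 + θ) * Fintype.card X ^ 2 := by ring
    _ ≤ 2 * θ * Fintype.card X ^ 2 := by
        gcongr
        nlinarith

lemma isNearOneSided_of_twistCount_le (hM : IsSignMatrix M) {θ : ℝ} (hθ : 0 ≤ θ) (hθ' : θ ≤ 1)
    (htwist : twistCount M ≤ θ ^ 2 * Fintype.card X ^ 4) :
    IsNearOneSided M (2 * θ * Fintype.card X ^ 2) := by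
  cases isEmpty_or_nonempty X
  · exact .inl ⟨fun _ => 1, fun _ => .inl rfl, by simp [hammingDist]⟩
  obtain ⟨i₀, j₀, havg⟩ := exists_card_sq_mul_sum_twist_le M
  have hbase : ((∑ i, ∑ j, twist M i₀ i j₀ j : ℕ) : ℝ) ≤ (θ * Fintype.card X) ^ 2 := by
    refine le_of_mul_le_mul_left ?_ (show (0 : ℝ) < Fintype.card X ^ 2 by positivity)
    calc (Fintype.card X : ℝ) ^ 2 * (∑ i, ∑ j, twist M i₀ i j₀ j : ℕ) ≤ twistCount M := by
          exact_mod_cast havg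
      _ ≤ θ ^ 2 * Fintype.card X ^ 4 := htwist
      _ = Fintype.card X ^ 2 * (θ * Fintype.card X) ^ 2 := by ring
  have hprod : (#{i | M i j₀ ≠ M i₀ j₀} : ℝ) * #{j | M i₀ j ≠ M i₀ j₀} ≤
      (θ * Fintype.card X) * (θ * Fintype.card X) :=
    calc _ ≤ ((∑ i, ∑ j, twist M i₀ i j₀ j : ℕ) : ℝ) := by
          exact_mod_cast card_mul_card_le_sum_twist hM i₀ j₀
      _ ≤ _ := hbase.trans_eq (sq _)
  have hor : #{i | M i j₀ ≠ M i₀ j₀} ≤ θ * Fintype.card X ∨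
      #{j | M i₀ j ≠ M i₀ j₀} ≤ θ * Fintype.card X := by
    by_contra! h
    exact hprod.not_gt (mul_lt_mul'' h.1 h.2 (by positivity) (by positivity))
  rcases hor with hcol | hrow
  · refine .inr (isNearRowConstant_of_card_le (fun j i => hM i j) hθ hθ' ?_ hcol)
    simp only [twist_transpose]
    rw [sum_comm]
    exact_mod_cast hbase
  · exact .inl (isNearRowConstant_of_card_le hM hθ hθ' (by exact_mod_cast hbase) hrow)

end FewTwists

section Balancing

variable {n : ℕ}

lemma isBalanced_of_card_eq {T : Finset (Fin n)} (hT : #T = n / 2) :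
    IsBalanced n fun i => if i ∈ T then 1 else -1 := by
  refine ⟨fun i => ite_eq_or_eq _ _ _, ?_⟩
  have hpos : ({i | (if i ∈ T then 1 else -1 : ℤ) = 1} : Finset (Fin n)) = T := by grind
  have hneg : ({i | (if i ∈ T then 1 else -1 : ℤ) = -1} : Finset (Fin n)) = Tᶜ := by
    ext i
    by_cases hi : i ∈ T <;> simp [hi]
  rw [hpos, hneg, card_compl, Fintype.card_fin, hT, abs_le]
  omega

lemma exists_isBalanced_hammingDist_le {z : Fin n → ℤ} (hz : ∀ i, z i = 1 ∨ z i = -1) :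
    ∃ z', IsBalanced n z' ∧ (2 * hammingDist z z' : ℤ) ≤ |∑ i, z i| + 2 := by
  set P : Finset (Fin n) := {i | z i = 1}
  have hsum : ∑ i, z i = 2 * #P - n := by simpa using sum_eq_two_mul_card_sub_card hz
  have hle := le_abs_self (∑ i, z i)
  have hneg_le := neg_le_abs (∑ i, z i)
  rcases le_total (n / 2) #P with hhalf | hhalf
  · obtain ⟨T, hT, hcard⟩ := exists_subset_card_eq hhalf
    refine ⟨_, isBalanced_of_card_eq hcard, ?_⟩
    have hdist : hammingDist z (fun i => if i ∈ T then 1 else -1) = #(P \ T) := by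
      rw [hammingDist]
      congr 1
      grind
    rw [hdist, card_sdiff_of_subset hT]
    omega
  · obtain ⟨T, hT, hcard⟩ := exists_superset_card_eq hhalf (by simp; omega)
    refine ⟨_, isBalanced_of_card_eq hcard, ?_⟩
    have hdist : hammingDist z (fun i => if i ∈ T then 1 else -1) = #(T \ P) := by
      rw [hammingDist]
      congr 1
      grind
    rw [hdist, card_sdiff_of_subset hT]
    omega

lemma abs_sum_sub_sum_le_two_mul_hammingDist {X : Type*} [Fintype X] {f g : X → ℤ}
    (hf : ∀ x, f x = 1 ∨ f x = -1) (hg : ∀ x, g x = 1 ∨ g x = -1) :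
    |∑ x, f x - ∑ x, g x| ≤ 2 * hammingDist f g := by
  rw [← sum_sub_distrib, hammingDist, card_filter]
  push_cast
  rw [mul_sum]
  refine (abs_sum_le_sum_abs _ _).trans (sum_le_sum fun x _ => ?_)
  grind [hf x, hg x]

lemma IsNearRowConstant.exists_isBalanced {M : Fin n → Fin n → ℤ} (hM : IsSignMatrix M) {E δ : ℝ}
    (hnear : IsNearRowConstant M E) (hsum : |((∑ i, ∑ j, M i j : ℤ) : ℝ)| ≤ δ * n ^ 2) :
    ∃ z, IsBalanced n z ∧ hammingDist (fun p : Fin n × Fin n => M p.1 p.2) (fun p => z p.1) ≤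
      2 * E + δ / 2 * n ^ 2 + n := by
  obtain ⟨z, hz, hdist⟩ := hnear
  obtain ⟨z', hz', hzz'⟩ := exists_isBalanced_hammingDist_le hz
  refine ⟨z', hz', ?_⟩
  have hrows : hammingDist (fun p : Fin n × Fin n => z p.1) (fun p => z' p.1) =
      n * hammingDist z z' := by
    rw [hammingDist_rows (fun i _ => z i) z']
    simp only [hammingDist, card_filter, sum_const, card_univ, Fintype.card_fin, smul_eq_mul,
      mul_sum]
  have hsum_rows : n * |∑ i, z i| ≤
      |∑ i, ∑ j, M i j| +
        2 * hammingDist (fun p : Fin n × Fin n => M p.1 p.2) (fun p => z p.1) := by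
    have := abs_sum_sub_sum_le_two_mul_hammingDist (f := fun p : Fin n × Fin n => M p.1 p.2)
      (fun p => hM p.1 p.2) (fun p => hz p.1)
    simp only [Fintype.sum_prod_type, sum_const, card_univ, Fintype.card_fin, nsmul_eq_mul,
      ← mul_sum] at this
    rw [← abs_of_nonneg (Nat.cast_nonneg n : (0 : ℤ) ≤ n), ← abs_mul]
    linarith [abs_sub_abs_le_abs_sub (n * ∑ i, z i) (∑ i, ∑ j, M i j),
      abs_sub_comm (n * ∑ i, z i) (∑ i, ∑ j, M i j)]
  have htriangle := hammingDist_triangle (fun p : Fin n × Fin n => M p.1 p.2) (fun p => z p.1)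
    (fun p => z' p.1)
  have hcast : (2 * n * hammingDist z z' : ℝ) ≤ |((∑ i, ∑ j, M i j : ℤ) : ℝ)| +
      2 * hammingDist (fun p : Fin n × Fin n => M p.1 p.2) (fun p => z p.1) + 2 * n := by
    have : (2 * n * hammingDist z z' : ℤ) ≤ |∑ i, ∑ j, M i j| +
        2 * hammingDist (fun p : Fin n × Fin n => M p.1 p.2) (fun p => z p.1) + 2 * n := by
      nlinarith
    exact_mod_cast this
  rw [hrows] at htriangle
  have := (Nat.cast_le (α := ℝ)).2 htriangle
  push_cast at this
  linarith

/-- `M` differs in at most `E` entries from a balanced one-sided signing. -/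
def IsNearBalancedOneSided (M : Fin n → Fin n → ℤ) (E : ℝ) : Prop :=
  ∃ z, IsBalanced n z ∧
    (hammingDist (fun p : Fin n × Fin n => M p.1 p.2) (fun p => z p.1) ≤ E ∨
      hammingDist (fun p : Fin n × Fin n => M p.1 p.2) (fun p => z p.2) ≤ E)

lemma IsNearBalancedOneSided.mono {M : Fin n → Fin n → ℤ} {E E' : ℝ} (h : E ≤ E') :
    IsNearBalancedOneSided M E → IsNearBalancedOneSided M E' :=
  fun ⟨z, hz, hd⟩ => ⟨z, hz, hd.imp h.trans' h.trans'⟩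

lemma IsNearOneSided.isNearBalancedOneSided {M : Fin n → Fin n → ℤ} (hM : IsSigning n M)
    {E δ : ℝ} (hnear : IsNearOneSided M E)
    (hsum : |((∑ i, ∑ j, M i j : ℤ) : ℝ)| ≤ δ * n ^ 2) :
    IsNearBalancedOneSided M (2 * E + δ / 2 * n ^ 2 + n) := by
  rcases hnear with hrow | hcol
  · obtain ⟨z, hz, hdist⟩ := hrow.exists_isBalanced hM hsum
    exact ⟨z, hz, .inl hdist⟩
  · obtain ⟨z, hz, hdist⟩ := hcol.exists_isBalanced (fun j i => hM i j) (by rwa [sum_comm])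
    refine ⟨z, hz, .inr (le_of_eq_of_le ?_ hdist)⟩
    rw [Nat.cast_inj]
    refine card_equiv (Equiv.prodComm _ _) ?_
    simp

end Balancing

section Dichotomy

lemma hasFactorization_or_isNearOneSided {X : Type*} [Fintype X] {M : X → X → ℤ}
    (hM : IsSignMatrix M) {θ : ℝ} (hθ : 0 < θ) (hθ' : θ ≤ 1) {m : ℕ} (hm : 1 < m)
    (hgrowth : m + 1 < (1 + θ ^ 2 / 4 / 2) ^ ⌊θ ^ 2 / 4 / 4 * m⌋₊) (hlarge : 129 ≤ θ ^ 2 * m)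
    (hX : Fintype.card X = 2 * m ∨ Fintype.card X = 2 * m + 1) :
    HasFactorization M (θ ^ 2 / 32 * Fintype.card X) ∨
      IsNearOneSided M (2 * θ * Fintype.card X ^ 2 + 2 * Fintype.card X) := by
  have : Fact (1 < m) := ⟨hm⟩
  have : NeZero m := ⟨by omega⟩
  obtain ⟨τ, hτ⟩ := exists_isDoubling m
  have hθsq : θ ^ 2 ≤ 1 := pow_le_one₀ hθ.le hθ'
  have hcard : Fintype.card (ZMod m × Bool) = 2 * m := by simp [ZMod.card, mul_comm]
  rcases hX with hX | hX
  · obtain ⟨e⟩ : Nonempty (ZMod m × Bool ≃ X) := Fintype.card_eq.1 (by rw [hcard, hX])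
    rcases le_total (θ ^ 2 * Fintype.card (ZMod m × Bool) ^ 4)
      (twistCount fun i j => M (e i) (e j)) with htwist | htwist
    · refine .inl (.mono ?_ (.of_relabel e e (hasFactorization_of_le_twistCount
        (fun i j => hM _ _) hτ (by positivity) (by simpa using hgrowth) htwist)))
      simp only [ZMod.card, hX]
      push_cast
      linarith
    · refine .inr (.mono ?_ (.of_relabel e (isNearOneSided_of_twistCount_le
        (fun i j => hM _ _) hθ.le hθ' htwist)))
      rw [hcard, hX]
      simp
  · obtain ⟨e⟩ : Nonempty (Option (ZMod m × Bool) ≃ X) :=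
      Fintype.card_eq.1 (by rw [Fintype.card_option, hcard, hX])
    rcases le_total (θ ^ 2 * Fintype.card (ZMod m × Bool) ^ 4)
      (twistCount fun i j => M (e (some i)) (e (some j))) with htwist | htwist
    · refine .inl (.mono ?_ (.of_relabel e e (hasFactorization_option_of_le_twistCount
        (fun i j => hM _ _) hτ (by positivity) (by simpa using hgrowth) htwist)))
      simp only [ZMod.card, hX]
      push_cast
      linarith
    · refine .inr (.mono ?_ (.of_relabel e (.option (isNearOneSided_of_twistCount_le
        (fun i j => hM _ _) hθ.le hθ' htwist))))
      rw [hcard, hX]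
      push_cast
      nlinarith

lemma eventually_hasFactorization_or_isNearOneSided {θ : ℝ} (hθ : 0 < θ) (hθ' : θ ≤ 1) :
    ∀ᶠ n : ℕ in atTop, ∀ M : Fin n → Fin n → ℤ, IsSigning n M →
      HasFactorization M (θ ^ 2 / 32 * n) ∨ IsNearOneSided M (2 * θ * n ^ 2 + 2 * n) := by
  have hθsq : 0 < θ ^ 2 := by positivity
  have hhalf : Tendsto (fun n => n / 2) atTop atTop := Nat.tendsto_div_const_atTop two_ne_zero
  filter_upwards [hhalf.eventually (Filter.eventually_gt_atTop 1),
    hhalf.eventually (eventually_succ_lt_pow_floor (η := θ ^ 2 / 4) (by positivity)),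
    hhalf.eventually (tendsto_natCast_atTop_atTop.eventually_ge_atTop (129 / θ ^ 2))]
    with n hm hgrowth hlarge M hM
  rw [div_le_iff₀' hθsq] at hlarge
  simpa using hasFactorization_or_isNearOneSided hM hθ hθ' hm hgrowth hlarge (by simp; omega)

lemma eventually_hasFactorization_of_le_abs_sum {δ : ℝ} (hδ : 0 < δ) :
    ∀ᶠ n : ℕ in atTop, ∀ M : Fin n → Fin n → ℤ, IsSigning n M →
      δ * n ^ 2 ≤ |((∑ i, ∑ j, M i j : ℤ) : ℝ)| → HasFactorization M (δ / 2 * n) := by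
  filter_upwards [Filter.eventually_gt_atTop 0,
    eventually_succ_lt_pow_floor (η := δ / 4) (by positivity)] with n hn hgrowth M hM hsum
  have : NeZero n := ⟨hn.ne'⟩
  simpa using hasFactorization_of_le_abs_sum hM hδ
    (by rw [Fintype.card_fin]; linarith) (by rwa [Fintype.card_fin])

lemma eventually_hasFactorization_or_isNearBalancedOneSided {ε : ℝ} (hε : 0 < ε) (hε' : ε ≤ 1) :
    ∀ᶠ n : ℕ in atTop, ∀ M : Fin n → Fin n → ℤ, IsSigning n M →
      HasFactorization M (ε ^ 2 / 2048 * n) ∨ IsNearBalancedOneSided M (ε * n ^ 2) := by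
  filter_upwards [eventually_hasFactorization_or_isNearOneSided (θ := ε / 8) (by positivity)
      (by linarith), eventually_hasFactorization_of_le_abs_sum (δ := ε / 2) (by positivity),
    tendsto_natCast_atTop_atTop.eventually_ge_atTop (20 / ε)] with n hdich hlarge hn M hM
  rw [div_le_iff₀' hε] at hn
  rcases le_total (ε / 2 * n ^ 2) |((∑ i, ∑ j, M i j : ℤ) : ℝ)| with hsum | hsum
  · refine .inl ((hlarge M hM hsum).mono (mul_le_mul_of_nonneg_right ?_ (Nat.cast_nonneg n)))
    nlinarith
  · refine (hdich M hM).imp (.mono (le_of_eq (by ring))) fun hnear =>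
      (hnear.isNearBalancedOneSided hM hsum).mono ?_
    nlinarith [mul_le_mul_of_nonneg_right hn (Nat.cast_nonneg (α := ℝ) n)]

end Dichotomy

end BipartiteDiscrepancy

theorem bipartite_discrepancy_dichotomy :
    ∀ ε : ℝ, 0 < ε → ε ≤ 1 →
    ∃ c : ℝ, c ≥ ε ^ 4 / 640000 ∧
    ∃ n₀ : ℕ, ∀ n : ℕ, n₀ ≤ n →
    ∀ M : Fin n → Fin n → ℤ, IsSigning n M →
      (∃ π : Fin n → Equiv.Perm (Fin n), IsOneFactorization n π ∧
        ∀ t : Fin n, |(∑ i, (M i (π t i) : ℝ))| ≥ c * n) ∨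
      (∃ z : Fin n → ℤ, IsBalanced n z ∧
        (((univ ×ˢ univ).filter fun p : Fin n × Fin n => M p.1 p.2 ≠ z p.1).card
            ≤ ε * n ^ 2 ∨
         ((univ ×ˢ univ).filter fun p : Fin n × Fin n => M p.1 p.2 ≠ z p.2).card
            ≤ ε * n ^ 2)) := by
  intro ε hε hε'
  have hc : ε ^ 2 / 2048 ≥ ε ^ 4 / 640000 := by
    have : ε ^ 4 ≤ ε ^ 2 := pow_le_pow_of_le_one hε.le hε' (by norm_num)
    linarith [sq_nonneg ε]
  obtain ⟨n₀, hn₀⟩ := Filter.eventually_atTop.1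
    (BipartiteDiscrepancy.eventually_hasFactorization_or_isNearBalancedOneSided hε hε')
  exact ⟨ε ^ 2 / 2048, hc, n₀, fun n hn M hM =>
    (hn₀ n hn M hM).imp (·.exists_isOneFactorization) id⟩
end

section
/- There exists n₀ such that for all n ≥ n₀ the following holds: for every signing M of K_{n,n}, if the total discrepancy c = disc(M) satisfies c > 0, then there exists a 1-factorization (π_t)_{t : Fin n} of K_{n,n} such that for every t, | |∑ i, M i (π_t i)| / n − c | ≤ 6·n^(−1/4). -/
open Finset

/-- The total discrepancy of the signing `M`. -/
noncomputable def totalDisc (n : ℕ) (M : Fin n → Fin n → ℤ) : ℝ :=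
  |(∑ i, ∑ j, (M i j : ℝ))| / n ^ 2

/-! Relabel one side of the cyclic 1-factorization by a uniformly random permutation `τ`: each of
its matchings becomes a uniformly random perfect matching. The deviation `D` of the sum along such a
matching from its mean has fourth moment `O(n ^ 2)`, so for some `τ` the `n` fourth powers of the
deviations add up to `O(n ^ 3)`, and each deviation is `O(n ^ (3 / 4))`.

The moments come from Stein's method of exchangeable pairs: composing `π` with a transposition
`swap i j` changes `D π` by a bounded amount, and the changes `D π - D (π * swap i j)` add up to
`2 * n * D π` over all `i` and `j`. -/

open scoped BigOperators

section Involution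

variable {α : Type*} [Fintype α] {e : α → α}

lemma two_mul_expect_sub_comp_mul (he : Function.Involutive e) (f g : α → ℝ) :
    2 * 𝔼 x, (f x - f (e x)) * g x = 𝔼 x, (f x - f (e x)) * (g x - g (e x)) := by
  have hswap : 𝔼 x, (f x - f (e x)) * g x = 𝔼 x, (f (e x) - f x) * g (e x) :=
    Fintype.expect_equiv he.toPerm _ _ fun x => by simp [he x]
  calc
    2 * 𝔼 x, (f x - f (e x)) * g x
        = 𝔼 x, (f x - f (e x)) * g x + 𝔼 x, (f (e x) - f x) * g (e x) := by rw [two_mul, ← hswap]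
    _ = 𝔼 x, (f x - f (e x)) * (g x - g (e x)) := by
      rw [← expect_add_distrib]
      exact expect_congr rfl fun x _ => by ring

variable {f : α → ℝ} {c : ℝ}

lemma expect_sub_comp_mul_self_le [Nonempty α] (he : Function.Involutive e)
    (hf : ∀ x, |f x - f (e x)| ≤ c) : 𝔼 x, (f x - f (e x)) * f x ≤ c ^ 2 / 2 := by
  have hsq : 𝔼 x, (f x - f (e x)) * (f x - f (e x)) ≤ c ^ 2 :=
    expect_le univ_nonempty fun x _ => by
      rw [← sq]
      exact sq_le_sq' (abs_le.mp (hf x)).1 (abs_le.mp (hf x)).2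
  linarith [two_mul_expect_sub_comp_mul he f f]

lemma expect_sub_comp_mul_cube_le (he : Function.Involutive e)
    (hf : ∀ x, |f x - f (e x)| ≤ c) :
    𝔼 x, (f x - f (e x)) * f x ^ 3 ≤ 3 / 2 * c ^ 2 * 𝔼 x, f x ^ 2 := by
  have hpoint (x : α) : (f x - f (e x)) * (f x ^ 3 - f (e x) ^ 3) ≤
      3 / 2 * c ^ 2 * (f x ^ 2 + f (e x) ^ 2) := by
    have hsq : (f x - f (e x)) ^ 2 ≤ c ^ 2 := sq_le_sq' (abs_le.mp (hf x)).1 (abs_le.mp (hf x)).2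
    calc
      (f x - f (e x)) * (f x ^ 3 - f (e x) ^ 3)
          = (f x - f (e x)) ^ 2 * (f x ^ 2 + f x * f (e x) + f (e x) ^ 2) := by ring
      _ ≤ (f x - f (e x)) ^ 2 * (3 / 2 * (f x ^ 2 + f (e x) ^ 2)) := by
        gcongr
        linarith [two_mul_le_add_sq (f x) (f (e x))]
      _ ≤ c ^ 2 * (3 / 2 * (f x ^ 2 + f (e x) ^ 2)) := by gcongr
      _ = 3 / 2 * c ^ 2 * (f x ^ 2 + f (e x) ^ 2) := by ring
  have hcomp : 𝔼 x, f (e x) ^ 2 = 𝔼 x, f x ^ 2 :=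
    Fintype.expect_equiv he.toPerm _ _ fun _ => rfl
  have hsum : 𝔼 x, (f x - f (e x)) * (f x ^ 3 - f (e x) ^ 3) ≤
      3 / 2 * c ^ 2 * (𝔼 x, f x ^ 2 + 𝔼 x, f (e x) ^ 2) := by
    rw [← expect_add_distrib, mul_expect]
    exact expect_le_expect fun x _ => hpoint x
  rw [hcomp] at hsum
  linarith [two_mul_expect_sub_comp_mul he f (f · ^ 3)]

end Involution

section RandomMatching

variable {ι : Type*} [Fintype ι]

/-- The deviation of the sum of the weights `A` along the perfect matching `π` of `K_{ι,ι}` from its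
mean over all perfect matchings. The mean is written explicitly, as the sum of all the entries
divided by the number of rows. -/
noncomputable def matchingDeviation (A : ι → ι → ℝ) (π : Equiv.Perm ι) : ℝ :=
  ∑ i, A i (π i) - (∑ i, ∑ j, A i j) / Fintype.card ι

variable [DecidableEq ι] (A : ι → ι → ℝ)

lemma matchingDeviation_sub_mul_swap (π : Equiv.Perm ι) (i j : ι) :
    matchingDeviation A π - matchingDeviation A (π * Equiv.swap i j) =
      A i (π i) + A j (π j) - A i (π j) - A j (π i) := by
  obtain rfl | hij := eq_or_ne i j
  · simp [← Equiv.Perm.one_def]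
  have hfix : ∀ k ∈ univ, k ∉ ({i, j} : Finset ι) →
      A k (π k) - A k ((π * Equiv.swap i j) k) = 0 := by
    intro k _ hk
    simp only [mem_insert, mem_singleton, not_or] at hk
    rw [Equiv.Perm.mul_apply, Equiv.swap_apply_of_ne_of_ne hk.1 hk.2, sub_self]
  calc
    matchingDeviation A π - matchingDeviation A (π * Equiv.swap i j)
        = ∑ k, (A k (π k) - A k ((π * Equiv.swap i j) k)) := by
      simp only [matchingDeviation, sub_sub_sub_cancel_right, sum_sub_distrib]
    _ = ∑ k ∈ {i, j}, (A k (π k) - A k ((π * Equiv.swap i j) k)) :=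
      (sum_subset (subset_univ _) hfix).symm
    _ = A i (π i) + A j (π j) - A i (π j) - A j (π i) := by
      rw [sum_pair hij]
      simp only [Equiv.Perm.mul_apply, Equiv.swap_apply_left, Equiv.swap_apply_right]
      ring

lemma sum_matchingDeviation_sub_mul_swap (π : Equiv.Perm ι) :
    ∑ i, ∑ j, (matchingDeviation A π - matchingDeviation A (π * Equiv.swap i j)) =
      2 * Fintype.card ι * matchingDeviation A π := by
  cases isEmpty_or_nonempty ι
  · simp
  have hcol : ∑ i, ∑ j, A i (π j) = ∑ i, ∑ j, A i j :=
    sum_congr rfl fun i _ => Equiv.sum_comp π (A i)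
  have hrow : ∑ i, ∑ j, A j (π i) = ∑ i, ∑ j, A i j := sum_comm.trans hcol
  simp only [matchingDeviation_sub_mul_swap]
  simp only [sum_sub_distrib, sum_add_distrib, hcol, hrow, sum_const, card_univ, nsmul_eq_mul,
    ← mul_sum, matchingDeviation]
  field_simp
  ring

variable {A}

lemma expect_matchingDeviation_mul_le {g : Equiv.Perm ι → ℝ} {C : ℝ}
    (hg : ∀ i j,
      𝔼 π, (matchingDeviation A π - matchingDeviation A (π * Equiv.swap i j)) * g π ≤ C) :
    𝔼 π, matchingDeviation A π * g π ≤ Fintype.card ι / 2 * C := by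
  cases isEmpty_or_nonempty ι
  · simp [matchingDeviation]
  have hcard : (0 : ℝ) < 2 * Fintype.card ι := by positivity
  refine le_of_mul_le_mul_left ?_ hcard
  calc
    2 * Fintype.card ι * 𝔼 π, matchingDeviation A π * g π
        = 𝔼 π, ∑ i, ∑ j,
            (matchingDeviation A π - matchingDeviation A (π * Equiv.swap i j)) * g π := by
      simp only [← sum_mul, sum_matchingDeviation_sub_mul_swap, mul_expect, mul_assoc]
    _ = ∑ i, ∑ j, 𝔼 π,
          (matchingDeviation A π - matchingDeviation A (π * Equiv.swap i j)) * g π := by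
      simp only [expect_sum_comm]
    _ ≤ ∑ _i : ι, ∑ _j : ι, C := sum_le_sum fun i _ => sum_le_sum fun j _ => hg i j
    _ = 2 * Fintype.card ι * (Fintype.card ι / 2 * C) := by
      simp only [sum_const, card_univ, nsmul_eq_mul]
      ring

variable {K : ℝ}

lemma abs_matchingDeviation_sub_mul_swap_le (hA : ∀ i j, |A i j| ≤ K) (i j : ι)
    (π : Equiv.Perm ι) :
    |matchingDeviation A π - matchingDeviation A (π * Equiv.swap i j)| ≤ 4 * K := by
  rw [matchingDeviation_sub_mul_swap, abs_le]
  have hii := abs_le.mp (hA i (π i))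
  have hjj := abs_le.mp (hA j (π j))
  have hij := abs_le.mp (hA i (π j))
  have hji := abs_le.mp (hA j (π i))
  constructor <;> linarith

lemma expect_matchingDeviation_sq_le (hA : ∀ i j, |A i j| ≤ K) :
    𝔼 π, matchingDeviation A π ^ 2 ≤ 4 * K ^ 2 * Fintype.card ι :=
  calc
    𝔼 π, matchingDeviation A π ^ 2
        = 𝔼 π, matchingDeviation A π * matchingDeviation A π := by simp only [sq]
    _ ≤ Fintype.card ι / 2 * ((4 * K) ^ 2 / 2) :=
      expect_matchingDeviation_mul_le fun i j =>
        expect_sub_comp_mul_self_le (Equiv.mul_swap_involutive i j)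
          (abs_matchingDeviation_sub_mul_swap_le hA i j)
    _ = 4 * K ^ 2 * Fintype.card ι := by ring

lemma expect_matchingDeviation_pow_four_le (hA : ∀ i j, |A i j| ≤ K) :
    𝔼 π, matchingDeviation A π ^ 4 ≤ 48 * K ^ 4 * (Fintype.card ι : ℝ) ^ 2 :=
  calc
    𝔼 π, matchingDeviation A π ^ 4
        = 𝔼 π, matchingDeviation A π * matchingDeviation A π ^ 3 := by simp only [← pow_succ']
    _ ≤ Fintype.card ι / 2 * (3 / 2 * (4 * K) ^ 2 * 𝔼 π, matchingDeviation A π ^ 2) :=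
      expect_matchingDeviation_mul_le fun i j =>
        expect_sub_comp_mul_cube_le (Equiv.mul_swap_involutive i j)
          (abs_matchingDeviation_sub_mul_swap_le hA i j)
    _ ≤ Fintype.card ι / 2 * (3 / 2 * (4 * K) ^ 2 * (4 * K ^ 2 * Fintype.card ι)) := by
      gcongr
      exact expect_matchingDeviation_sq_le hA
    _ = 48 * K ^ 4 * (Fintype.card ι : ℝ) ^ 2 := by ring

end RandomMatching

lemma exists_forall_matchingDeviation_mul_pow_four_le {ι κ : Type*} [Fintype ι] [Fintype κ]
    {A : ι → ι → ℝ} {K : ℝ} (hA : ∀ i j, |A i j| ≤ K) (σ : κ → Equiv.Perm ι) :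
    ∃ τ : Equiv.Perm ι, ∀ t, matchingDeviation A (τ * σ t) ^ 4 ≤
      Fintype.card κ * (48 * K ^ 4 * (Fintype.card ι : ℝ) ^ 2) := by
  classical
  have hinv (t : κ) :
      𝔼 τ, matchingDeviation A (τ * σ t) ^ 4 = 𝔼 π, matchingDeviation A π ^ 4 :=
    Fintype.expect_equiv (Equiv.mulRight (σ t)) _ _ fun _ => rfl
  have htotal : 𝔼 τ, ∑ t, matchingDeviation A (τ * σ t) ^ 4 ≤
      Fintype.card κ * (48 * K ^ 4 * (Fintype.card ι : ℝ) ^ 2) := by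
    simp only [expect_sum_comm, hinv, sum_const, card_univ, nsmul_eq_mul]
    gcongr
    exact expect_matchingDeviation_pow_four_le hA
  obtain ⟨τ, -, hτ⟩ := exists_le_of_expect_le univ_nonempty htotal
  exact ⟨τ, fun t => (single_le_sum (fun _ _ => by positivity) (mem_univ t)).trans hτ⟩

lemma isOneFactorization_addRight (n : ℕ) [NeZero n] :
    IsOneFactorization n Equiv.addRight :=
  fun i j => ⟨j - i, by simp, fun t ht => by simp [← ht]⟩

lemma IsOneFactorization.mul_left {n : ℕ} {π : Fin n → Equiv.Perm (Fin n)}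
    (hπ : IsOneFactorization n π) (τ : Equiv.Perm (Fin n)) :
    IsOneFactorization n fun t => τ * π t := fun i j => by
  simpa only [Equiv.Perm.mul_apply, ← Equiv.eq_symm_apply] using hπ i (τ.symm j)

lemma IsSigning.abs_le_one {n : ℕ} {M : Fin n → Fin n → ℤ} (hM : IsSigning n M) (i j : Fin n) :
    |(M i j : ℝ)| ≤ 1 := by
  rcases hM i j with h | h <;> simp [h]

lemma abs_abs_div_sub_totalDisc_le (n : ℕ) (M : Fin n → Fin n → ℤ) (s : ℝ) :
    |(|s| / n - totalDisc n M)| ≤ |s / n - (∑ i, ∑ j, (M i j : ℝ)) / n ^ 2| := by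
  have hs : |s| / n = |s / n| := by rw [abs_div, Nat.abs_cast]
  have htotal : totalDisc n M = |(∑ i, ∑ j, (M i j : ℝ)) / n ^ 2| := by
    rw [totalDisc, abs_div, abs_pow, Nat.abs_cast]
  rw [hs, htotal]
  exact abs_abs_sub_abs_le _ _

lemma abs_div_le_of_pow_four_le {x K N : ℝ} (hK : 0 ≤ K) (hN : 0 < N)
    (hx : x ^ 4 ≤ 81 * K ^ 4 * N ^ 3) : |x / N| ≤ 3 * K * N ^ (-(1 / 4 : ℝ)) := by
  have hroot : (N ^ (-(1 / 4 : ℝ))) ^ 4 = N⁻¹ := by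
    rw [← Real.rpow_mul_natCast hN.le, ← Real.rpow_neg_one]
    norm_num
  refine le_of_pow_le_pow_left₀ four_ne_zero (by positivity) ?_
  calc
    |x / N| ^ 4 = x ^ 4 / N ^ 4 := by rw [Even.pow_abs (by decide), div_pow]
    _ ≤ 81 * K ^ 4 * N ^ 3 / N ^ 4 := by gcongr
    _ = 81 * K ^ 4 * N⁻¹ := by field_simp
    _ = (3 * K * N ^ (-(1 / 4 : ℝ))) ^ 4 := by
      rw [mul_pow, hroot]
      ring

theorem high_discrepancy_case_general {n : ℕ} [NeZero n] {A : Fin n → Fin n → ℝ} {K : ℝ}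
    (hA : ∀ i j, |A i j| ≤ K) :
    ∃ π : Fin n → Equiv.Perm (Fin n), IsOneFactorization n π ∧
      ∀ t : Fin n, |(∑ i, A i (π t i)) / n - (∑ i, ∑ j, A i j) / n ^ 2| ≤
        3 * K * (n : ℝ) ^ (-(1 / 4 : ℝ)) := by
  obtain ⟨τ, hτ⟩ := exists_forall_matchingDeviation_mul_pow_four_le hA Equiv.addRight
  refine ⟨_, (isOneFactorization_addRight n).mul_left τ, fun t => ?_⟩
  have hn : (0 : ℝ) < n := Nat.cast_pos.mpr (NeZero.pos n)
  have hK : 0 ≤ K := (abs_nonneg _).trans (hA 0 0)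
  have hpow : matchingDeviation A (τ * Equiv.addRight t) ^ 4 ≤ 81 * K ^ 4 * (n : ℝ) ^ 3 :=
    calc
      matchingDeviation A (τ * Equiv.addRight t) ^ 4 ≤ n * (48 * K ^ 4 * (n : ℝ) ^ 2) := by
        simpa only [Fintype.card_fin] using hτ t
      _ = 48 * K ^ 4 * (n : ℝ) ^ 3 := by ring
      _ ≤ 81 * K ^ 4 * (n : ℝ) ^ 3 := by
        gcongr
        norm_num
  have hdev := abs_div_le_of_pow_four_le hK hn hpow
  rwa [matchingDeviation, Fintype.card_fin, sub_div, div_div, ← sq] at hdev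

theorem high_discrepancy_case :
    ∃ n₀ : ℕ, ∀ n : ℕ, n₀ ≤ n →
    ∀ M : Fin n → Fin n → ℤ, IsSigning n M →
    0 < totalDisc n M →
    ∃ π : Fin n → Equiv.Perm (Fin n), IsOneFactorization n π ∧
      ∀ t : Fin n,
        |(|(∑ i, (M i (π t i) : ℝ))| / n - totalDisc n M)| ≤
          6 * (n : ℝ) ^ (-(1 / 4 : ℝ)) := by
  refine ⟨1, fun n hn M hM _ => ?_⟩
  have : NeZero n := ⟨by lia⟩
  obtain ⟨π, hπ, hdev⟩ := high_discrepancy_case_general hM.abs_le_one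
  refine ⟨π, hπ, fun t => (abs_abs_div_sub_totalDisc_le n M _).trans ((hdev t).trans ?_)⟩
  gcongr
  norm_num
end

section
/- For every real η > 0 there exists n₀ such that for all n ≥ n₀ the following holds: for every signing M of K_{n,n}, if s(M) ≥ η·n⁴ then there exists a 1-factorization (π_t)_{t : Fin n} of K_{n,n} such that for every t, |∑ i, M i (π_t i)| ≥ (η/8 − 3/n)·n. -/
open Finset

/-- `s(M)`: the number of switchers of `M`, i.e. quadruples `(a, c, b, d)`
with `a < c`, `b < d` and `M a b + M c d ≠ M a d + M c b`. -/
def switcherCount (n : ℕ) (M : Fin n → Fin n → ℤ) : ℕ :=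
  (univ.filter fun p : Fin n × Fin n × Fin n × Fin n =>
    p.1 < p.2.1 ∧ p.2.2.1 < p.2.2.2 ∧
      M p.1 p.2.2.1 + M p.2.1 p.2.2.2 ≠ M p.1 p.2.2.2 + M p.2.1 p.2.2.1).card

/-!
Fix `z` and `w` and consider the pairs of rows with sum `z` and the pairs of columns with sum `w`,
modulo `n`. Both families are matchings, so their pairs cut out disjoint `2 × 2` blocks of `M`, and
for a suitable choice of `z` and `w` many of these blocks are switchers. Keep at most `n / 4` pairs
on either side.

Colour the blocks properly as cells of a board, once for each of their two diagonals. This makes the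
blocks into a Latin array which, being small enough, extends to a Latin square of order `n` by
Ryser's theorem; the cells of a symbol are the perfect matchings of the 1-factorization. Exchanging
the two diagonals of a block keeps the square Latin, and when the block is a switcher it changes the
sums of `M` over two of the matchings by at least `2`. If every symbol owns enough switchers, these
exchanges move all the sums away from `0`: at most two intervals of bad values have to be avoided
at a time, and the sums move in steps of length at most `4`.
-/

section EdgeColoring

variable {A B : Type*} [Fintype A] [Fintype B]

lemma exists_equiv_ne_zero_of_regular {q : ℕ} (hq : 0 < q) {N : A → B → ℕ}
    (hrow : ∀ a, ∑ b, N a b = q) (hcol : ∀ b, ∑ a, N a b = q) :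
    ∃ e : A ≃ B, ∀ a, N a (e a) ≠ 0 := by
  classical
  have hcard : Fintype.card A = Fintype.card B := by
    have hsum : ∑ a, ∑ b, N a b = ∑ b, ∑ a, N a b := sum_comm
    simp only [hrow, hcol, sum_const, smul_eq_mul, card_univ] at hsum
    exact Nat.eq_of_mul_eq_mul_right hq hsum
  let nbr : A → Finset B := fun a => {b | N a b ≠ 0}
  have hall : ∀ s : Finset A, #s ≤ #(s.biUnion nbr) := by
    intro s
    refine Nat.le_of_mul_le_mul_right ?_ hq
    calc #s * q = ∑ a ∈ s, ∑ b, N a b := by simp [hrow]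
      _ = ∑ a ∈ s, ∑ b ∈ s.biUnion nbr, N a b := by
        refine sum_congr rfl fun a ha => (sum_subset (subset_univ _) fun b _ hb => ?_).symm
        by_contra hN
        exact hb (mem_biUnion.2 ⟨a, ha, by simpa [nbr] using hN⟩)
      _ = ∑ b ∈ s.biUnion nbr, ∑ a ∈ s, N a b := sum_comm
      _ ≤ ∑ b ∈ s.biUnion nbr, ∑ a, N a b :=
        sum_le_sum fun b _ => sum_le_sum_of_subset (subset_univ s)
      _ = #(s.biUnion nbr) * q := by simp [hcol]
  obtain ⟨f, hf, hN⟩ := (all_card_le_biUnion_card_iff_exists_injective nbr).1 hall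
  refine ⟨Equiv.ofBijective f ((Fintype.bijective_iff_injective_and_card f).2 ⟨hf, hcard⟩),
    fun a => ?_⟩
  simpa [nbr] using hN a

/-- König's edge-colouring theorem for regular bipartite multigraphs; `N a b` is the number of
parallel edges between `a` and `b`. -/
lemma exists_equivs_of_regular [DecidableEq B] {q : ℕ} {N : A → B → ℕ}
    (hrow : ∀ a, ∑ b, N a b = q) (hcol : ∀ b, ∑ a, N a b = q) :
    ∃ σ : Fin q → A ≃ B, ∀ a b, N a b = #{k | σ k a = b} := by
  induction q generalizing N with
  | zero =>
    have hN : ∀ a b, N a b = 0 := fun a b => sum_eq_zero_iff.1 (hrow a) b (mem_univ b)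
    exact ⟨Fin.elim0, by simp [hN]⟩
  | succ q ih =>
    classical
    obtain ⟨e, he⟩ := exists_equiv_ne_zero_of_regular q.succ_pos hrow hcol
    let P : A → B → ℕ := fun a b => if e a = b then 1 else 0
    have hPN : ∀ a b, P a b ≤ N a b := by
      intro a b
      by_cases h : e a = b
      · simpa [P, h] using Nat.one_le_iff_ne_zero.2 (h ▸ he a)
      · simp [P, h]
    have hProw : ∀ a, ∑ b, P a b = 1 := by simp [P]
    have hPcol : ∀ b, ∑ a, P a b = 1 := by simp [P, ← Equiv.eq_symm_apply]
    obtain ⟨σ, hσ⟩ := ih (N := fun a b => N a b - P a b)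
      (fun a => by rw [sum_tsub_distrib _ fun b _ => hPN a b, hrow, hProw, Nat.add_sub_cancel])
      (fun b => by rw [sum_tsub_distrib _ fun a _ => hPN a b, hcol, hPcol, Nat.add_sub_cancel])
    refine ⟨Fin.cons e σ, fun a b => ?_⟩
    have hsub := hσ a b
    rw [card_filter] at hsub
    rw [card_filter, Fin.sum_univ_succ]
    simp only [Fin.cons_zero, Fin.cons_succ, ← hsub]
    exact (Nat.add_sub_cancel' (hPN a b)).symm

lemma exists_injective_equivs_of_regular {K : Type*} [Fintype K] {N : A → B → ℕ}
    (hrow : ∀ a, ∑ b, N a b = Fintype.card K) (hcol : ∀ b, ∑ a, N a b = Fintype.card K) :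
    ∃ σ : K → A ≃ B, (∀ k a, N a (σ k a) ≠ 0) ∧
      ∀ a, (∀ b, N a b ≤ 1) → Function.Injective fun k => σ k a := by
  classical
  obtain ⟨σ, hσ⟩ := exists_equivs_of_regular hrow hcol
  let index := Fintype.equivFin K
  refine ⟨fun k => σ (index k), fun k a => ?_, fun a ha k l hkl => index.injective ?_⟩
  · rw [hσ, Finset.card_ne_zero]
    exact ⟨index k, by simp⟩
  · refine card_le_one.1 ((hσ a (σ (index k) a)).symm.trans_le (ha _)) _ ?_ _ ?_
    · simp
    · simpa using hkl.symm

lemma exists_matrix_of_row_col_sums {r : A → ℕ} {c : B → ℕ} (h : ∑ a, r a = ∑ b, c b) :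
    ∃ N : A → B → ℕ, (∀ a, ∑ b, N a b = r a) ∧ ∀ b, ∑ a, N a b = c b := by
  classical
  let e : (Σ a, Fin (r a)) ≃ Σ b, Fin (c b) := Fintype.equivOfCardEq (by simpa using h)
  refine ⟨fun a b => ∑ k, if (e ⟨a, k⟩).1 = b then 1 else 0, fun a => ?_, fun b => ?_⟩
  · rw [sum_comm]
    simp
  · rw [← Fintype.sum_sigma' (fun a k => if (e ⟨a, k⟩).1 = b then 1 else 0),
      Equiv.sum_comp e (fun x => if x.1 = b then 1 else 0), Fintype.sum_sigma]
    simp [apply_ite Finset.card]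

end EdgeColoring

/-- A Latin array: an array in which no symbol occurs twice in a row or twice in a column. It is a
Latin square when rows, columns and symbols are equinumerous. -/
structure IsLatin {A B T : Type*} (L : A → B → T) : Prop where
  row_injective : ∀ a, Function.Injective (L a)
  col_injective : ∀ b, Function.Injective fun a => L a b

namespace IsLatin

section Extension

variable {R C A B T : Type*}

lemma swap {L : R → C → T} (h : IsLatin L) : IsLatin (Function.swap L) :=
  ⟨h.col_injective, h.row_injective⟩

variable [Fintype C] [Fintype T]

lemma card_notMem_row_add [DecidableEq T] {f : R → C → T} (hf : IsLatin f) (r : R) :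
    #{t | ∀ c, f r c ≠ t} + Fintype.card C = Fintype.card T := by
  classical
  have himage : ({t | ∀ c, f r c ≠ t} : Finset T) = (univ.image (f r))ᶜ := by ext; simp
  rw [himage, ← card_univ (α := C), ← card_image_of_injective univ (hf.row_injective r),
    card_compl_add_card]

variable [Fintype R] [Fintype B]

/-- Ryser's extension step: the new columns are the perfect matchings of a regular bipartite
multigraph between rows and symbols, in which an old row is joined to the symbols it misses. -/
lemma exists_sumElim [DecidableEq T] {f : R → C → T} (hf : IsLatin f)
    (hcard : Fintype.card C + Fintype.card B = Fintype.card T)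
    (hmiss : ∀ t, #{r | ∀ c, f r c ≠ t} ≤ Fintype.card B) :
    ∃ g : R → B → T, IsLatin fun r => Sum.elim (f r) (g r) := by
  have hrow : ∀ r, #{t | ∀ c, f r c ≠ t} = Fintype.card B := fun r => by
    have := hf.card_notMem_row_add r
    lia
  have hdouble : ∑ t, #{r | ∀ c, f r c ≠ t} = Fintype.card R * Fintype.card B := by
    simpa [bipartiteAbove, bipartiteBelow, hrow] using
      (sum_card_bipartiteAbove_eq_sum_card_bipartiteBelow (s := univ) (t := univ)
        (fun (r : R) (t : T) => ∀ c, f r c ≠ t)).symm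
  obtain ⟨Z, hZrow, hZcol⟩ := exists_matrix_of_row_col_sums
    (r := fun _ : Fin (Fintype.card T - Fintype.card R) => Fintype.card B)
    (c := fun t => Fintype.card B - #{r | ∀ c, f r c ≠ t}) (by
      rw [sum_tsub_distrib _ fun t _ => hmiss t, hdouble]
      simp [Nat.sub_mul])
  obtain ⟨σ, hσ, hσinj⟩ := exists_injective_equivs_of_regular (K := B)
    (N := Sum.elim (fun r t => if ∀ c, f r c ≠ t then 1 else 0) Z)
    (by rintro (r | i) <;> simp [hrow, hZrow])
    (fun t => by simp [hZcol, hmiss])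
  have hnew : ∀ r b c, f r c ≠ σ b (.inl r) := fun r b => by simpa using hσ b (.inl r)
  refine ⟨fun r b => σ b (.inl r), fun r => ?_, ?_⟩
  · refine (hf.row_injective r).sumElim (hσinj (.inl r) fun t => ?_) fun c b => hnew r b c
    simp only [Sum.elim_inl]
    split_ifs <;> simp
  · rintro (c | b)
    · exact hf.col_injective c
    · exact (σ b).injective.comp Sum.inl_injective

/-- The column extension applies because a symbol misses at most `card R ≤ card B` rows; the row
extension applies because each of the completed rows already places a given symbol in a column of
its own. -/
theorem exists_completion [Fintype A] {f : R → C → T} (hf : IsLatin f)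
    (hrows : Fintype.card R + Fintype.card A = Fintype.card T)
    (hcols : Fintype.card C + Fintype.card B = Fintype.card T)
    (hle : Fintype.card R + Fintype.card C ≤ Fintype.card T) :
    ∃ L : R ⊕ A → C ⊕ B → T, IsLatin L ∧ ∀ r c, L (.inl r) (.inl c) = f r c := by
  classical
  obtain ⟨g, hg⟩ := hf.exists_sumElim hcols fun t =>
    (card_le_univ _).trans (by lia : Fintype.card R ≤ Fintype.card B)
  have hbij : ∀ r, Function.Bijective (Sum.elim (f r) (g r)) := fun r =>
    (Fintype.bijective_iff_injective_and_card _).2 ⟨hg.row_injective r, by simpa using hcols⟩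
  have hmiss : ∀ t, #{y : C ⊕ B | ∀ r, Sum.elim (f r) (g r) y ≠ t} ≤ Fintype.card A := by
    intro t
    choose col hcol using fun r => (hbij r).surjective t
    have hcolinj : Function.Injective col := fun r s hrs =>
      hg.col_injective (col r) ((hcol r).trans (hrs ▸ hcol s).symm)
    have hsub : ({y | ∀ r, Sum.elim (f r) (g r) y ≠ t} : Finset (C ⊕ B)) ⊆
        (univ.image col)ᶜ := by
      intro y hy
      simp only [mem_compl, mem_image, mem_univ, true_and, not_exists]
      rintro r rfl
      exact (mem_filter.1 hy).2 r (hcol r)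
    refine (card_le_card hsub).trans ?_
    rw [card_compl, card_image_of_injective _ hcolinj, card_univ, Fintype.card_sum]
    lia
  obtain ⟨k, hk⟩ := hg.swap.exists_sumElim hrows hmiss
  exact ⟨fun x y => Sum.elim (fun r => Sum.elim (f r) (g r) y) (k y) x, hk.swap, fun r c => rfl⟩

end Extension

end IsLatin

section Corner

variable {R C A B T : Type*}

/-- The array obtained from `L` by overwriting its upper left corner with `f`. -/
def replaceCorner (L : R ⊕ A → C ⊕ B → T) (f : R → C → T) : R ⊕ A → C ⊕ B → T :=
  Sum.elim (fun r => Sum.elim (f r) fun b => L (.inl r) (.inr b)) fun a => L (.inr a)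

lemma IsLatin.replaceCorner {L : R ⊕ A → C ⊕ B → T} (hL : IsLatin L) {f : R → C → T}
    (hf : IsLatin f)
    (hrow : ∀ r, Set.range (f r) ⊆ Set.range fun c => L (.inl r) (.inl c))
    (hcol : ∀ c, (Set.range fun r => f r c) ⊆ Set.range fun r => L (.inl r) (.inl c)) :
    IsLatin (replaceCorner L f) where
  row_injective := by
    rintro (r | a)
    · refine (hf.row_injective r).sumElim
        ((hL.row_injective (.inl r)).comp Sum.inr_injective) fun c b h => ?_
      obtain ⟨c', hc'⟩ := hrow r ⟨c, rfl⟩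
      exact Sum.inl_ne_inr (hL.row_injective (.inl r) (hc'.trans h))
    · exact hL.row_injective (.inr a)
  col_injective := by
    rintro (c | b)
    · rintro (r | a) (r' | a') h
      · exact congrArg _ (hf.col_injective c h)
      · obtain ⟨s, hs⟩ := hcol c ⟨r, rfl⟩
        exact (Sum.inl_ne_inr (hL.col_injective (.inl c) (hs.trans h))).elim
      · obtain ⟨s, hs⟩ := hcol c ⟨r', rfl⟩
        exact (Sum.inl_ne_inr (hL.col_injective (.inl c) (hs.trans h.symm))).elim
      · exact hL.col_injective (.inl c) h
    · rintro (r | a) (r' | a') h <;> exact hL.col_injective (.inr b) h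

variable [Fintype R] [Fintype C] [Fintype A] [Fintype B] [DecidableEq T]

/-- The sum of the entries of `M` over the cells that carry the symbol `t` in the array `L`. -/
def symbolSum (L : R → C → T) (M : R → C → ℝ) (t : T) : ℝ :=
  ∑ r, ∑ c, if L r c = t then M r c else 0

lemma symbolSum_replaceCorner (L : R ⊕ A → C ⊕ B → T) (f : R → C → T) (M : R ⊕ A → C ⊕ B → ℝ)
    (t : T) :
    symbolSum (replaceCorner L f) M t =
      symbolSum f (fun r c => M (.inl r) (.inl c)) t +
        symbolSum (fun r b => L (.inl r) (.inr b)) (fun r b => M (.inl r) (.inr b)) t +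
        symbolSum (fun a => L (.inr a)) (fun a => M (.inr a)) t := by
  rw [symbolSum, Fintype.sum_sum_type]
  simp only [symbolSum, Fintype.sum_sum_type, sum_add_distrib]
  rfl

end Corner

section Coloring

variable {V J : Type*} {H : SimpleGraph V}

/-- A partial proper vertex colouring of `H`; the uncoloured vertices have the value `none`. -/
def IsPartialColoring (H : SimpleGraph V) (c : V → Option J) : Prop :=
  ∀ ⦃x y⦄, H.Adj x y → ∀ j, c x = some j → c y ≠ some j

lemma IsPartialColoring.piecewise {c : V → Option J} (hc : IsPartialColoring H c)
    {X : Finset V} [∀ x, Decidable (x ∈ X)] (hX : H.IsIndepSet X) {j : J}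
    (hj : ∀ ⦃x y⦄, x ∈ X → H.Adj x y → c y ≠ some j) :
    IsPartialColoring H (X.piecewise (fun _ => some j) c) := by
  intro x y hxy i hxi hyi
  by_cases hx : x ∈ X <;> by_cases hy : y ∈ X <;>
    simp only [hx, hy, not_false_eq_true, piecewise_eq_of_mem, piecewise_eq_of_notMem,
      Option.some.injEq] at hxi hyi
  · exact hX hx hy hxy.ne hxy
  · exact hj hx hxy (hxi ▸ hyi)
  · exact hj hy hxy.symm (hyi ▸ hxi)
  · exact hc hxy i hxi hyi

variable [Fintype V] [DecidableRel H.Adj]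

lemma exists_isIndepSet_subset {m : ℕ} (hm : 0 < m) (hdeg : ∀ x, H.degree x < m)
    {k : ℕ} {S : Finset V} (hS : k * m ≤ #S) : ∃ X ⊆ S, #X = k ∧ H.IsIndepSet X := by
  classical
  induction k generalizing S with
  | zero => exact ⟨∅, by simp⟩
  | succ k ih =>
    rw [Nat.succ_mul] at hS
    obtain ⟨x, hx⟩ : S.Nonempty := card_pos.1 (by lia)
    have hball : #(insert x (H.neighborFinset x)) ≤ m := (card_insert_le _ _).trans (hdeg x)
    obtain ⟨X, hXS, rfl, hX⟩ := ih (S := S \ insert x (H.neighborFinset x)) <| by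
      have := le_card_sdiff (insert x (H.neighborFinset x)) S
      lia
    have hnot : ∀ y ∈ X, y ≠ x ∧ ¬H.Adj x y := fun y hy => by
      simpa using (mem_sdiff.1 (hXS hy)).2
    refine ⟨insert x X, insert_subset hx (hXS.trans sdiff_subset),
      card_insert_of_notMem fun h => (hnot x h).1 rfl, ?_⟩
    rw [coe_insert]
    exact hX.insert fun y hy _ => ⟨(hnot y hy).2, fun h => (hnot y hy).2 h.symm⟩

lemma IsPartialColoring.exists_coloring [Fintype J] {c : V → Option J}
    (hc : IsPartialColoring H c) (hdeg : ∀ x, H.degree x < Fintype.card J) :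
    ∃ C : H.Coloring J, ∀ x j, c x = some j → C x = j := by
  classical
  induction hn : #{x | c x = none} generalizing c with
  | zero =>
    have hsome : ∀ x, (c x).isSome := by
      simpa [filter_eq_empty_iff, Option.isSome_iff_ne_none] using hn
    have hvalid : ∀ {x y}, H.Adj x y → (c x).get (hsome x) ≠ (c y).get (hsome y) :=
      fun hxy h => hc hxy _ (Option.some_get _).symm <| by rw [h, Option.some_get]
    exact ⟨.mk (fun x => (c x).get (hsome x)) hvalid, fun x j hxj => by
      simp [SimpleGraph.Coloring.mk, hxj]⟩
  | succ n ih =>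
    obtain ⟨x, hx⟩ : ∃ x, c x = none := by
      simpa [filter_nonempty_iff] using card_pos.1 (n.succ_pos.trans_eq hn.symm)
    obtain ⟨j, hj⟩ : ∃ j, ∀ y ∈ H.neighborFinset x, c y ≠ some j := by
      by_contra! h
      choose y hy hyj using h
      have hinj : Function.Injective y := fun i j hij =>
        Option.some_injective _ ((hyj i).symm.trans (hij ▸ hyj j))
      have := card_le_card_of_injOn y (fun j _ => hy j) hinj.injOn (s := univ)
      exact (hdeg x).not_ge this
    obtain ⟨C, hC⟩ := ih (hc.piecewise (X := {x}) (by simp) (j := j)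
      fun y z hy hyz => hj z (by simpa [mem_singleton.1 hy] using hyz)) <| by
        rw [← Nat.succ_inj.1 ((card_erase_add_one (mem_filter_univ x |>.2 hx)).trans hn)]
        congr 1
        grind [Finset.piecewise]
    refine ⟨C, fun y i hy => hC y i ?_⟩
    rwa [piecewise_eq_of_notMem]
    rintro hyx
    simp_all

lemma exists_isPartialColoring_le_card [DecidableEq J] {m : ℕ} (hdeg : ∀ x, H.degree x < m)
    (s : Finset J) {K : ℕ} {G : Finset V} (hG : (#s + m) * K ≤ #G) :
    ∃ c : V → Option J, IsPartialColoring H c ∧ (∀ x, ∀ j ∉ s, c x ≠ some j) ∧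
      #{x ∈ G | c x ≠ none} ≤ #s * K ∧ ∀ j ∈ s, K ≤ #{x ∈ G | c x = some j} := by
  classical
  induction s using Finset.induction with
  | empty => exact ⟨fun _ => none, by simp [IsPartialColoring]⟩
  | insert j s hj ih =>
    rw [card_insert_of_notMem hj] at hG
    obtain ⟨c, hc, hcs, hcard, hK⟩ := ih (hG.trans' (by gcongr; lia))
    have hfree : K * m ≤ #{x ∈ G | c x = none} := by
      have := card_filter_add_card_filter_not (s := G) fun x => c x = none
      nlinarith
    obtain ⟨X, hXG, rfl, hX⟩ : ∃ X ⊆ ({x ∈ G | c x = none} : Finset V),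
        #X = K ∧ H.IsIndepSet X := by
      obtain rfl | hK := K.eq_zero_or_pos
      · exact ⟨∅, by simp⟩
      · obtain ⟨x, -⟩ : G.Nonempty := card_pos.1 (by nlinarith)
        exact exists_isIndepSet_subset ((Nat.zero_le _).trans_lt (hdeg x)) hdeg hfree
    have hpaint : ∀ x i, X.piecewise (fun _ => some j) c x = some i ↔
        x ∈ X ∧ i = j ∨ c x = some i := by grind [Finset.piecewise]
    refine ⟨_, hc.piecewise hX fun _ y _ _ => hcs y j hj, ?_, ?_, ?_⟩
    · grind
    · rw [card_insert_of_notMem hj, Nat.succ_mul]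
      refine (card_le_card fun x hx => ?_).trans (card_union_le _ X) |>.trans (by gcongr)
      grind [Finset.piecewise]
    · intro i hi
      obtain rfl | hi := mem_insert.1 hi
      · exact card_le_card fun x hx => by grind
      · exact (hK i hi).trans <| card_le_card fun x hx => by grind

lemma exists_coloring_le_card [Fintype J] [DecidableEq J] {m : ℕ} (hdeg : ∀ x, H.degree x < m)
    (hm : m ≤ Fintype.card J) {K : ℕ} {G : Finset V} (hG : (Fintype.card J + m) * K ≤ #G) :
    ∃ C : H.Coloring J, ∀ j, K ≤ #{x ∈ G | C x = j} := by
  obtain ⟨c, hc, -, -, hK⟩ := exists_isPartialColoring_le_card hdeg univ hG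
  obtain ⟨C, hC⟩ := hc.exists_coloring fun x => (hdeg x).trans_le hm
  exact ⟨C, fun j => (hK j (mem_univ j)).trans <|
    card_le_card <| monotone_filter_right G fun x _ hx => hC x j hx⟩

end Coloring

section Selection

variable {Ω : Type*} {Δ b : ℝ}

lemma exists_subset_sum_mem_Ico {g : Ω → ℝ} {W : Finset Ω} (hg : ∀ x ∈ W, g x ≤ Δ) {t : ℝ}
    (ht : 0 < t) (htW : t ≤ ∑ x ∈ W, g x) : ∃ X ⊆ W, ∑ x ∈ X, g x ∈ Set.Ico t (t + Δ) := by
  classical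
  induction W using Finset.induction with
  | empty => exact absurd htW (by simpa using ht)
  | insert x W hx ih =>
    rw [forall_mem_insert] at hg
    rcases le_or_gt t (∑ x ∈ W, g x) with hW | hW
    · obtain ⟨X, hXW, hX⟩ := ih hg.2 hW
      exact ⟨X, hXW.trans (subset_insert x W), hX⟩
    · refine ⟨insert x W, Subset.rfl, htW, ?_⟩
      rw [sum_insert hx]
      linarith

/-- The partial sums cannot jump over the interval of length at least `Δ` that separates the
forbidden neighbourhoods of `u` and `v`. -/
lemma exists_subset_le_abs_sum_sub {g : Ω → ℝ} {W : Finset Ω} (hΔ : 0 ≤ Δ)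
    (hg : ∀ x ∈ W, g x ≤ Δ) (hW : 4 * b + Δ ≤ ∑ x ∈ W, g x) (u v : ℝ) :
    ∃ X ⊆ W, b ≤ |∑ x ∈ X, g x - u| ∧ b ≤ |∑ x ∈ X, g x - v| := by
  by_contra! hbad
  wlog hu : |0 - u| < b generalizing u v
  · refine this v u (fun X hX hv => ?_) (by simpa using hbad ∅ (empty_subset W) (by simpa using hu))
    by_contra! hXu
    exact (hbad X hX hXu).not_ge hv
  rw [abs_lt] at hu
  have htop : |∑ x ∈ W, g x - v| < b := hbad W Subset.rfl (by rw [le_abs']; right; linarith)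
  obtain ⟨X, hXW, hX⟩ := exists_subset_sum_mem_Ico hg (t := u + b) (by linarith) (by linarith)
  have hmid : |∑ x ∈ X, g x - v| < b := hbad X hXW (by rw [le_abs']; right; linarith [hX.1])
  linarith [(abs_lt.1 htop).2, (abs_lt.1 hmid).1, hX.2]

lemma exists_orientation_le_abs_sum {d : Ω → Bool → ℝ} {W : Finset Ω} (hΔ : 0 ≤ Δ)
    (hd : ∀ x ∈ W, |d x true - d x false| ≤ Δ)
    (hW : 4 * b + Δ ≤ ∑ x ∈ W, |d x true - d x false|) (r s : ℝ) :
    ∃ ε : Ω → Bool, b ≤ |r + ∑ x ∈ W, d x (ε x)| ∧ b ≤ |s + ∑ x ∈ W, d x (!ε x)| := by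
  classical
  obtain ⟨X, hXW, hr, hs⟩ := exists_subset_le_abs_sum_sub hΔ hd hW
    (-(r + ∑ x ∈ W, min (d x true) (d x false))) (s + ∑ x ∈ W, max (d x true) (d x false))
  let ε : Ω → Bool := fun x => decide (x ∈ X ↔ d x false ≤ d x true)
  have hε : ∀ x, d x (ε x) =
      min (d x true) (d x false) + if x ∈ X then |d x true - d x false| else 0 := by
    intro x
    by_cases hx : x ∈ X
    · rcases lt_or_ge (d x true) (d x false) with h | h
      · simp [ε, hx, h.le, h.not_ge, abs_of_neg (sub_neg.2 h)]
      · simp [ε, hx, h, abs_of_nonneg (sub_nonneg.2 h)]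
    · rcases lt_or_ge (d x true) (d x false) with h | h
      · simp [ε, hx, h.le, h.not_ge]
      · simp [ε, hx, h]
  have hnotε : ∀ x, d x (!ε x) =
      max (d x true) (d x false) - if x ∈ X then |d x true - d x false| else 0 := by
    intro x
    have hpair : d x (ε x) + d x (!ε x) = d x true + d x false := by
      cases ε x <;> simp [add_comm]
    linarith [hε x, max_add_min (d x true) (d x false)]
  have hsumX : ∑ x ∈ W, (if x ∈ X then |d x true - d x false| else 0) =
      ∑ x ∈ X, |d x true - d x false| := by
    rw [sum_ite_mem, inter_eq_right.2 hXW]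
  refine ⟨ε, ?_, ?_⟩
  · simp only [hε, sum_add_distrib, hsumX]
    convert hr using 2
    ring
  · simp only [hnotε, sum_sub_distrib, hsumX]
    rw [abs_sub_comm] at hs
    convert hs using 2
    ring

variable [Fintype Ω] {I E : Type*} [DecidableEq I] [DecidableEq E]

/-- Each element is charged to a primary class in `I ⊕ E` by its orientation and to a secondary
class in `I` by the reversed one. A secondary class contains the primary class with the same name,
so that the orientations on the classes in `E` are chosen first. -/
lemma exists_orientation_forall_le_abs_sum {d : Ω → Bool → ℝ} (hΔ : 0 ≤ Δ)
    (hd : ∀ x, |d x true - d x false| ≤ Δ) {p : Ω → I ⊕ E} {q : Ω → I}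
    (hpq : ∀ x i, p x = .inl i → q x = i)
    (hp : ∀ j, 4 * b + Δ ≤ ∑ x with p x = j, |d x true - d x false|) (r : I ⊕ E → ℝ) (s : I → ℝ) :
    ∃ ε : Ω → Bool, (∀ j, b ≤ |r j + ∑ x with p x = j, d x (ε x)|) ∧
      ∀ i, b ≤ |s i + ∑ x with q x = i, d x (!ε x)| := by
  choose εE hεE _ using fun e => exists_orientation_le_abs_sum hΔ (fun x _ => hd x) (hp (.inr e))
    (r (.inr e)) 0
  let fixed : I → ℝ := fun i =>
    ∑ x with q x = i, Sum.elim (fun _ => 0) (fun e => d x (!εE e x)) (p x)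
  choose εI hεI hεI' using fun i => exists_orientation_le_abs_sum hΔ (fun x _ => hd x)
    (hp (.inl i)) (r (.inl i)) (s i + fixed i)
  let ε : Ω → Bool := fun x => Sum.elim (εI · x) (εE · x) (p x)
  have hprimary : ∀ j, ∑ x with p x = j, d x (ε x) =
      ∑ x with p x = j, d x (Sum.elim (εI · x) (εE · x) j) :=
    fun j => sum_congr rfl fun x hx => by rw [← (mem_filter.1 hx).2]
  have hsecondary : ∀ i, ∑ x with q x = i, d x (!ε x) =
      fixed i + ∑ x with p x = .inl i, d x (!εI i x) := by
    intro i
    have hclass : filter (p · = .inl i) univ = filter (p · = .inl i) {x | q x = i} := by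
      grind
    simp only [fixed]
    rw [hclass, sum_filter (s := {x | q x = i}), ← sum_add_distrib]
    refine sum_congr rfl fun x hx => ?_
    rcases hpx : p x with i' | e
    · obtain rfl := (hpq x i' hpx).symm.trans (mem_filter.1 hx).2
      simp [ε, hpx]
    · simp [ε, hpx]
  refine ⟨ε, ?_, fun i => by simpa only [hsecondary, add_assoc] using hεI' i⟩
  rintro (i | e)
  · simpa only [hprimary, Sum.elim_inl] using hεI i
  · simpa only [hprimary, Sum.elim_inr] using hεE e

end Selection

section Block

variable {U V P Q : Type*}

/-- The rook graph: the cells of a `U × V` board, joined when they share a row or a column. -/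
abbrev rookGraph (U V : Type*) : SimpleGraph (U × V) :=
  (⊤ : SimpleGraph U) □ (⊤ : SimpleGraph V)

lemma degree_rookGraph_lt [Fintype U] [Fintype V] [DecidableRel (rookGraph U V).Adj]
    (x : U × V) : (rookGraph U V).degree x < Fintype.card U + Fintype.card V := by
  classical
  have hU : 0 < Fintype.card U := Fintype.card_pos_iff.2 ⟨x.1⟩
  rw [SimpleGraph.degree_boxProd, SimpleGraph.complete_graph_degree,
    SimpleGraph.complete_graph_degree]
  lia

/-- The array of `2 × 2` blocks indexed by `U × V` in which one diagonal of the block `x` carries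
the symbol `p x` and the other one the symbol `q x`; the bit `ε x` tells which diagonal is which. -/
def orientedArray (p : U × V → P) (q : U × V → Q) (ε : U × V → Bool)
    (a : U × Bool) (b : V × Bool) : P ⊕ Q :=
  if (a.2 ^^ b.2) = ε (a.1, b.1) then .inl (p (a.1, b.1)) else .inr (q (a.1, b.1))

/-- The sum of the entries of `M` on one of the two diagonals of the `2 × 2` block `x`. -/
def blockDiag (M : U × Bool → V × Bool → ℝ) (x : U × V) (e : Bool) : ℝ :=
  M (x.1, false) (x.2, e) + M (x.1, true) (x.2, !e)

lemma isLatin_orientedArray (p : (rookGraph U V).Coloring P) (q : (rookGraph U V).Coloring Q)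
    (ε : U × V → Bool) : IsLatin (orientedArray p q ε) where
  row_injective := by
    rintro ⟨u, s⟩ ⟨v, t⟩ ⟨v', t'⟩ h
    obtain rfl : v = v' := by
      by_contra hv
      have hadj : (rookGraph U V).Adj (u, v) (u, v') := by simpa using hv
      have := p.valid hadj
      have := q.valid hadj
      grind [orientedArray]
    cases hε : ε (u, v) <;> cases s <;> cases t <;> cases t' <;> simp_all [orientedArray]
  col_injective := by
    rintro ⟨v, t⟩ ⟨u, s⟩ ⟨u', s'⟩ h
    obtain rfl : u = u' := by
      by_contra hu
      have hadj : (rookGraph U V).Adj (u, v) (u', v) := by simpa using hu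
      have := p.valid hadj
      have := q.valid hadj
      grind [orientedArray]
    cases hε : ε (u, v) <;> cases t <;> cases s <;> cases s' <;> simp_all [orientedArray]

lemma range_orientedArray_row_subset (p : U × V → P) (q : U × V → Q) (ε ε' : U × V → Bool)
    (a : U × Bool) :
    Set.range (orientedArray p q ε a) ⊆ Set.range (orientedArray p q ε' a) := by
  obtain ⟨u, s⟩ := a
  rintro _ ⟨⟨v, t⟩, rfl⟩
  refine ⟨(v, t ^^ (ε (u, v) ^^ ε' (u, v))), ?_⟩
  cases s <;> cases t <;> cases hε : ε (u, v) <;> cases hε' : ε' (u, v) <;>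
    simp [orientedArray, hε, hε']

lemma range_orientedArray_col_subset (p : U × V → P) (q : U × V → Q) (ε ε' : U × V → Bool)
    (b : V × Bool) :
    (Set.range fun a => orientedArray p q ε a b) ⊆ Set.range fun a => orientedArray p q ε' a b := by
  obtain ⟨v, t⟩ := b
  rintro _ ⟨⟨u, s⟩, rfl⟩
  refine ⟨(u, s ^^ (ε (u, v) ^^ ε' (u, v))), ?_⟩
  cases s <;> cases t <;> cases hε : ε (u, v) <;> cases hε' : ε' (u, v) <;>
    simp [orientedArray, hε, hε']

variable [Fintype U] [Fintype V]

section SymbolSum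

variable [DecidableEq P] [DecidableEq Q] (p : U × V → P) (q : U × V → Q) (ε : U × V → Bool)
  (M : U × Bool → V × Bool → ℝ)

lemma symbolSum_eq_sum_blocks {T : Type*} [DecidableEq T] (L : U × Bool → V × Bool → T) (t : T) :
    symbolSum L M t = ∑ x : U × V, ∑ s, ∑ s',
      if L (x.1, s) (x.2, s') = t then M (x.1, s) (x.2, s') else 0 := by
  simp only [symbolSum, Fintype.sum_prod_type]
  exact sum_congr rfl fun u _ => sum_comm

lemma symbolSum_orientedArray_inl (j : P) :
    symbolSum (orientedArray p q ε) M (.inl j) = ∑ x with p x = j, blockDiag M x (ε x) := by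
  rw [symbolSum_eq_sum_blocks, sum_filter]
  refine sum_congr rfl fun x _ => ?_
  cases hx : ε x <;> by_cases hj : p x = j <;>
    simp [orientedArray, blockDiag, hx, hj, add_comm]

lemma symbolSum_orientedArray_inr (i : Q) :
    symbolSum (orientedArray p q ε) M (.inr i) = ∑ x with q x = i, blockDiag M x (!ε x) := by
  rw [symbolSum_eq_sum_blocks, sum_filter]
  refine sum_congr rfl fun x _ => ?_
  cases hx : ε x <;> by_cases hi : q x = i <;>
    simp [orientedArray, blockDiag, hx, hi, add_comm]

end SymbolSum

variable {A B I E : Type*} [Fintype A] [Fintype B] [Fintype I] [Fintype E]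
  [DecidableEq I] [DecidableEq E]

/-- The blocks are coloured twice: a colouring `p` with all colours of `I ⊕ E`, each of which occurs
often in `G`, and a colouring `q` with colours in `I` that agrees with `p` on the blocks whose
colour lies in `I`. Reversing blocks is a Latin trade, and the freedom in the blocks of colour `j`
moves the sums of the symbols attached to `j` away from zero. -/
theorem exists_isLatin_forall_le_abs_symbolSum {M : (U × Bool) ⊕ A → (V × Bool) ⊕ B → ℝ}
    {Δ δ b : ℝ} (hΔ : 0 ≤ Δ) (hδ : 0 ≤ δ) {G : Finset (U × V)} {K : ℕ}
    (hgap : ∀ x, |blockDiag (fun a b => M (.inl a) (.inl b)) x true -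
      blockDiag (fun a b => M (.inl a) (.inl b)) x false| ≤ Δ)
    (hgood : ∀ x ∈ G, δ ≤ |blockDiag (fun a b => M (.inl a) (.inl b)) x true -
      blockDiag (fun a b => M (.inl a) (.inl b)) x false|)
    (hb : 4 * b + Δ ≤ K * δ)
    (hUA : Fintype.card (U × Bool) + Fintype.card A = Fintype.card ((I ⊕ E) ⊕ I))
    (hVB : Fintype.card (V × Bool) + Fintype.card B = Fintype.card ((I ⊕ E) ⊕ I))
    (hUV : Fintype.card U + Fintype.card V ≤ Fintype.card I)
    (hG : (Fintype.card (I ⊕ E) + (Fintype.card U + Fintype.card V)) * K ≤ #G) :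
    ∃ L : (U × Bool) ⊕ A → (V × Bool) ⊕ B → (I ⊕ E) ⊕ I,
      IsLatin L ∧ ∀ t, b ≤ |symbolSum L M t| := by
  classical
  obtain ⟨p, hp⟩ := exists_coloring_le_card (H := rookGraph U V) degree_rookGraph_lt
    (by rw [Fintype.card_sum]; lia) hG
  obtain ⟨q, hq⟩ := IsPartialColoring.exists_coloring (H := rookGraph U V)
    (c := fun x => (p x).getLeft?)
    (fun x y hxy i hx hy => p.valid hxy <| by
      rw [Sum.getLeft?_eq_some_iff.1 hx, Sum.getLeft?_eq_some_iff.1 hy])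
    fun x => (degree_rookGraph_lt x).trans_le hUV
  let N : U × Bool → V × Bool → ℝ := fun a b => M (.inl a) (.inl b)
  have hcolor : ∀ j, 4 * b + Δ ≤
      ∑ x with p x = j, |blockDiag N x true - blockDiag N x false| := fun j => calc
    4 * b + Δ ≤ K * δ := hb
    _ ≤ #{x ∈ G | p x = j} * δ := by gcongr; exact hp j
    _ ≤ ∑ x ∈ G with p x = j, |blockDiag N x true - blockDiag N x false| := by
      rw [← nsmul_eq_mul]
      exact card_nsmul_le_sum _ _ _ fun x hx => hgood x (mem_filter.1 hx).1
    _ ≤ ∑ x with p x = j, |blockDiag N x true - blockDiag N x false| :=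
      sum_le_sum_of_subset_of_nonneg (filter_subset_filter _ (subset_univ G))
        fun _ _ _ => abs_nonneg _
  obtain ⟨L, hL, hLcorner⟩ := (isLatin_orientedArray p q fun _ => false).exists_completion hUA hVB
    (by simp only [Fintype.card_prod, Fintype.card_bool, Fintype.card_sum]; lia)
  let rest : (I ⊕ E) ⊕ I → ℝ := fun t =>
    symbolSum (fun a b => L (.inl a) (.inr b)) (fun a b => M (.inl a) (.inr b)) t +
      symbolSum (fun a => L (.inr a)) (fun a => M (.inr a)) t
  obtain ⟨ε, hεp, hεq⟩ := exists_orientation_forall_le_abs_sum hΔ hgap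
    (fun x i hx => hq x i (by simp [hx])) hcolor (fun j => rest (.inl j)) (fun i => rest (.inr i))
  refine ⟨replaceCorner L (orientedArray p q ε), hL.replaceCorner (isLatin_orientedArray p q ε)
    (fun a => ?_) (fun b => ?_), ?_⟩
  · simpa only [hLcorner] using range_orientedArray_row_subset p q ε _ a
  · simpa only [hLcorner] using range_orientedArray_col_subset p q ε _ b
  · rintro (j | i) <;> rw [symbolSum_replaceCorner, add_assoc, add_comm]
    · rw [symbolSum_orientedArray_inl]
      exact hεp j
    · rw [symbolSum_orientedArray_inr]
      exact hεq i

end Block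

section SubRectangle

variable {α β : Type*}

lemma card_filter_subtype_prod (U : Finset α) (V : Finset β) (r : α → β → Prop)
    [∀ a b, Decidable (r a b)] :
    #{x : U × V | r x.1 x.2} = #{x ∈ U ×ˢ V | r x.1 x.2} :=
  card_bij (fun x _ => (x.1.1, x.2.1)) (fun x hx => by simpa using hx)
    (fun x _ y _ h => Prod.ext (Subtype.ext (congrArg Prod.fst h))
      (Subtype.ext (congrArg Prod.snd h)))
    fun y hy => by
      rw [mem_filter, mem_product] at hy
      exact ⟨(⟨y.1, hy.1.1⟩, ⟨y.2, hy.1.2⟩), (mem_filter_univ _).2 hy.2, rfl⟩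

lemma exists_subset_card_eq_nsmul_sum_le [AddCommMonoid β] [LinearOrder β] [IsOrderedAddMonoid β]
    (w : α → β) {P : Finset α} {k : ℕ} (hk : k ≤ #P) :
    ∃ U ⊆ P, #U = k ∧ k • ∑ a ∈ P, w a ≤ #P • ∑ a ∈ U, w a := by
  classical
  induction P using Finset.induction_on_min_value w with
  | empty => exact ⟨∅, by simp_all⟩
  | insert a P ha hmin ih =>
    obtain rfl | hk := hk.eq_or_lt
    · exact ⟨_, Subset.rfl, rfl, le_rfl⟩
    rw [card_insert_of_notMem ha] at hk ⊢
    obtain ⟨U, hUP, rfl, hU⟩ := ih (Nat.lt_succ_iff.1 hk)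
    refine ⟨U, hUP.trans (subset_insert a P), rfl, ?_⟩
    rw [sum_insert ha, nsmul_add, succ_nsmul, add_comm]
    exact add_le_add hU (card_nsmul_le_sum _ _ _ fun x hx => hmin x (hUP hx))

lemma exists_subset_card_le_mul_sum_le (w : α → ℕ) {P : Finset α} {k N : ℕ} (hP : #P ≤ N)
    (hk : k ≤ N) : ∃ U ⊆ P, #U ≤ k ∧ k * ∑ a ∈ P, w a ≤ N * ∑ a ∈ U, w a := by
  rcases le_total k #P with hkP | hkP
  · obtain ⟨U, hUP, hU, hw⟩ := exists_subset_card_eq_nsmul_sum_le w hkP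
    exact ⟨U, hUP, hU.le, hw.trans (Nat.mul_le_mul_right _ hP)⟩
  · exact ⟨P, Subset.rfl, hkP, Nat.mul_le_mul_right _ hk⟩

lemma exists_subset_subset_card_filter_product_le (r : α → β → Prop) [∀ a b, Decidable (r a b)]
    {P : Finset α} {Q : Finset β} {k N : ℕ} (hP : #P ≤ N) (hQ : #Q ≤ N) (hk : k ≤ N) :
    ∃ U ⊆ P, ∃ V ⊆ Q, #U ≤ k ∧ #V ≤ k ∧
      k ^ 2 * #{x ∈ P ×ˢ Q | r x.1 x.2} ≤ N ^ 2 * #{x ∈ U ×ˢ V | r x.1 x.2} := by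
  have hrows : ∀ (S : Finset α) (T : Finset β),
      #{x ∈ S ×ˢ T | r x.1 x.2} = ∑ a ∈ S, #{b ∈ T | r a b} := by
    simp only [card_filter, sum_product, implies_true]
  have hcols : ∀ (S : Finset α) (T : Finset β),
      #{x ∈ S ×ˢ T | r x.1 x.2} = ∑ b ∈ T, #{a ∈ S | r a b} := by
    simp only [card_filter, sum_product_right, implies_true]
  obtain ⟨U, hUP, hUk, hU⟩ := exists_subset_card_le_mul_sum_le (fun a => #{b ∈ Q | r a b}) hP hk
  obtain ⟨V, hVQ, hVk, hV⟩ := exists_subset_card_le_mul_sum_le (fun b => #{a ∈ U | r a b}) hQ hk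
  rw [← hrows, ← hrows] at hU
  rw [← hcols, ← hcols] at hV
  refine ⟨U, hUP, V, hVQ, hUk, hVk, ?_⟩
  calc k ^ 2 * #{x ∈ P ×ˢ Q | r x.1 x.2}
    _ = k * (k * #{x ∈ P ×ˢ Q | r x.1 x.2}) := by ring
    _ ≤ k * (N * #{x ∈ U ×ˢ Q | r x.1 x.2}) := by gcongr
    _ = N * (k * #{x ∈ U ×ˢ Q | r x.1 x.2}) := by ring
    _ ≤ N * (N * #{x ∈ U ×ˢ V | r x.1 x.2}) := by gcongr
    _ = N ^ 2 * #{x ∈ U ×ˢ V | r x.1 x.2} := by ring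

end SubRectangle

section Pairing

variable {α : Type*}

/-- The second component of `x` if `s` is true, and the first one otherwise. -/
def endpoint (x : α × α) (s : Bool) : α :=
  bif s then x.2 else x.1

/-- The pairs in `P` are disjoint: all their endpoints are different. -/
def IsPairing (P : Finset (α × α)) : Prop :=
  Function.Injective fun x : P × Bool => endpoint x.1.1 x.2

lemma IsPairing.mono {P U : Finset (α × α)} (hP : IsPairing P) (hUP : U ⊆ P) : IsPairing U :=
  hP.comp ((Set.inclusion_injective hUP).prodMap Function.injective_id)

variable [Fintype α]

lemma IsPairing.card_le {P : Finset (α × α)} (hP : IsPairing P) : #P ≤ Fintype.card α / 2 := by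
  simpa [Nat.le_div_iff_mul_le] using Fintype.card_le_of_injective _ hP

variable [AddCancelCommMonoid α] [LinearOrder α]

/-- The increasing pairs in `α` with sum `z`. For `α = Fin n` the addition is modulo `n`, so these
pairs form a near-perfect matching, and as `z` varies they partition the increasing pairs. -/
def pairsWithSum (z : α) : Finset (α × α) :=
  {x | x.1 < x.2 ∧ x.1 + x.2 = z}

lemma isPairing_pairsWithSum (z : α) : IsPairing (pairsWithSum z) := by
  rintro ⟨⟨⟨a, c⟩, hac⟩, s⟩ ⟨⟨⟨b, d⟩, hbd⟩, t⟩ h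
  obtain ⟨hlt, hsum⟩ := (mem_filter_univ _).1 hac
  obtain ⟨hlt', hsum'⟩ := (mem_filter_univ _).1 hbd
  have hadd := hsum.trans hsum'.symm
  cases s <;> cases t <;> simp only [endpoint, cond_true, cond_false] at h hlt hlt' hadd <;>
    subst h
  · obtain rfl := add_left_cancel hadd
    rfl
  · obtain rfl := add_left_cancel (hadd.trans (add_comm b a))
    exact (lt_asymm hlt hlt').elim
  · obtain rfl := add_right_cancel (hadd.trans (add_comm c d))
    exact (lt_asymm hlt hlt').elim
  · obtain rfl := add_right_cancel hadd
    rfl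

lemma exists_card_le_card_filter_pairsWithSum [Nonempty α] (r : α × α → α × α → Prop)
    [∀ x y, Decidable (r x y)] :
    ∃ z w : α, #{x : (α × α) × (α × α) | x.1.1 < x.1.2 ∧ x.2.1 < x.2.2 ∧ r x.1 x.2} ≤
      Fintype.card α ^ 2 * #{x ∈ pairsWithSum z ×ˢ pairsWithSum w | r x.1 x.2} := by
  obtain ⟨⟨z, w⟩, -, hmax⟩ := exists_max_image (univ : Finset (α × α))
    (fun z => #{x ∈ pairsWithSum z.1 ×ˢ pairsWithSum z.2 | r x.1 x.2}) univ_nonempty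
  refine ⟨z, w, ?_⟩
  have hfibers := card_le_mul_card_image_of_maps_to (t := univ)
    (f := fun x : (α × α) × (α × α) => (x.1.1 + x.1.2, x.2.1 + x.2.2))
    (s := {x | x.1.1 < x.1.2 ∧ x.2.1 < x.2.2 ∧ r x.1 x.2}) (fun x _ => mem_univ _)
    #{x ∈ pairsWithSum z ×ˢ pairsWithSum w | r x.1 x.2} fun y hy => by
      refine (card_le_card fun x hx => ?_).trans (hmax y hy)
      simp only [mem_filter, mem_product, pairsWithSum, mem_univ] at hx ⊢
      grind
  simpa [sq, mul_comm] using hfibers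

theorem exists_isPairing_card_filter_le [Nonempty α] (r : α × α → α × α → Prop)
    [∀ x y, Decidable (r x y)] {k : ℕ} (hk : k ≤ Fintype.card α / 2) :
    ∃ U V : Finset (α × α), IsPairing U ∧ IsPairing V ∧ #U ≤ k ∧ #V ≤ k ∧
      4 * k ^ 2 * #{x : (α × α) × (α × α) | x.1.1 < x.1.2 ∧ x.2.1 < x.2.2 ∧ r x.1 x.2} ≤
        Fintype.card α ^ 4 * #{x ∈ U ×ˢ V | r x.1 x.2} := by
  obtain ⟨z, w, hzw⟩ := exists_card_le_card_filter_pairsWithSum r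
  obtain ⟨U, hU, V, hV, hUk, hVk, hUV⟩ := exists_subset_subset_card_filter_product_le r
    (isPairing_pairsWithSum z).card_le (isPairing_pairsWithSum w).card_le hk
  refine ⟨U, V, (isPairing_pairsWithSum z).mono hU, (isPairing_pairsWithSum w).mono hV, hUk, hVk,
    ?_⟩
  have hhalf : 2 * (Fintype.card α / 2) ≤ Fintype.card α := Nat.mul_div_le _ _
  calc 4 * k ^ 2 * #{x : (α × α) × (α × α) | x.1.1 < x.1.2 ∧ x.2.1 < x.2.2 ∧ r x.1 x.2}
    _ ≤ 4 * k ^ 2 *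
        (Fintype.card α ^ 2 * #{x ∈ pairsWithSum z ×ˢ pairsWithSum w | r x.1 x.2}) := by gcongr
    _ = 4 * Fintype.card α ^ 2 *
        (k ^ 2 * #{x ∈ pairsWithSum z ×ˢ pairsWithSum w | r x.1 x.2}) := by ring
    _ ≤ 4 * Fintype.card α ^ 2 *
        ((Fintype.card α / 2) ^ 2 * #{x ∈ U ×ˢ V | r x.1 x.2}) := by gcongr
    _ = Fintype.card α ^ 2 * (2 * (Fintype.card α / 2)) ^ 2 * #{x ∈ U ×ˢ V | r x.1 x.2} := by ring
    _ ≤ Fintype.card α ^ 2 * Fintype.card α ^ 2 * #{x ∈ U ×ˢ V | r x.1 x.2} := by gcongr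
    _ = Fintype.card α ^ 4 * #{x ∈ U ×ˢ V | r x.1 x.2} := by ring

end Pairing

section Factorization

variable {A B T : Type*} [Fintype A] [Fintype B]

lemma exists_equiv_sum_of_injective {f : A → B} (hf : Function.Injective f) :
    ∃ e : A ⊕ Fin (Fintype.card B - Fintype.card A) ≃ B, ∀ a, e (.inl a) = f a := by
  classical
  have hcard : Fintype.card ↥(Set.range f)ᶜ = Fintype.card B - Fintype.card A := by
    rw [Fintype.card_compl_set, Set.card_range_of_injective hf]
  exact ⟨((Equiv.ofInjective f hf).sumCongr (Fintype.equivFinOfCardEq hcard).symm).trans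
    (Equiv.Set.sumCompl _), fun _ => rfl⟩

variable [Fintype T]

lemma IsLatin.exists_equivs {L : A → B → T} (hL : IsLatin L)
    (hA : Fintype.card A = Fintype.card T) (hB : Fintype.card B = Fintype.card T) :
    ∃ σ : T → A ≃ B, ∀ t a b, σ t a = b ↔ L a b = t := by
  have hrow : ∀ a, Function.Surjective (L a) := fun a =>
    ((Fintype.bijective_iff_injective_and_card _).2 ⟨hL.row_injective a, hB⟩).surjective
  choose col hcol using hrow
  have hinj : ∀ t, Function.Injective fun a => col a t := fun t a a' h =>
    hL.col_injective (col a' t) (((congrArg (L a) h).symm.trans (hcol a t)).trans (hcol a' t).symm)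
  refine ⟨fun t => .ofBijective _ ((Fintype.bijective_iff_injective_and_card _).2
    ⟨hinj t, hA.trans hB.symm⟩), fun t a b => ⟨?_, ?_⟩⟩
  · rintro rfl
    exact hcol a t
  · rintro rfl
    exact hL.row_injective a (hcol a _)

lemma IsLatin.exists_isOneFactorization [DecidableEq T] {n : ℕ} {L : A → B → T} (hL : IsLatin L)
    (e : A ≃ Fin n) (e' : B ≃ Fin n) (hT : Fintype.card T = n) (M : Fin n → Fin n → ℝ) :
    ∃ π : Fin n → Equiv.Perm (Fin n), IsOneFactorization n π ∧
      ∀ t, ∃ s, ∑ i, M i (π t i) = symbolSum L (fun a b => M (e a) (e' b)) s := by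
  obtain ⟨σ, hσ⟩ := hL.exists_equivs (by simp [Fintype.card_congr e, hT])
    (by simp [Fintype.card_congr e', hT])
  let τ : Fin n ≃ T := (Fintype.equivFinOfCardEq hT).symm
  refine ⟨fun t => e.symm.trans ((σ (τ t)).trans e'), fun i j => ?_, fun t => ⟨τ t, ?_⟩⟩
  · refine ⟨τ.symm (L (e.symm i) (e'.symm j)), ?_, fun t ht => ?_⟩
    · simp [← Equiv.eq_symm_apply, hσ]
    · rw [Equiv.eq_symm_apply, eq_comm, ← hσ]
      simpa [← Equiv.eq_symm_apply] using ht
  · rw [← e.sum_comp]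
    refine sum_congr rfl fun a _ => ?_
    rw [sum_eq_single_of_mem (σ (τ t) a) (mem_univ _) fun b _ hb =>
      if_neg fun h => hb ((hσ _ _ _).2 h).symm, if_pos ((hσ _ _ _).1 rfl)]
    simp

end Factorization

section Signing

variable {n : ℕ} {M : Fin n → Fin n → ℤ}

/-- The pairs `x` of rows and `y` of columns span a switcher of `M`. -/
abbrev IsSwitcher (M : Fin n → Fin n → ℤ) (x y : Fin n × Fin n) : Prop :=
  M x.1 y.1 + M x.2 y.2 ≠ M x.1 y.2 + M x.2 y.1

lemma IsSigning.abs_sub_le (hM : IsSigning n M) (x y : Fin n × Fin n) :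
    |(M x.1 y.2 + M x.2 y.1) - (M x.1 y.1 + M x.2 y.2)| ≤ 4 := by
  rcases hM x.1 y.1 with h₁₁ | h₁₁ <;> rcases hM x.1 y.2 with h₁₂ | h₁₂ <;>
    rcases hM x.2 y.1 with h₂₁ | h₂₁ <;> rcases hM x.2 y.2 with h₂₂ | h₂₂ <;>
    simp [h₁₁, h₁₂, h₂₁, h₂₂]

lemma IsSwitcher.two_le_abs_sub (hM : IsSigning n M) {x y : Fin n × Fin n}
    (h : IsSwitcher M x y) : 2 ≤ |(M x.1 y.2 + M x.2 y.1) - (M x.1 y.1 + M x.2 y.2)| := by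
  rw [IsSwitcher] at h
  rcases hM x.1 y.1 with h₁₁ | h₁₁ <;> rcases hM x.1 y.2 with h₁₂ | h₁₂ <;>
    rcases hM x.2 y.1 with h₂₁ | h₂₁ <;> rcases hM x.2 y.2 with h₂₂ | h₂₂ <;>
    simp_all

theorem exists_isOneFactorization_of_isPairing (hM : IsSigning n M)
    {U V : Finset (Fin n × Fin n)} (hU : IsPairing U) (hV : IsPairing V) (hUV : #U + #V ≤ n / 2)
    {K : ℕ} (hK : n * K ≤ #{x ∈ U ×ˢ V | IsSwitcher M x.1 x.2}) :
    ∃ π : Fin n → Equiv.Perm (Fin n), IsOneFactorization n π ∧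
      ∀ t, ((K : ℝ) - 2) / 2 ≤ |∑ i, (M i (π t i) : ℝ)| := by
  classical
  obtain ⟨e, he⟩ := exists_equiv_sum_of_injective hU
  obtain ⟨e', he'⟩ := exists_equiv_sum_of_injective hV
  have hsymbols : Fintype.card ((Fin (n / 2) ⊕ Fin (n % 2)) ⊕ Fin (n / 2)) = n := by
    simp only [Fintype.card_sum, Fintype.card_fin]
    lia
  have hrows := (Fintype.card_sum.symm.trans (Fintype.card_congr e)).trans (Fintype.card_fin n)
  have hcols := (Fintype.card_sum.symm.trans (Fintype.card_congr e')).trans (Fintype.card_fin n)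
  let N : (U × Bool) ⊕ _ → (V × Bool) ⊕ _ → ℝ := fun a b => M (e a) (e' b)
  have hblock : ∀ x : U × V, blockDiag (fun a b => N (.inl a) (.inl b)) x true -
      blockDiag (fun a b => N (.inl a) (.inl b)) x false =
      ((M x.1.1.1 x.2.1.2 + M x.1.1.2 x.2.1.1 - (M x.1.1.1 x.2.1.1 + M x.1.1.2 x.2.1.2) : ℤ) : ℝ) :=
    fun x => by simp [N, blockDiag, he, he', endpoint]
  let G : Finset (U × V) := {x | IsSwitcher M x.1.1 x.2.1}
  have hG : #G = #{x ∈ U ×ˢ V | IsSwitcher M x.1 x.2} :=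
    card_filter_subtype_prod U V fun x y => IsSwitcher M x y
  have hcount : (Fintype.card (Fin (n / 2) ⊕ Fin (n % 2)) + (Fintype.card U + Fintype.card V)) * K ≤
      #G := by
    refine (Nat.mul_le_mul_right K ?_).trans (hK.trans_eq hG.symm)
    simp only [Fintype.card_sum, Fintype.card_fin, Fintype.card_coe]
    lia
  obtain ⟨L, hL, hLsum⟩ := exists_isLatin_forall_le_abs_symbolSum (M := N)
    (b := ((K : ℝ) - 2) / 2) zero_le_four zero_le_two
    (fun x => by rw [hblock]; exact_mod_cast hM.abs_sub_le x.1.1 x.2.1)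
    (fun x hx => by
      rw [hblock]
      exact_mod_cast ((mem_filter_univ _).1 hx).two_le_abs_sub hM)
    (by linarith) (hrows.trans hsymbols.symm) (hcols.trans hsymbols.symm)
    (by simpa using hUV) hcount
  obtain ⟨π, hπ, hsum⟩ := hL.exists_isOneFactorization e e' hsymbols fun i j => (M i j : ℝ)
  refine ⟨π, hπ, fun t => ?_⟩
  obtain ⟨s, hs⟩ := hsum t
  exact hs ▸ hLsum s

end Signing

section Counting

variable {n : ℕ} {M : Fin n → Fin n → ℤ}

lemma switcherCount_le (M : Fin n → Fin n → ℤ) : switcherCount n M ≤ n ^ 4 :=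
  (card_le_univ _).trans_eq (by simp only [Fintype.card_prod, Fintype.card_fin]; ring)

lemma switcherCount_eq_card_pairs (M : Fin n → Fin n → ℤ) :
    switcherCount n M = #{x : (Fin n × Fin n) × (Fin n × Fin n) |
      x.1.1 < x.1.2 ∧ x.2.1 < x.2.2 ∧ IsSwitcher M x.1 x.2} :=
  card_equiv (Equiv.prodAssoc _ _ _).symm fun x => by simp

lemma exists_isPairing_mul_le_card_switchers [NeZero n] {η : ℝ}
    (hs : η * n ^ 4 ≤ switcherCount n M) :
    ∃ U V : Finset (Fin n × Fin n), IsPairing U ∧ IsPairing V ∧ #U + #V ≤ n / 2 ∧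
      4 * ((n / 4 : ℕ) : ℝ) ^ 2 * η ≤ #{x ∈ U ×ˢ V | IsSwitcher M x.1 x.2} := by
  obtain ⟨U, V, hU, hV, hUk, hVk, hcard⟩ := exists_isPairing_card_filter_le
    (fun x y => IsSwitcher M x y) (k := n / 4) (by rw [Fintype.card_fin]; lia)
  refine ⟨U, V, hU, hV, by lia, ?_⟩
  rw [← switcherCount_eq_card_pairs, Fintype.card_fin] at hcard
  have hn : (0 : ℝ) < n ^ 4 := pow_pos (Nat.cast_pos.2 (NeZero.pos n)) 4
  refine le_of_mul_le_mul_left ?_ hn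
  calc (n : ℝ) ^ 4 * (4 * ((n / 4 : ℕ) : ℝ) ^ 2 * η)
    _ = 4 * ((n / 4 : ℕ) : ℝ) ^ 2 * (η * n ^ 4) := by ring
    _ ≤ 4 * ((n / 4 : ℕ) : ℝ) ^ 2 * switcherCount n M := by gcongr
    _ ≤ n ^ 4 * #{x ∈ U ×ˢ V | IsSwitcher M x.1 x.2} := by exact_mod_cast hcard

lemma mul_div_four_sub_le_div {g : ℕ} {η : ℝ} (hn : 0 < n) (hη : η ≤ 1)
    (hg : 4 * ((n / 4 : ℕ) : ℝ) ^ 2 * η ≤ g) : η * n / 4 - 4 ≤ (g / n : ℕ) := by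
  rcases le_total η 0 with hneg | hpos
  · have : η * n ≤ 0 := mul_nonpos_of_nonpos_of_nonneg hneg n.cast_nonneg
    linarith [(g / n).cast_nonneg (α := ℝ)]
  have hn' : (0 : ℝ) < n := Nat.cast_pos.2 hn
  have hfloor : (n : ℝ) - 3 ≤ 4 * (n / 4 : ℕ) ∧ 4 * ((n / 4 : ℕ) : ℝ) ≤ n := by
    rw [sub_le_iff_le_add]
    exact_mod_cast (by lia : n ≤ 4 * (n / 4) + 3 ∧ 4 * (n / 4) ≤ n)
  have hsquare : (n : ℝ) * (n - 6) ≤ 16 * ((n / 4 : ℕ) : ℝ) ^ 2 := by nlinarith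
  have hdiv : (g : ℝ) ≤ n * ((g / n : ℕ) + 1) := by
    exact_mod_cast (Nat.lt_mul_div_succ g hn).le
  have : η * (n - 6) / 4 ≤ (g / n : ℕ) + 1 := by
    refine le_of_mul_le_mul_left ?_ hn'
    calc (n : ℝ) * (η * (n - 6) / 4) = n * (n - 6) / 4 * η := by ring
      _ ≤ 16 * ((n / 4 : ℕ) : ℝ) ^ 2 / 4 * η := by gcongr
      _ = 4 * ((n / 4 : ℕ) : ℝ) ^ 2 * η := by ring
      _ ≤ n * ((g / n : ℕ) + 1) := hg.trans hdiv
  linarith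

end Counting

theorem many_switchers_case_general {n : ℕ} {η : ℝ} {M : Fin n → Fin n → ℤ}
    (hM : IsSigning n M) (hs : η * n ^ 4 ≤ switcherCount n M) :
    ∃ π : Fin n → Equiv.Perm (Fin n), IsOneFactorization n π ∧
      ∀ t, (η / 8 - 3 / n) * n ≤ |∑ i, (M i (π t i) : ℝ)| := by
  obtain rfl | hn := n.eq_zero_or_pos
  · exact ⟨fun _ => 1, fun i => i.elim0, fun t => t.elim0⟩
  have : NeZero n := ⟨hn.ne'⟩
  obtain ⟨U, V, hU, hV, hUV, hcard⟩ := exists_isPairing_mul_le_card_switchers hs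
  obtain ⟨π, hπ, hsum⟩ := exists_isOneFactorization_of_isPairing hM hU hV hUV
    (Nat.mul_div_le #{x ∈ U ×ˢ V | IsSwitcher M x.1 x.2} n)
  have hη : η ≤ 1 := le_of_mul_le_mul_right
    (by simpa using hs.trans (Nat.cast_le.2 (switcherCount_le M))) (by positivity : (0 : ℝ) < n ^ 4)
  refine ⟨π, hπ, fun t => (hsum t).trans' ?_⟩
  have hbound : (η / 8 - 3 / n) * n = η * n / 8 - 3 := by field
  linarith [mul_div_four_sub_le_div hn hη hcard]

theorem many_switchers_case :
    ∀ η : ℝ, 0 < η →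
    ∃ n₀ : ℕ, ∀ n : ℕ, n₀ ≤ n →
    ∀ M : Fin n → Fin n → ℤ, IsSigning n M →
    (switcherCount n M : ℝ) ≥ η * n ^ 4 →
    ∃ π : Fin n → Equiv.Perm (Fin n), IsOneFactorization n π ∧
      ∀ t : Fin n, |(∑ i, (M i (π t i) : ℝ))| ≥ (η / 8 - 3 / n) * n :=
  fun _ _ => ⟨0, fun _ _ _ hM hs => many_switchers_case_general hM hs⟩
end

section
/- For every real α with 0 < α ≤ 1/100 there exists n₀ such that for all n ≥ n₀ the following holds: for every signing M of K_{n,n}, if disc(M) ≤ α/3 and s(M) ≤ α²·n⁴/64, then there exists a balanced vector z : Fin n → ℤ such that either the number of pairs (i, j) with M i j ≠ z j is at most 4·√α·n², or the number of pairs (i, j) with M i j ≠ z i is at most 4·√α·n². -/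
open Finset

/-!
A signing without switchers is additive: `M i j = M a j + M i d - M a d` for every corner `(a, d)`.
Averaging over the corners, a signing with few switchers has a corner for which this fails at few
entries `(i, j)`. It fails wherever both `M i d` and `M a j` differ from `M a d`, so column `d` or
row `a` is nearly constant; in the first case almost all entries satisfy `M i j = M a j`, and in
the second `M i j = M i d`. The total discrepancy then bounds the sum of the resulting `±1`-vector,
which can therefore be balanced by changing few of its entries.
-/

open Function

section HammingDist

variable {ι κ β : Type*} [Fintype ι] [Fintype κ] [DecidableEq β]

lemma hammingDist_comp_equiv (e : ι ≃ κ) (x y : κ → β) :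
    hammingDist (x ∘ e) (y ∘ e) = hammingDist x y := by
  simp only [hammingDist, card_filter, comp_apply]
  exact e.sum_comp fun k => if x k ≠ y k then 1 else 0

lemma hammingDist_comp_snd (x y : κ → β) :
    hammingDist (fun p : ι × κ => x p.2) (fun p => y p.2) =
      Fintype.card ι * hammingDist x y := by
  simp only [hammingDist, ← univ_product_univ, filter_product_right fun k => x k ≠ y k,
    card_product, card_univ]

lemma hammingDist_comp_fst (x y : ι → β) :
    hammingDist (fun p : ι × κ => x p.1) (fun p => y p.1) =
      Fintype.card κ * hammingDist x y := by
  simp only [hammingDist, ← univ_product_univ, filter_product_left fun i => x i ≠ y i,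
    card_product, card_univ, mul_comm]

end HammingDist

/-- `x` is a vector of signs `±1`. -/
def IsSignVector {ι : Type*} (x : ι → ℤ) : Prop :=
  ∀ i, x i = 1 ∨ x i = -1

namespace IsSignVector

variable {ι : Type*} {x y : ι → ℤ}

lemma neg (hx : IsSignVector x) : IsSignVector (-x) := fun i => by
  rcases hx i with h | h <;> simp [h]

variable [Fintype ι]

lemma sum_eq_card_sub_card (hx : IsSignVector x) :
    ∑ i, x i = (#{i | x i = 1} : ℤ) - #{i | x i = -1} := by
  rw [card_filter, card_filter]
  push_cast
  rw [← sum_sub_distrib]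
  refine sum_congr rfl fun i _ => ?_
  rcases hx i with h | h <;> simp [h]

lemma abs_sum_sub_sum_le (hx : IsSignVector x) (hy : IsSignVector y) :
    |∑ i, x i - ∑ i, y i| ≤ 2 * hammingDist x y := by
  rw [← sum_sub_distrib, hammingDist, card_filter, Nat.cast_sum, mul_sum]
  refine (abs_sum_le_sum_abs _ _).trans (sum_le_sum fun i _ => ?_)
  rcases hx i with h | h <;> rcases hy i with h' | h' <;> simp [h, h']

lemma exists_abs_sum_le_one_hammingDist_le (hx : IsSignVector x) :
    ∃ z, IsSignVector z ∧ |∑ i, z i| ≤ 1 ∧ 2 * (hammingDist x z : ℤ) ≤ |∑ i, x i| := by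
  classical
  wlog hsum : 0 ≤ ∑ i, x i generalizing x
  · obtain ⟨z, hz, hz_sum, hz_dist⟩ := this hx.neg (by simpa using (not_le.mp hsum).le)
    refine ⟨-z, hz.neg, by simpa using hz_sum, ?_⟩
    simpa [hammingDist, neg_eq_iff_eq_neg] using hz_dist
  -- Negating half of the excess of `+1` entries brings the sum to `0` or `1`.
  obtain ⟨U, hU, hU_card⟩ := exists_subset_card_eq
    (s := {i | x i = 1}) (n := (∑ i, x i).toNat / 2) (by
      have := hx.sum_eq_card_sub_card
      omega)
  have hxU : ∀ i ∈ U, x i = 1 := fun i hi => by simpa using hU hi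
  let z : ι → ℤ := fun i => if i ∈ U then -x i else x i
  have hz_sum : ∑ i, z i = ∑ i, x i - 2 * #U := by
    have hz_apply : ∀ i, z i = x i - if i ∈ U then 2 else 0 := fun i => by
      by_cases hi : i ∈ U <;> simp [z, hi, hxU]
    simp [hz_apply, mul_comm]
  have hz_dist : hammingDist x z = #U := by
    rw [hammingDist]
    congr 1
    ext i
    by_cases hi : i ∈ U <;> simp [z, hi, hxU]
  refine ⟨z, fun i => ?_, ?_, ?_⟩
  · by_cases hi : i ∈ U
    · simp [z, hi, hxU]
    · simpa [z, hi] using hx i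
  · rw [hz_sum, abs_le]
    omega
  · rw [hz_dist, abs_of_nonneg hsum]
    omega

end IsSignVector

lemma isBalanced_iff_abs_sum_le_one {n : ℕ} {z : Fin n → ℤ} :
    IsBalanced n z ↔ IsSignVector z ∧ |∑ i, z i| ≤ 1 :=
  and_congr_right fun hz => by rw [IsSignVector.sum_eq_card_sub_card hz]

lemma sum_sum_eq_two_nsmul_sum_sum_Ioi {ι A : Type*} [Fintype ι] [LinearOrder ι]
    [LocallyFiniteOrderTop ι] [LocallyFiniteOrderBot ι] [AddCommMonoid A] (f : ι → ι → A)
    (hsymm : ∀ i j, f i j = f j i) (hdiag : ∀ i, f i i = 0) :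
    ∑ i, ∑ j, f i j = 2 • ∑ i, ∑ j ∈ Ioi i, f i j := by
  calc ∑ i, ∑ j, f i j = ∑ i, ∑ j, f j i := sum_comm
    _ = ∑ i, ∑ j ∈ {i}ᶜ, f j i :=
      sum_congr rfl fun i _ => by rw [Fintype.sum_eq_add_sum_compl i, hdiag, zero_add]
    _ = ∑ i, ∑ j ∈ Ioi i, (f j i + f i j) := (sum_sum_Ioi_add_eq_sum_sum_off_diag f).symm
    _ = 2 • ∑ i, ∑ j ∈ Ioi i, f i j := by
      simp only [smul_sum]
      exact sum_congr rfl fun i _ => sum_congr rfl fun j _ => by rw [hsymm j i, two_nsmul]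

section CornerExtension

variable {ι κ G : Type*} [AddCommGroup G]

/-- The additive matrix `(i, j) ↦ M a j + M i d - M a d`, the unique switcher-free matrix with
the same row `a` and column `d` as `M`. It is regarded as a vector indexed by `ι × κ`, so that its
Hamming distance to `uncurry M` makes sense. -/
def cornerExtension (M : ι → κ → G) (a : ι) (d : κ) (p : ι × κ) : G :=
  M a p.2 + M p.1 d - M a d

variable [Fintype ι] [Fintype κ]

lemma hammingDist_cornerExtension_flip [DecidableEq G] (M : ι → κ → G) (a : ι) (d : κ) :
    hammingDist (uncurry (flip M)) (cornerExtension (flip M) d a) =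
      hammingDist (uncurry M) (cornerExtension M a d) := by
  rw [← hammingDist_comp_equiv (Equiv.prodComm κ ι)]
  congr 1
  ext p
  simp [cornerExtension, flip, add_comm]

lemma hammingDist_row_le [DecidableEq G] (M : ι → κ → G) (a : ι) (d : κ) :
    hammingDist (uncurry M) (fun p => M a p.2) ≤
      hammingDist (uncurry M) (cornerExtension M a d) +
        Fintype.card κ * hammingDist (fun i => M i d) (fun _ => M a d) := by
  have hdist : hammingDist (cornerExtension M a d) (fun p => M a p.2) =
      Fintype.card κ * hammingDist (fun i => M i d) (fun _ => M a d) := by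
    rw [← hammingDist_comp_fst]
    refine congrArg card (filter_congr fun p _ => ?_)
    simp only [cornerExtension, ne_eq, add_sub_assoc, add_eq_left, sub_eq_zero]
  exact hdist ▸ hammingDist_triangle _ _ _

variable {M : ι → κ → ℤ}

/-- Where both factors count a disagreement, `cornerExtension M a d` is `±3`, not a sign. -/
lemma hammingDist_column_mul_hammingDist_row_le (hM : ∀ i, IsSignVector (M i)) (a : ι) (d : κ) :
    hammingDist (fun i => M i d) (fun _ => M a d) * hammingDist (M a) (fun _ => M a d) ≤
      hammingDist (uncurry M) (cornerExtension M a d) := by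
  simp only [hammingDist, ← card_product]
  refine card_le_card fun p hp => ?_
  rw [mem_product, mem_filter_univ, mem_filter_univ] at hp
  rw [mem_filter_univ, cornerExtension, uncurry]
  have h₁ := hM a d
  have h₂ := hM p.1 d
  have h₃ := hM a p.2
  have h₄ := hM p.1 p.2
  omega

/-- The discrepancy of `M` controls `∑ j, x j`, hence the cost of balancing `x`. -/
lemma exists_abs_sum_le_one_of_row (hM : ∀ i, IsSignVector (M i)) {x : κ → ℤ}
    (hx : IsSignVector x) :
    ∃ z, IsSignVector z ∧ |∑ j, z j| ≤ 1 ∧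
      2 * (hammingDist (uncurry M) (fun p => z p.2) : ℤ) ≤
        |∑ p, uncurry M p| + 4 * hammingDist (uncurry M) (fun p => x p.2) := by
  obtain ⟨z, hz, hz_sum, hz_dist⟩ := hx.exists_abs_sum_le_one_hammingDist_le
  refine ⟨z, hz, hz_sum, ?_⟩
  have htriangle : hammingDist (uncurry M) (fun p => z p.2) ≤
      hammingDist (uncurry M) (fun p => x p.2) + Fintype.card ι * hammingDist x z :=
    hammingDist_comp_snd (ι := ι) x z ▸ hammingDist_triangle _ _ _
  have hsum : Fintype.card ι * |∑ j, x j| ≤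
      |∑ p, uncurry M p| + 2 * hammingDist (uncurry M) (fun p => x p.2) := by
    have hdiff := IsSignVector.abs_sum_sub_sum_le (x := uncurry M) (y := fun p => x p.2)
      (fun p => hM p.1 p.2) (fun p => hx p.2)
    calc (Fintype.card ι * |∑ j, x j| : ℤ) = |∑ p : ι × κ, x p.2| := by
          simp [Fintype.sum_prod_type, abs_mul]
      _ ≤ |∑ p, uncurry M p| + |∑ p, uncurry M p - ∑ p : ι × κ, x p.2| := by
          linarith [abs_sub_abs_le_abs_sub (∑ p : ι × κ, x p.2) (∑ p, uncurry M p),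
            abs_sub_comm (∑ p, uncurry M p) (∑ p : ι × κ, x p.2)]
      _ ≤ _ := by gcongr
  zify at htriangle
  linarith [mul_le_mul_of_nonneg_left hz_dist (Fintype.card ι).cast_nonneg]

lemma exists_abs_sum_le_one_of_cornerExtension (hM : ∀ i, IsSignVector (M i)) (a : ι) (d : κ) :
    ∃ z, IsSignVector z ∧ |∑ j, z j| ≤ 1 ∧
      2 * (hammingDist (uncurry M) (fun p => z p.2) : ℤ) ≤ |∑ p, uncurry M p| +
        4 * (hammingDist (uncurry M) (cornerExtension M a d) +
          Fintype.card κ * hammingDist (fun i => M i d) (fun _ => M a d)) := by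
  obtain ⟨z, hz, hz_sum, hz_dist⟩ := exists_abs_sum_le_one_of_row hM (hM a)
  refine ⟨z, hz, hz_sum, hz_dist.trans ?_⟩
  gcongr
  exact_mod_cast hammingDist_row_le M a d

end CornerExtension

section Switchers

variable {n : ℕ}

lemma sum_hammingDist_cornerExtension (M : Fin n → Fin n → ℤ) :
    ∑ r : Fin n × Fin n, hammingDist (uncurry M) (cornerExtension M r.1 r.2) =
      4 * switcherCount n M := by
  let f (a c b d : Fin n) : ℕ := if M a b + M c d ≠ M a d + M c b then 1 else 0
  have hrow (a c : Fin n) : ∑ b, ∑ d, f a c b d = 2 * ∑ b, ∑ d ∈ Ioi b, f a c b d :=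
    sum_sum_eq_two_nsmul_sum_sum_Ioi (f a c) (fun b d => by simp only [f, ne_comm])
      (fun b => by simp [f])
  have hcol : ∑ a, ∑ c, ∑ b, ∑ d, f a c b d = 2 * ∑ a, ∑ c ∈ Ioi a, ∑ b, ∑ d, f a c b d :=
    sum_sum_eq_two_nsmul_sum_sum_Ioi (fun a c => ∑ b, ∑ d, f a c b d)
      (fun a c => by simp only [f, ne_comm, add_comm])
      (fun a => by simp [f, add_comm])
  have hcount : switcherCount n M = ∑ a, ∑ c ∈ Ioi a, ∑ b, ∑ d ∈ Ioi b, f a c b d := by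
    simp only [switcherCount, card_filter, Fintype.sum_prod_type, ← filter_lt_eq_Ioi, sum_filter,
      ite_and, f]
    refine sum_congr rfl fun a _ => sum_congr rfl fun c _ => ?_
    split_ifs <;> simp
  have hdist : ∑ r : Fin n × Fin n, hammingDist (uncurry M) (cornerExtension M r.1 r.2) =
      ∑ a, ∑ c, ∑ b, ∑ d, f a c b d := by
    simp only [hammingDist, card_filter, Fintype.sum_prod_type]
    refine sum_congr rfl fun a _ => sum_comm.trans (sum_congr rfl fun c _ => sum_comm.trans ?_)
    refine sum_congr rfl fun b _ => sum_congr rfl fun d _ => if_congr ?_ rfl rfl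
    simp only [cornerExtension, uncurry_apply_pair]
    omega
  rw [hdist, hcol, hcount]
  simp only [hrow, ← mul_sum]
  ring

lemma exists_sq_mul_hammingDist_cornerExtension_le [NeZero n] (M : Fin n → Fin n → ℤ) :
    ∃ a d, n ^ 2 * hammingDist (uncurry M) (cornerExtension M a d) ≤ 4 * switcherCount n M := by
  have havg : ∑ r : Fin n × Fin n, n ^ 2 * hammingDist (uncurry M) (cornerExtension M r.1 r.2) ≤
      ∑ _r : Fin n × Fin n, 4 * switcherCount n M := by
    simp [← mul_sum, sum_hammingDist_cornerExtension, sq]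
  obtain ⟨r, -, hr⟩ := exists_le_of_sum_le univ_nonempty havg
  exact ⟨r.1, r.2, hr⟩

end Switchers

section Discrepancy

variable {n : ℕ}

lemma totalDisc_mul_sq (M : Fin n → Fin n → ℤ) :
    totalDisc n M * n ^ 2 = |∑ p, uncurry M p| := by
  rcases eq_or_ne n 0 with rfl | hn
  · simp
  · rw [totalDisc, div_mul_cancel₀ _ (by positivity), Fintype.sum_prod_type]
    simp [uncurry]

lemma totalDisc_flip (M : Fin n → Fin n → ℤ) : totalDisc n (flip M) = totalDisc n M := by
  simp only [totalDisc, flip]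
  rw [sum_comm]

end Discrepancy

lemma exists_isBalanced_hammingDist_le {n : ℕ} {M : Fin n → Fin n → ℤ} (hM : IsSigning n M)
    {ε δ : ℝ} (hdisc : totalDisc n M ≤ δ) {a d : Fin n}
    (hcorner : hammingDist (uncurry M) (cornerExtension M a d) ≤ ε ^ 2 * (n : ℝ) ^ 2)
    (hcolumn : hammingDist (fun i => M i d) (fun _ => M a d) ≤ ε * (n : ℝ)) :
    ∃ z, IsBalanced n z ∧
      hammingDist (uncurry M) (fun p => z p.2) ≤ (2 * (ε + ε ^ 2) + δ / 2) * (n : ℝ) ^ 2 := by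
  obtain ⟨z, hz, hz_sum, hz_dist⟩ := exists_abs_sum_le_one_of_cornerExtension hM a d
  refine ⟨z, isBalanced_iff_abs_sum_le_one.mpr ⟨hz, hz_sum⟩, ?_⟩
  have hz_dist' : 2 * (hammingDist (uncurry M) (fun p => z p.2) : ℝ) ≤ totalDisc n M * n ^ 2 +
      4 * (hammingDist (uncurry M) (cornerExtension M a d) +
        n * hammingDist (fun i => M i d) (fun _ => M a d)) := by
    rw [totalDisc_mul_sq]
    rw [Fintype.card_fin] at hz_dist
    exact_mod_cast hz_dist
  have hdisc' := mul_le_mul_of_nonneg_right hdisc (sq_nonneg (n : ℝ))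
  have hcolumn' := mul_le_mul_of_nonneg_left hcolumn n.cast_nonneg
  linarith

theorem low_disc_few_switchers_case_general {n : ℕ} {M : Fin n → Fin n → ℤ} (hM : IsSigning n M)
    {ε δ : ℝ} (hε : 0 ≤ ε) (hdisc : totalDisc n M ≤ δ)
    (hswitchers : switcherCount n M ≤ ε ^ 2 * (n : ℝ) ^ 4 / 4) :
    ∃ z, IsBalanced n z ∧
      (hammingDist (uncurry M) (fun p => z p.2) ≤ (2 * (ε + ε ^ 2) + δ / 2) * (n : ℝ) ^ 2 ∨
        hammingDist (uncurry M) (fun p => z p.1) ≤ (2 * (ε + ε ^ 2) + δ / 2) * (n : ℝ) ^ 2) := by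
  rcases eq_or_ne n 0 with rfl | hn
  · exact ⟨fun _ => 1, by simp [IsBalanced], by simp [hammingDist]⟩
  have : NeZero n := ⟨hn⟩
  obtain ⟨a, d, hcorner_nat⟩ := exists_sq_mul_hammingDist_cornerExtension_le M
  have hcorner : hammingDist (uncurry M) (cornerExtension M a d) ≤ ε ^ 2 * (n : ℝ) ^ 2 := by
    rify at hcorner_nat
    refine le_of_mul_le_mul_left ?_ (by positivity : (0 : ℝ) < n ^ 2)
    linarith
  have hproduct : (hammingDist (fun i => M i d) (fun _ => M a d) : ℝ) *
      hammingDist (M a) (fun _ => M a d) ≤ ε * n * (ε * n) := by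
    have h := hammingDist_column_mul_hammingDist_row_le hM a d
    rify at h
    linarith
  by_cases hcolumn : hammingDist (fun i => M i d) (fun _ => M a d) ≤ ε * (n : ℝ)
  · obtain ⟨z, hz, hz_dist⟩ := exists_isBalanced_hammingDist_le hM hdisc hcorner hcolumn
    exact ⟨z, hz, Or.inl hz_dist⟩
  · have hrow : hammingDist (M a) (fun _ => M a d) ≤ ε * (n : ℝ) := by
      by_contra! hrow
      exact hproduct.not_gt (mul_lt_mul'' (not_le.mp hcolumn) hrow (by positivity) (by positivity))
    obtain ⟨z, hz, hz_dist⟩ := exists_isBalanced_hammingDist_le (M := flip M)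
      (fun i j => hM j i) ((totalDisc_flip M).trans_le hdisc)
      (by rwa [hammingDist_cornerExtension_flip]) hrow
    rw [← hammingDist_comp_equiv (Equiv.prodComm (Fin n) (Fin n))] at hz_dist
    exact ⟨z, hz, Or.inr hz_dist⟩

lemma two_mul_add_sq_add_half_le_four_mul_sqrt {α : ℝ} (hα : 0 ≤ α) (hα₁ : α ≤ 1) :
    2 * (α / 4 + (α / 4) ^ 2) + α / 3 / 2 ≤ 4 * √α := by
  have hα_le_sqrt : α ≤ √α := Real.le_sqrt_of_sq_le (by nlinarith)
  nlinarith

theorem low_disc_few_switchers_case :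
    ∀ α : ℝ, 0 < α → α ≤ 1 / 100 →
    ∃ n₀ : ℕ, ∀ n : ℕ, n₀ ≤ n →
    ∀ M : Fin n → Fin n → ℤ, IsSigning n M →
    totalDisc n M ≤ α / 3 →
    (switcherCount n M : ℝ) ≤ α ^ 2 * n ^ 4 / 64 →
    ∃ z : Fin n → ℤ, IsBalanced n z ∧
      ((((univ ×ˢ univ).filter fun p : Fin n × Fin n => M p.1 p.2 ≠ z p.2).card : ℝ)
          ≤ 4 * Real.sqrt α * n ^ 2 ∨
       (((univ ×ˢ univ).filter fun p : Fin n × Fin n => M p.1 p.2 ≠ z p.1).card : ℝ)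
          ≤ 4 * Real.sqrt α * n ^ 2) := by
  intro α hα hα_le
  refine ⟨0, fun n _ M hM hdisc hswitchers => ?_⟩
  obtain ⟨z, hz, hz_dist⟩ := low_disc_few_switchers_case_general hM
    (by positivity : 0 ≤ α / 4) hdisc (hswitchers.trans_eq (by ring))
  have hbound := mul_le_mul_of_nonneg_right
    (two_mul_add_sq_add_half_le_four_mul_sqrt hα.le (by linarith)) (sq_nonneg (n : ℝ))
  exact ⟨z, hz, hz_dist.imp hbound.trans' hbound.trans'⟩
end

section
/- There exists m₀ such that for all m ≥ m₀ the following holds: for every matrix A : ZMod m → ZMod m → ℝ all of whose entries lie in {0, 1}, there exists a permutation π of ZMod m such that for every t : ZMod m, |(∑ i, A i (π (i + t))) − (∑ i, ∑ j, A i j)/m| ≤ 3·m^(3/4). -/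
open Finset

/-!
Centre the rows of `A`, and expose a uniformly random permutation of `Fin (n + 1)` one value at a
time. Conditionally on `σ 0 = p`, the rest of `σ` is a uniformly random permutation for a matrix of
size `n`, so induction on the size writes the deviation of `∑ i, A i (σ i)` from its mean as a sum
of increments that have conditional mean zero and oscillate by at most `2 * c` when the rows of `A`
oscillate by at most `c`. Hoeffding's lemma then makes the deviation sub-Gaussian with variance
proxy `n * c ^ 2`. Each sum `∑ i, A i (π (τ i))` has the same law as `∑ i, A i (π i)`, so a union
bound over all `τ` yields a good `π`.
-/

open Equiv
open scoped BigOperators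

section SubGaussian

variable {ι Ω T : Type*} [Fintype ι] [Fintype Ω] [Fintype T]

theorem expect_exp_mul_le_of_expect_eq_zero_of_sub_le {d : ι → ℝ} {c : ℝ} (hd : 𝔼 i, d i = 0)
    (hc : ∀ i j, d i - d j ≤ c) (l : ℝ) :
    𝔼 i, Real.exp (l * d i) ≤ Real.exp (c ^ 2 / 4 * l ^ 2 / 2) := by
  cases isEmpty_or_nonempty ι
  · simpa using (Real.exp_pos _).le
  let _ : MeasurableSpace ι := ⊤
  obtain ⟨i₀, hi₀⟩ := Finite.exists_min d
  have integral_eq_expect (f : ι → ℝ) :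
      ∫ i, f i ∂(PMF.uniformOfFintype ι).toMeasure = 𝔼 i, f i := by
    simp [PMF.integral_eq_sum, Fintype.expect_eq_sum_div_card, ← Finset.mul_sum, div_eq_inv_mul]
  have hoeffding := (ProbabilityTheory.hasSubgaussianMGF_of_mem_Icc_of_integral_eq_zero
    (μ := (PMF.uniformOfFintype ι).toMeasure) (measurable_of_finite d).aemeasurable
    (.of_forall fun i ↦ ⟨hi₀ i, sub_le_iff_le_add.1 (hc i i₀)⟩)
    ((integral_eq_expect d).trans hd)).mgf_le l
  rw [ProbabilityTheory.mgf, integral_eq_expect] at hoeffding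
  refine hoeffding.trans_eq ?_
  norm_num [div_pow]

theorem exists_norm_le_sqrt_of_expect_exp_mul_le [Nonempty Ω] {X : Ω → T → ℝ} {v : ℝ}
    (hX : ∀ t l, 𝔼 ω, Real.exp (l * X ω t) ≤ Real.exp (v * l ^ 2 / 2)) :
    ∃ ω, ‖X ω‖ ≤ √(2 * v * Real.log (2 * Fintype.card T)) := by
  obtain ⟨ω₀, hmin⟩ := Finite.exists_min fun ω ↦ ‖X ω‖
  refine ⟨ω₀, Real.le_sqrt_of_sq_le ?_⟩
  cases isEmpty_or_nonempty T
  · simp [Subsingleton.elim (X ω₀) 0]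
  set L := Real.log (2 * Fintype.card T)
  have chernoff (l : ℝ) : l * ‖X ω₀‖ ≤ L + v * l ^ 2 / 2 := by
    have hsum : 𝔼 ω, ∑ t, (Real.exp (l * X ω t) + Real.exp (-(l * X ω t))) ≤
        Real.exp (L + v * l ^ 2 / 2) := by
      rw [expect_sum_comm, Real.exp_add, Real.exp_log (by positivity)]
      calc ∑ t, 𝔼 ω, (Real.exp (l * X ω t) + Real.exp (-(l * X ω t)))
          ≤ ∑ _t : T, 2 * Real.exp (v * l ^ 2 / 2) := by
            refine sum_le_sum fun t _ ↦ ?_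
            rw [expect_add_distrib, two_mul]
            exact add_le_add (hX t l) (by simpa using hX t (-l))
        _ = 2 * Fintype.card T * Real.exp (v * l ^ 2 / 2) := by
            rw [sum_const, card_univ, nsmul_eq_mul]
            ring
    obtain ⟨ω, -, hω⟩ := exists_le_of_expect_le univ_nonempty hsum
    calc l * ‖X ω₀‖
        ≤ ‖l‖ * ‖X ω‖ := mul_le_mul (Real.le_norm_self l) (hmin ω) (norm_nonneg _) (norm_nonneg _)
      _ = ‖l • X ω‖ := (norm_smul _ _).symm
      _ ≤ L + v * l ^ 2 / 2 := (pi_norm_le_iff_of_nonempty _).2 fun t ↦ by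
          rw [← Real.exp_le_exp]
          refine (Real.exp_abs_le _).trans (le_trans ?_ hω)
          exact single_le_sum
            (f := fun t ↦ Real.exp (l * X ω t) + Real.exp (-(l * X ω t)))
            (fun _ _ ↦ by positivity) (mem_univ t)
  -- Optimising over `l` is the statement that this quadratic has nonpositive discriminant.
  have hdiscrim := discrim_le_zero (a := v / 2) (b := -‖X ω₀‖) (c := L)
    fun l ↦ by linarith [chernoff l]
  rw [discrim] at hdiscrim
  linarith

end SubGaussian

section RandomPermutation

/-- The deviation of the permutation sum `∑ i, A i (σ i)` from its mean over uniformly random `σ`.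
The mean is subtracted row by row. -/
noncomputable def permSumDeviation {ι : Type*} [Fintype ι] (A : ι → ι → ℝ) (σ : Perm ι) : ℝ :=
  ∑ i, (A i (σ i) - 𝔼 j, A i j)

theorem permSumDeviation_eq_sub_div {ι : Type*} [Fintype ι] (A : ι → ι → ℝ) (σ : Perm ι) :
    permSumDeviation A σ = ∑ i, A i (σ i) - (∑ i, ∑ j, A i j) / Fintype.card ι := by
  simp [permSumDeviation, Fintype.expect_eq_sum_div_card, sum_div]

theorem permSumDeviation_permCongr {ι κ : Type*} [Fintype ι] [Fintype κ] (e : κ ≃ ι)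
    (A : ι → ι → ℝ) (σ : Perm κ) :
    permSumDeviation A (e.permCongr σ) = permSumDeviation (fun i j ↦ A (e i) (e j)) σ := by
  unfold permSumDeviation
  rw [← e.sum_comp]
  simp [Fintype.expect_equiv e (fun j ↦ A _ (e j)) (A _) fun _ ↦ rfl]

variable {n : ℕ}

/-- The matrix seen by the rest of a permutation `σ` once `σ 0 = p` is exposed: row `0` and column
`p` are deleted, and the remaining columns are numbered in the order used by
`Equiv.Perm.decomposeFin`. -/
def minorSwap (A : Fin (n + 1) → Fin (n + 1) → ℝ) (p : Fin (n + 1)) : Fin n → Fin n → ℝ :=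
  fun i k ↦ A i.succ (swap 0 p k.succ)

/-- The martingale increment of exposing `σ 0 = p`: the conditional mean of `permSumDeviation A σ`
given this value, since column `p` is then no longer available to the other rows. -/
noncomputable def headIncrement (A : Fin (n + 1) → Fin (n + 1) → ℝ) (p : Fin (n + 1)) : ℝ :=
  (A 0 p - 𝔼 j, A 0 j) - 𝔼 i : Fin n, (A i.succ p - 𝔼 j, A i.succ j)

theorem expect_comp_swap_zero_succ [NeZero n] (f : Fin (n + 1) → ℝ) (p : Fin (n + 1)) :
    𝔼 k : Fin n, f (swap 0 p k.succ) = 𝔼 j, f j - (f p - 𝔼 j, f j) / n := by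
  have hsum : ∑ j, f j = f p + ∑ k : Fin n, f (swap 0 p k.succ) := by
    rw [← Equiv.sum_comp (swap 0 p), Fin.sum_univ_succ, swap_apply_left]
  have hn : (n : ℝ) ≠ 0 := NeZero.ne _
  simp only [Fintype.expect_eq_sum_div_card, Fintype.card_fin, hsum, Nat.cast_add_one]
  field_simp
  ring

theorem permSumDeviation_decomposeFin_symm (A : Fin (n + 1) → Fin (n + 1) → ℝ) (p : Fin (n + 1))
    (σ : Perm (Fin n)) :
    permSumDeviation A (Perm.decomposeFin.symm (p, σ)) =
      headIncrement A p + permSumDeviation (minorSwap A p) σ := by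
  have hrow (i : Fin n) : 𝔼 k, minorSwap A p i k =
      𝔼 j, A i.succ j - (A i.succ p - 𝔼 j, A i.succ j) / n :=
    have : NeZero n := i.neZero
    expect_comp_swap_zero_succ (A i.succ) p
  simp only [permSumDeviation, Fin.sum_univ_succ, Perm.decomposeFin_symm_apply_zero,
    Perm.decomposeFin_symm_apply_succ, hrow, headIncrement,
    Fintype.expect_eq_sum_div_card (fun i : Fin n ↦ A i.succ p - _), Fintype.card_fin]
  simp only [minorSwap, sum_sub_distrib, ← sum_div]
  ring

theorem expect_headIncrement (A : Fin (n + 1) → Fin (n + 1) → ℝ) : 𝔼 p, headIncrement A p = 0 := by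
  have hrow (i : Fin (n + 1)) : 𝔼 p, (A i p - 𝔼 j, A i j) = 0 := by
    rw [expect_sub_distrib, Fintype.expect_const, sub_self]
  simp only [headIncrement]
  rw [expect_sub_distrib, hrow 0, expect_comm]
  simp [hrow]

theorem headIncrement_sub_le {A : Fin (n + 1) → Fin (n + 1) → ℝ} {c : ℝ}
    (hA : ∀ i j k, A i j - A i k ≤ c) (p q : Fin (n + 1)) :
    headIncrement A p - headIncrement A q ≤ 2 * c := by
  have hc : 0 ≤ c := by simpa using hA 0 0 0
  have htail : 𝔼 i : Fin n, (A i.succ q - A i.succ p) ≤ c := by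
    cases isEmpty_or_nonempty (Fin n)
    · simpa using hc
    · exact expect_le univ_nonempty fun i _ ↦ hA i.succ q p
  simp only [headIncrement, expect_sub_distrib] at htail ⊢
  linarith [hA 0 p q]

theorem expect_exp_mul_permSumDeviation_fin_le {c : ℝ} (l : ℝ) (A : Fin n → Fin n → ℝ)
    (hA : ∀ i j k, A i j - A i k ≤ c) :
    𝔼 σ, Real.exp (l * permSumDeviation A σ) ≤ Real.exp (n * c ^ 2 * l ^ 2 / 2) := by
  induction n with
  | zero => simp [permSumDeviation]
  | succ n ih =>
    calc 𝔼 σ, Real.exp (l * permSumDeviation A σ)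
        = 𝔼 p, Real.exp (l * headIncrement A p) *
            𝔼 σ, Real.exp (l * permSumDeviation (minorSwap A p) σ) := by
          rw [← Fintype.expect_equiv Perm.decomposeFin.symm _ _ fun _ ↦ rfl, ← univ_product_univ,
            expect_product]
          simp only [permSumDeviation_decomposeFin_symm, mul_add, Real.exp_add, mul_expect]
      _ ≤ 𝔼 p, Real.exp (l * headIncrement A p) * Real.exp (n * c ^ 2 * l ^ 2 / 2) := by
          gcongr with p
          exact ih (minorSwap A p) fun _ _ _ ↦ hA _ _ _
      _ ≤ Real.exp ((2 * c) ^ 2 / 4 * l ^ 2 / 2) * Real.exp (n * c ^ 2 * l ^ 2 / 2) := by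
          rw [← expect_mul]
          gcongr
          exact expect_exp_mul_le_of_expect_eq_zero_of_sub_le (expect_headIncrement A)
            (headIncrement_sub_le hA) l
      _ = Real.exp ((n + 1 : ℕ) * c ^ 2 * l ^ 2 / 2) := by
          rw [← Real.exp_add]
          push_cast
          ring_nf

theorem expect_exp_mul_permSumDeviation_le {ι : Type*} [Fintype ι] [DecidableEq ι] {c : ℝ} (l : ℝ)
    (A : ι → ι → ℝ) (hA : ∀ i j k, A i j - A i k ≤ c) :
    𝔼 σ, Real.exp (l * permSumDeviation A σ) ≤ Real.exp (Fintype.card ι * c ^ 2 * l ^ 2 / 2) := by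
  let e := (Fintype.equivFin ι).symm
  rw [← Fintype.expect_equiv e.permCongr _ _ fun _ ↦ rfl]
  simp only [permSumDeviation_permCongr]
  exact expect_exp_mul_permSumDeviation_fin_le l _ fun _ _ _ ↦ hA _ _ _

end RandomPermutation

theorem sqrt_two_mul_mul_log_two_mul_le {x : ℝ} (hx : 0 ≤ x) :
    √(2 * x * Real.log (2 * x)) ≤ 3 * x ^ ((3 : ℝ) / 4) := by
  have hlog : Real.log (2 * x) ≤ 3 * √x := by
    calc Real.log (2 * x) = 2 * Real.log √(2 * x) := by
          rw [Real.log_sqrt (by positivity)]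
          ring
      _ ≤ 2 * √(2 * x) := by
          gcongr
          exact Real.log_le_self (Real.sqrt_nonneg _)
      _ = 2 * √2 * √x := by rw [Real.sqrt_mul zero_le_two, mul_assoc]
      _ ≤ 3 * √x := by
          gcongr
          linarith [Real.sqrt_two_lt_three_halves]
  have hpow : (x ^ ((3 : ℝ) / 4)) ^ 2 = x * √x := by
    rw [Real.sqrt_eq_rpow, ← Real.rpow_one_add' hx (by norm_num), ← Real.rpow_mul_natCast hx]
    norm_num
  refine Real.sqrt_le_iff.2 ⟨by positivity, ?_⟩
  calc 2 * x * Real.log (2 * x)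
      ≤ 2 * x * (3 * √x) := by gcongr
    _ ≤ 9 * (x * √x) := by linarith [mul_nonneg hx (Real.sqrt_nonneg x)]
    _ = (3 * x ^ ((3 : ℝ) / 4)) ^ 2 := by rw [mul_pow, hpow]; norm_num

theorem cyclic_shift_concentration_general {ι T : Type*} [Fintype ι] [Fintype T]
    (τ : T → Perm ι) {A : ι → ι → ℝ} {c : ℝ} (hA : ∀ i j k, A i j - A i k ≤ c) :
    ∃ π : Perm ι, ∀ t, |∑ i, A i (π (τ t i)) - (∑ i, ∑ j, A i j) / Fintype.card ι| ≤
      √(2 * (Fintype.card ι * c ^ 2) * Real.log (2 * Fintype.card T)) := by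
  classical
  obtain ⟨π, hπ⟩ := exists_norm_le_sqrt_of_expect_exp_mul_le
    (X := fun π t ↦ permSumDeviation A (π * τ t)) fun t l ↦ by
      rw [Fintype.expect_equiv (Equiv.mulRight (τ t))
        (fun π ↦ Real.exp (l * permSumDeviation A (π * τ t)))
        (fun π ↦ Real.exp (l * permSumDeviation A π)) fun _ ↦ rfl]
      exact expect_exp_mul_permSumDeviation_le l A hA
  refine ⟨π, fun t ↦ ?_⟩
  simpa [permSumDeviation_eq_sub_div] using (norm_le_pi_norm _ t).trans hπ

theorem cyclic_shift_concentration :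
    ∃ m₀ : ℕ, 0 < m₀ ∧ ∀ (m : ℕ) [NeZero m], m₀ ≤ m →
    ∀ A : ZMod m → ZMod m → ℝ, (∀ i j, A i j = 0 ∨ A i j = 1) →
    ∃ π : Equiv.Perm (ZMod m), ∀ t : ZMod m,
      |(∑ i, A i (π (i + t))) - (∑ i, ∑ j, A i j) / m| ≤
        3 * (m : ℝ) ^ ((3 : ℝ) / 4) := by
  refine ⟨1, one_pos, fun m _ _ A hA ↦ ?_⟩
  obtain ⟨π, hπ⟩ := cyclic_shift_concentration_general (c := 1) (A := A) Equiv.addRight (by grind)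
  simp only [ZMod.card, one_pow, mul_one, Equiv.coe_addRight] at hπ
  exact ⟨π, fun t ↦ (hπ t).trans (sqrt_two_mul_mul_log_two_mul_le m.cast_nonneg)⟩
end
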